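/- Let d : ℕ → ℕ satisfy d(n) ≤ n-1 and d(n)/log n → ∞ as n → ∞, and restrict to those n for which n·d(n) is even. Then for every ε > 0, with high probability the uniformly random d(n)-regular graph G ~ G(n, d(n)) has the following property: for every vertex r of G, there exist at least ⌊(1-ε)·d(n)⌋ independent spanning trees of G rooted at r. -/

import Mathlib

open Filter

/-- The spanning trees `T 0, …, T (t-1)` of `G` are independent spanning trees rooted at `r`:
each `T i` is a spanning tree of `G` (a tree on the whole vertex set, all of whose edges lie
in `G`), and for every vertex `v ≠ r`, the paths from `v` to `r` in any two distinct trees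
share only the vertices `v` and `r`. -/
def IsIST {n : ℕ} (G : SimpleGraph (Fin n)) (r : Fin n) {t : ℕ}
    (T : Fin t → SimpleGraph (Fin n)) : Prop :=
  (∀ i, T i ≤ G ∧ (T i).IsTree) ∧
  ∀ v : Fin n, v ≠ r → ∀ i j : Fin t, i ≠ j →
    ∀ p : (T i).Walk v r, ∀ q : (T j).Walk v r, p.IsPath → q.IsPath →
      ∀ x : Fin n, x ∈ p.support → x ∈ q.support → x = v ∨ x = r

/-- `G` contains (at least) `t` independent spanning trees rooted at `r`. -/
def HasISTs {n : ℕ} (G : SimpleGraph (Fin n)) (r : Fin n) (t : ℕ) : Prop :=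
  ∃ T : Fin t → SimpleGraph (Fin n), IsIST G r T


open Classical in
/-- Probability that the uniformly random `d`-regular graph `G(n,d)` satisfies the
property `A`: the uniform distribution over all `d`-regular simple graphs on `[n]`. -/
noncomputable def regProb (n d : ℕ) (A : SimpleGraph (Fin n) → Prop) : ℝ :=
  ((Finset.univ.filter (fun G : SimpleGraph (Fin n) =>
      (∀ v, Nat.card (G.neighborSet v) = d) ∧ A G)).card : ℝ) /
  ((Finset.univ.filter (fun G : SimpleGraph (Fin n) =>
      ∀ v, Nat.card (G.neighborSet v) = d)).card : ℝ)


/-!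
A family of disjoint sets `D i` (cores), each connected together with the root `r`, extends to
independent spanning trees as soon as every vertex `v` can be assigned distinct neighbours outside
all cores, one for each core that `v` misses, as its entry points to these cores. By Hall's theorem
it is enough that `v` has many such relays to every single missed core, and almost all of its
neighbours as relays to the union of any `K` of them, for a large constant `K`.

That such relays exist, and every other property of the random graph that is needed, is proved by
switchings: replacing two edges by two others is a degree-preserving bijection, and double counting
shows that the probability of falling short by one more is at most half as large, so being short by
a multiple of `log n` is polynomially unlikely.

* If `d` is small compared with `n`, cores of about `n / (16 q d)` vertices are grown
  inside two colour classes of a colouring with `q` colours, and linked to the neighbours of `r` by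
  disjoint paths. They depend only on the edges among these colour classes and the neighbours of
  `r`, and switchings elsewhere produce the relays.
* If `δ n ≤ d ≤ (1 - γ) n`, single neighbours of `r` serve as cores.
* If `d` is almost `n`, the same cores have enough relays in every `d`-regular graph.
-/

namespace IndepTrees

open Finset
open scoped Classical

/-! ### Trees from parent functions -/

section ParentTree

variable {V : Type*} {r : V} {p : V → V} {ρ : V → ℕ}

/-- The graph joining every vertex `v ≠ r` to its parent `p v`; a tree as soon as some rank
decreases strictly along `p`. -/
def parentGraph (r : V) (p : V → V) : SimpleGraph V :=
  SimpleGraph.fromRel fun a b => a ≠ r ∧ p a = b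

lemma parentGraph_le {G : SimpleGraph V} (hp : ∀ v ≠ r, G.Adj v (p v)) :
    parentGraph r p ≤ G := by
  rintro a b ⟨-, ⟨ha, rfl⟩ | ⟨hb, rfl⟩⟩
  exacts [hp a ha, (hp b hb).symm]

lemma parentGraph_adj_parent (hρ : ∀ v ≠ r, ρ (p v) < ρ v) {v : V} (hv : v ≠ r) :
    (parentGraph r p).Adj v (p v) :=
  ⟨fun h => (hρ v hv).ne (congrArg ρ h).symm, Or.inl ⟨hv, rfl⟩⟩

lemma exists_walk_to_root_within (hρ : ∀ v ≠ r, ρ (p v) < ρ v) {S : Set V}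
    (hS : ∀ v ∈ S, v ≠ r → p v ∈ S) {v : V} (hv : v ∈ S) :
    ∃ w : (parentGraph r p).Walk v r, ∀ x ∈ w.support, x ∈ S := by
  induction hk : ρ v using Nat.strong_induction_on generalizing v with
  | _ k ih =>
    by_cases hvr : v = r
    · subst hvr
      exact ⟨SimpleGraph.Walk.nil, by simpa using hv⟩
    · obtain ⟨w, hw⟩ := ih _ (hk ▸ hρ v hvr) (hS v hv hvr) rfl
      refine ⟨SimpleGraph.Walk.cons (parentGraph_adj_parent hρ hvr) w, fun x hx => ?_⟩
      rw [SimpleGraph.Walk.support_cons, List.mem_cons] at hx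
      exact hx.elim (fun h => h ▸ hv) (hw x)

lemma parentGraph_connected (hρ : ∀ v ≠ r, ρ (p v) < ρ v) : (parentGraph r p).Connected := by
  have reachable_root (a : V) : (parentGraph r p).Reachable a r :=
    let ⟨w, _⟩ := exists_walk_to_root_within hρ (S := Set.univ) (by simp) (Set.mem_univ a)
    ⟨w⟩
  have : Nonempty V := ⟨r⟩
  exact ⟨fun a b => (reachable_root a).trans (reachable_root b).symm⟩

lemma card_edgeSet_parentGraph_lt [Finite V] (r : V) (p : V → V) :
    Nat.card (parentGraph r p).edgeSet < Nat.card V := by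
  have edges_subset : (parentGraph r p).edgeSet ⊆ (fun v => s(v, p v)) '' {r}ᶜ := by
    intro e he
    induction e with
    | _ a b =>
      obtain ⟨-, ⟨ha, hab⟩ | ⟨hb, hba⟩⟩ := he
      exacts [⟨a, ha, congrArg (s(a, ·)) hab⟩, ⟨b, hb, by simp [hba, Sym2.eq_swap]⟩]
  calc Nat.card (parentGraph r p).edgeSet
      = (parentGraph r p).edgeSet.ncard := Nat.card_coe_set_eq _
    _ ≤ ((fun v => s(v, p v)) '' {r}ᶜ).ncard := Set.ncard_le_ncard edges_subset
    _ ≤ ({r}ᶜ : Set V).ncard := Set.ncard_image_le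
    _ < (Set.univ : Set V).ncard :=
      Set.ncard_lt_ncard (Set.ssubset_univ_iff.2 fun h => by simpa using h.ge (Set.mem_univ r))
    _ = Nat.card V := Set.ncard_univ V

lemma parentGraph_isTree [Finite V] (hρ : ∀ v ≠ r, ρ (p v) < ρ v) : (parentGraph r p).IsTree := by
  have hconn := parentGraph_connected hρ
  exact SimpleGraph.isTree_iff_connected_and_card.2 ⟨hconn,
    (Nat.succ_le_of_lt (card_edgeSet_parentGraph_lt r p)).antisymm
      hconn.card_vert_le_card_edgeSet_add_one⟩

lemma mem_of_mem_support_of_isPath [Finite V] (hρ : ∀ v ≠ r, ρ (p v) < ρ v) {S : Set V}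
    (hS : ∀ v ∈ S, v ≠ r → p v ∈ S) {v : V} (hv : v ∈ S) {q : (parentGraph r p).Walk v r}
    (hq : q.IsPath) {x : V} (hx : x ∈ q.support) : x ∈ S := by
  obtain ⟨w, hw⟩ := exists_walk_to_root_within hρ hS hv
  have := (parentGraph_isTree hρ).isAcyclic.subsingleton_path v r
  have hqw : (⟨q, hq⟩ : (parentGraph r p).Path v r) = w.toPath := Subsingleton.elim _ _
  have hqw' : q = w.toPath := congrArg Subtype.val hqw
  exact hw x (w.support_toPath_subset_support (hqw' ▸ hx))

end ParentTree

/-! ### Independent trees from cores -/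

section Cores

variable {V ι : Type*}

/-- The edges of `G` inside `S`, as a graph on the full vertex set, so that the graphs obtained for
different `S` can be compared. -/
def edgesWithin (G : SimpleGraph V) (S : Finset V) : SimpleGraph V where
  Adj a b := G.Adj a b ∧ a ∈ S ∧ b ∈ S
  symm := ⟨fun _ _ h => ⟨h.1.symm, h.2.2, h.2.1⟩⟩
  loopless := ⟨fun _ h => h.1.ne rfl⟩

lemma edgesWithin_mono {G : SimpleGraph V} {S T : Finset V} (h : S ⊆ T) :
    edgesWithin G S ≤ edgesWithin G T :=
  fun _ _ hab => ⟨hab.1, h hab.2.1, h hab.2.2⟩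

/-- The vertex `v` neither lies in `D` nor has a neighbour there. -/
def Misses (G : SimpleGraph V) (D : Finset V) (v : V) : Prop :=
  v ∉ D ∧ ∀ u ∈ D, ¬ G.Adj v u

/-- Disjoint vertex sets, each of which becomes connected on adding the root `r`. Growing one tree
around each core, a path to `r` leaves its core only at its first two vertices. -/
structure IsCoreSystem [DecidableEq V] (G : SimpleGraph V) (r : V) (D : ι → Finset V) : Prop where
  disjoint : ∀ i j, i ≠ j → Disjoint (D i) (D j)
  root_notMem : ∀ i, r ∉ D i
  reachable : ∀ i, ∀ x ∈ D i, (edgesWithin G (insert r (D i))).Reachable x r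

lemma IsCoreSystem.comp {κ : Type*} [DecidableEq V] {G : SimpleGraph V} {r : V} {D : ι → Finset V}
    (hD : IsCoreSystem G r D) {e : κ → ι} (he : Function.Injective e) :
    IsCoreSystem G r (D ∘ e) :=
  ⟨fun _ _ hij => hD.disjoint _ _ (he.ne hij), fun _ => hD.root_notMem _,
    fun _ => hD.reachable _⟩

lemma exists_adj_dist_lt {G : SimpleGraph V} {x r : V} (h : G.Reachable x r) (hxr : x ≠ r) :
    ∃ y, G.Adj x y ∧ G.dist y r < G.dist x r := by
  obtain ⟨w, hw⟩ := h.exists_walk_length_eq_dist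
  cases w with
  | nil => exact absurd rfl hxr
  | @cons _ y _ hadj w' =>
    refine ⟨y, hadj, ?_⟩
    rw [← hw, SimpleGraph.Walk.length_cons]
    exact Nat.lt_succ_of_le (SimpleGraph.dist_le w')

variable [DecidableEq V] {G : SimpleGraph V} {r : V} {D : Finset V}

-- Vertices of `D` are ranked by their distance to `r`, then come the neighbours of `D`, then the
-- vertices missed by `D`, which step to their relay first.
lemma exists_parent_of_core [Finite V]
    (hD : ∀ x ∈ D, (edgesWithin G (insert r D)).Reachable x r) {π : V → V}
    (hπ : ∀ v ≠ r, Misses G D v → G.Adj v (π v) ∧ ¬ Misses G D (π v)) :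
    ∃ (p : V → V) (ρ : V → ℕ), (∀ v ≠ r, ρ (p v) < ρ v) ∧ (∀ v ≠ r, G.Adj v (p v)) ∧
      (∀ v ≠ r, Misses G D v → p v = π v) ∧ (∀ v ≠ r, ¬ Misses G D v → p v ∈ insert r D) := by
  have := Fintype.ofFinite V
  let height : V → ℕ := fun v => (edgesWithin G (insert r D)).dist v r
  let M : ℕ := univ.sup height
  have height_le (v : V) : height v ≤ M := le_sup (mem_univ v)
  let ρ : V → ℕ := fun v =>
    if v ∈ insert r D then height v else if Misses G D v then M + 2 else M + 1
  have rank_of_mem {v : V} (hv : v ∈ insert r D) : ρ v = height v := if_pos hv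
  have rank_of_notMem {v : V} (hv : v ∉ insert r D) (h : ¬ Misses G D v) : ρ v = M + 1 :=
    (if_neg hv).trans (if_neg h)
  have rank_of_misses {v : V} (hvr : v ≠ r) (h : Misses G D v) : ρ v = M + 2 :=
    (if_neg (by simp [hvr, h.1])).trans (if_pos h)
  have parent (v : V) (hv : v ≠ r) : ∃ y, ρ y < ρ v ∧ G.Adj v y ∧
      (Misses G D v → y = π v) ∧ (¬ Misses G D v → y ∈ insert r D) := by
    by_cases hmiss : Misses G D v
    · refine ⟨π v, ?_, (hπ v hv hmiss).1, fun _ => rfl, fun h => absurd hmiss h⟩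
      rw [rank_of_misses hv hmiss]
      by_cases hmem : π v ∈ insert r D
      · rw [rank_of_mem hmem]
        exact (height_le _).trans_lt (by omega)
      · rw [rank_of_notMem hmem (hπ v hv hmiss).2]
        omega
    by_cases hvD : v ∈ D
    · obtain ⟨y, hadj, hlt⟩ := exists_adj_dist_lt (hD v hvD) hv
      refine ⟨y, ?_, hadj.1, fun h => absurd h hmiss, fun _ => hadj.2.2⟩
      rwa [rank_of_mem hadj.2.2, rank_of_mem (mem_insert_of_mem hvD)]
    · obtain ⟨u, huD, hu⟩ : ∃ u ∈ D, G.Adj v u := by simpa [Misses, hvD] using hmiss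
      refine ⟨u, ?_, hu, fun h => absurd h hmiss, fun _ => mem_insert_of_mem huD⟩
      rw [rank_of_mem (mem_insert_of_mem huD), rank_of_notMem (by simp [hv, hvD]) hmiss]
      exact Nat.lt_succ_of_le (height_le u)
  choose! p hlt hadj hmiss hmem using parent
  exact ⟨p, ρ, hlt, hadj, hmiss, hmem⟩

lemma exists_tree_of_core [Finite V]
    (hD : ∀ x ∈ D, (edgesWithin G (insert r D)).Reachable x r) {π : V → V}
    (hπ : ∀ v ≠ r, Misses G D v → G.Adj v (π v) ∧ ¬ Misses G D (π v)) :
    ∃ T ≤ G, T.IsTree ∧ ∀ v ≠ r, ∀ q : T.Walk v r, q.IsPath → ∀ x ∈ q.support,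
      x = v ∨ x = r ∨ x ∈ D ∨ (Misses G D v ∧ x = π v) := by
  obtain ⟨p, ρ, hρ, hadj, hmiss, hmem⟩ := exists_parent_of_core hD hπ
  refine ⟨parentGraph r p, parentGraph_le hadj, parentGraph_isTree hρ, fun v hv q hq x hx => ?_⟩
  let S : Set V := {x | x = v ∨ x = r ∨ x ∈ D ∨ (Misses G D v ∧ x = π v)}
  have parent_mem : ∀ y ∈ S, y ≠ r → p y ∈ S := by
    intro y hy hyr
    by_cases hy' : Misses G D y
    · obtain rfl : y = v := by
        rcases hy with rfl | hy | hy | ⟨hv', rfl⟩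
        exacts [rfl, absurd hy hyr, absurd hy hy'.1, absurd hy' (hπ v hv hv').2]
      exact Or.inr (Or.inr (Or.inr ⟨hy', hmiss y hyr hy'⟩))
    · exact (mem_insert.1 (hmem y hyr hy')).elim (fun h => Or.inr (Or.inl h))
        fun h => Or.inr (Or.inr (Or.inl h))
  exact mem_of_mem_support_of_isPath hρ parent_mem (Or.inl rfl) hq hx

end Cores

lemma hasISTs_of_relays {n t : ℕ} {G : SimpleGraph (Fin n)} {r : Fin n}
    {D : Fin t → Finset (Fin n)} (hD : IsCoreSystem G r D) {π : Fin n → Fin t → Fin n}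
    (hadj : ∀ v ≠ r, ∀ i, Misses G (D i) v → G.Adj v (π v i) ∧ ¬ Misses G (D i) (π v i))
    (hout : ∀ v ≠ r, ∀ i, Misses G (D i) v → ∀ j, π v i ∉ D j)
    (hinj : ∀ v ≠ r, ∀ i j, Misses G (D i) v → Misses G (D j) v → π v i = π v j → i = j) :
    HasISTs G r t := by
  have htree (i : Fin t) := exists_tree_of_core (hD.reachable i)
    (π := fun v => π v i) fun v hv h => hadj v hv i h
  choose T hle htree hsupp using htree
  refine ⟨T, fun i => ⟨hle i, htree i⟩, fun v hv i j hij p q hp hq x hxp hxq => ?_⟩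
  rcases hsupp i v hv p hp x hxp with h | h | hi | ⟨hi, hi'⟩
  · exact Or.inl h
  · exact Or.inr h
  all_goals rcases hsupp j v hv q hq x hxq with h | h | hj | ⟨hj, hj'⟩
  all_goals first | exact Or.inl h | exact Or.inr h | exfalso
  · exact disjoint_left.1 (hD.disjoint i j hij) hi hj
  · exact hout v hv j hj i (hj' ▸ hi)
  · exact hout v hv i hi j (hi' ▸ hj)
  · exact hij (hinj v hv i j hi hj (hi'.symm.trans hj'))

lemma exists_injective_of_card_biUnion_ge {ι α : Type*} [Fintype ι] [DecidableEq α]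
    {N : ι → Finset α} {K : ℕ} (hsmall : ∀ i, K ≤ #(N i))
    (hlarge : ∀ S : Finset ι, #S = K → Fintype.card ι ≤ #(S.biUnion N)) :
    ∃ f : ι → α, Function.Injective f ∧ ∀ i, f i ∈ N i := by
  refine (all_card_le_biUnion_card_iff_exists_injective N).1 fun S => ?_
  rcases S.eq_empty_or_nonempty with rfl | ⟨i, hi⟩
  · simp
  rcases le_total #S K with hSK | hKS
  · exact hSK.trans ((hsmall i).trans (card_le_card (subset_biUnion_of_mem N hi)))
  · obtain ⟨S', hS', hcard⟩ := exists_subset_card_eq hKS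
    exact (card_le_univ S).trans ((hlarge S' hcard).trans
      (card_le_card (biUnion_subset_biUnion_of_subset_left N hS')))

/-- The neighbours of `v` outside `Q` that have a neighbour in `X`: the possible second vertices of
a path from `v` to the core `X`, when all cores lie in `Q`. -/
noncomputable def relays {V : Type*} [Fintype V] [DecidableEq V] (G : SimpleGraph V) (v : V)
    (Q X : Finset V) : Finset V :=
  {w ∈ G.neighborFinset v \ Q | ∃ u ∈ X, G.Adj w u}

section Relays

variable {V : Type*} [Fintype V] [DecidableEq V] {G : SimpleGraph V} {v w : V} {Q X : Finset V}

lemma mem_relays : w ∈ relays G v Q X ↔ G.Adj v w ∧ w ∉ Q ∧ ∃ u ∈ X, G.Adj w u := by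
  simp [relays, and_assoc]

lemma relays_biUnion {ι : Type*} (S : Finset ι) (D : ι → Finset V) :
    relays G v Q (S.biUnion D) = S.biUnion fun i => relays G v Q (D i) := by
  ext w
  simp only [mem_relays, mem_biUnion]
  tauto

end Relays

-- For each `v`, Hall's theorem matches the trees whose core misses `v` to distinct relays.
theorem hasISTs_of_card_relays {n t : ℕ} {G : SimpleGraph (Fin n)} {r : Fin n}
    {D : Fin t → Finset (Fin n)} (hD : IsCoreSystem G r D) {Q : Finset (Fin n)}
    (hDQ : ∀ i, D i ⊆ Q) (K : ℕ)
    (hsmall : ∀ v ≠ r, ∀ i, Misses G (D i) v → K ≤ #(relays G v Q (D i)))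
    (hlarge : ∀ v ≠ r, ∀ S : Finset (Fin t), #S = K → (∀ i ∈ S, Misses G (D i) v) →
      #{i | Misses G (D i) v} ≤ #(relays G v Q (S.biUnion D))) :
    HasISTs G r t := by
  have matching (v : Fin n) (hv : v ≠ r) : ∃ f : Fin t → Fin n,
      (∀ i, Misses G (D i) v → f i ∈ relays G v Q (D i)) ∧
      ∀ i j, Misses G (D i) v → Misses G (D j) v → f i = f j → i = j := by
    obtain ⟨f, hinj, hmem⟩ := exists_injective_of_card_biUnion_ge
      (N := fun i : {i // Misses G (D i) v} => relays G v Q (D i))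
      (fun i => hsmall v hv i i.2) (fun S hS => by
        have h := hlarge v hv (S.map (Function.Embedding.subtype _)) (by rwa [card_map])
          (by simp +contextual)
        rwa [← Fintype.card_subtype, relays_biUnion, map_eq_image, image_biUnion] at h)
    refine ⟨fun i => if h : Misses G (D i) v then f ⟨i, h⟩ else v, fun i hi => ?_,
      fun i j hi hj hij => ?_⟩
    · simpa only [dif_pos hi] using hmem ⟨i, hi⟩
    · simp only [dif_pos hi, dif_pos hj] at hij
      simpa using hinj hij
  choose! π hmem hinj using matching
  refine hasISTs_of_relays hD (fun v hv i hi => ?_) (fun v hv i hi j hj => ?_) hinj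
  · obtain ⟨hadj, -, u, hu, hwu⟩ := mem_relays.1 (hmem v hv i hi)
    exact ⟨hadj, fun hmiss => hmiss.2 u hu hwu⟩
  · exact (mem_relays.1 (hmem v hv i hi)).2.1 (hDQ j hj)

/-! ### Switchings -/

section Switching

variable {V : Type*} {G : SimpleGraph V} {w w' s z : V}

/-- The pairs with one vertex in `{w, w'}` and the other in `{s, z}`: those flipped by `switch`. -/
def IsSwitchPair (w w' s z a b : V) : Prop :=
  ((a = w ∨ a = w') ∧ (b = s ∨ b = z)) ∨ ((b = w ∨ b = w') ∧ (a = s ∨ a = z))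

/-- The graph obtained from `G` by complementing the adjacency of every pair with one vertex in
`{w, w'}` and the other in `{s, z}`. Complementing makes the operation an involution for every
choice of vertices; it is a degree-preserving switching when `IsSwitchable G w w' s z`. -/
def switch (G : SimpleGraph V) (w w' s z : V) : SimpleGraph V where
  Adj a b := a ≠ b ∧ ¬ (G.Adj a b ↔ IsSwitchPair w w' s z a b)
  symm := ⟨fun a b h => ⟨h.1.symm, by
    have hcomm : IsSwitchPair w w' s z b a ↔ IsSwitchPair w w' s z a b := by
      unfold IsSwitchPair; tauto
    rw [hcomm, G.adj_comm]
    exact h.2⟩⟩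
  loopless := ⟨fun _ h => h.1 rfl⟩

lemma switch_involutive (w w' s z : V) :
    Function.Involutive fun G : SimpleGraph V => switch G w w' s z := by
  intro G
  ext a b
  by_cases hab : a = b
  · simp [switch, hab]
  · simp only [switch, ne_eq, hab, not_false_eq_true, true_and]
    tauto

lemma switch_adj_of_not_isSwitchPair {a b : V} (h : ¬ IsSwitchPair w w' s z a b) :
    (switch G w w' s z).Adj a b ↔ G.Adj a b := by
  simp only [switch, h, iff_false, not_not, and_iff_right_iff_imp]
  exact fun hab => hab.ne

/-- `w's` and `wz` are edges of `G` while `ws` and `w'z` are not, and the four vertices are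
distinct: `switch G w w' s z` then replaces the first two edges by the last two. -/
structure IsSwitchable (G : SimpleGraph V) (w w' s z : V) : Prop where
  ne : w ≠ w'
  adj_left : G.Adj w' s
  not_adj_left : ¬ G.Adj w s
  ne_left : s ≠ w
  adj_right : G.Adj w z
  not_adj_right : ¬ G.Adj w' z
  ne_right : z ≠ w'

namespace IsSwitchable

lemma swap (h : IsSwitchable G w w' s z) : IsSwitchable G w' w z s :=
  ⟨h.ne.symm, h.adj_right, h.not_adj_right, h.ne_right, h.adj_left, h.not_adj_left, h.ne_left⟩

lemma transpose (h : IsSwitchable G w w' s z) : IsSwitchable G s z w w' where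
  ne := by rintro rfl; exact h.not_adj_left h.adj_right
  adj_left := h.adj_right.symm
  not_adj_left e := h.not_adj_left e.symm
  ne_left := h.ne_left.symm
  adj_right := h.adj_left.symm
  not_adj_right e := h.not_adj_right e.symm
  ne_right := h.ne_right.symm

lemma switch_adj (h : IsSwitchable G w w' s z) (x : V) :
    (switch G w w' s z).Adj w x ↔ x = s ∨ (G.Adj w x ∧ x ≠ z) := by
  have hww : ¬ G.Adj w w := G.loopless.irrefl w
  simp only [switch, IsSwitchPair]
  grind [h.ne, h.not_adj_left, h.ne_left, h.adj_right]

lemma switch_swap (G : SimpleGraph V) (w w' s z : V) : switch G w' w z s = switch G w w' s z := by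
  ext a b
  simp only [switch, IsSwitchPair]
  tauto

lemma switch_transpose (G : SimpleGraph V) (w w' s z : V) :
    switch G s z w w' = switch G w w' s z := by
  ext a b
  simp only [switch, IsSwitchPair]
  tauto

variable [Fintype V] [DecidableEq V]

lemma neighborFinset_switch (h : IsSwitchable G w w' s z) :
    (switch G w w' s z).neighborFinset w = insert s ((G.neighborFinset w).erase z) := by
  ext x
  simp only [SimpleGraph.mem_neighborFinset, h.switch_adj, mem_insert, mem_erase]
  tauto

lemma neighborFinset_switch_snd (h : IsSwitchable G w w' s z) :
    (switch G w w' s z).neighborFinset w' = insert z ((G.neighborFinset w').erase s) := by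
  rw [← switch_swap]
  exact h.swap.neighborFinset_switch

lemma neighborFinset_switch_left (h : IsSwitchable G w w' s z) :
    (switch G w w' s z).neighborFinset s = insert w ((G.neighborFinset s).erase w') := by
  rw [← switch_transpose]
  exact h.transpose.neighborFinset_switch

lemma neighborFinset_switch_right (h : IsSwitchable G w w' s z) :
    (switch G w w' s z).neighborFinset z = insert w' ((G.neighborFinset z).erase w) := by
  rw [← switch_swap]
  exact h.swap.neighborFinset_switch_left

end IsSwitchable

lemma neighborFinset_switch_of_ne [Fintype V] {v : V} (hw : v ≠ w) (hw' : v ≠ w') (hs : v ≠ s)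
    (hz : v ≠ z) : (switch G w w' s z).neighborFinset v = G.neighborFinset v := by
  ext x
  simp only [SimpleGraph.mem_neighborFinset]
  exact switch_adj_of_not_isSwitchPair (by simp [IsSwitchPair, hw, hw', hs, hz])

lemma card_insert_erase {α : Type*} [DecidableEq α] {A : Finset α} {a b : α} (ha : a ∉ A)
    (hb : b ∈ A) : #(insert a (A.erase b)) = #A := by
  rw [card_insert_of_notMem (by simp [ha]), card_erase_add_one hb]

lemma IsSwitchable.degree_switch [Fintype V] (h : IsSwitchable G w w' s z) (v : V) :
    (switch G w w' s z).degree v = G.degree v := by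
  simp only [← SimpleGraph.card_neighborFinset_eq_degree]
  have hadj : ∀ a b, a ∈ G.neighborFinset b ↔ G.Adj b a := fun a b =>
    G.mem_neighborFinset b a
  rcases eq_or_ne v w with rfl | hw
  · rw [h.neighborFinset_switch, card_insert_erase] <;> simp [hadj, h.not_adj_left, h.adj_right]
  rcases eq_or_ne v w' with rfl | hw'
  · rw [h.neighborFinset_switch_snd, card_insert_erase] <;>
      simp [hadj, h.not_adj_right, h.adj_left]
  rcases eq_or_ne v s with rfl | hs
  · rw [h.neighborFinset_switch_left, card_insert_erase] <;>
      simp [hadj, G.adj_comm v, h.not_adj_left, h.adj_left]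
  rcases eq_or_ne v z with rfl | hz
  · rw [h.neighborFinset_switch_right, card_insert_erase] <;>
      simp [hadj, G.adj_comm v, h.not_adj_right, h.adj_right]
  rw [neighborFinset_switch_of_ne hw hw' hs hz]

lemma IsSwitchable.isRegularOfDegree_switch [Fintype V] (h : IsSwitchable G w w' s z) {d : ℕ}
    (hG : G.IsRegularOfDegree d) : (switch G w w' s z).IsRegularOfDegree d :=
  fun v => (h.degree_switch v).trans (hG v)

end Switching

/-! ### Random regular graphs -/

section RegProb

variable {n d : ℕ} {P Q : SimpleGraph (Fin n) → Prop}

/-- The finite set of `d`-regular graphs on `Fin n`, the sample space of `regProb n d`. -/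
noncomputable def regularGraphs (n d : ℕ) : Finset (SimpleGraph (Fin n)) :=
  {G | G.IsRegularOfDegree d}

lemma mem_regularGraphs {G : SimpleGraph (Fin n)} :
    G ∈ regularGraphs n d ↔ G.IsRegularOfDegree d := by
  simp [regularGraphs]

lemma regProb_eq_card_div_card (P : SimpleGraph (Fin n) → Prop) [DecidablePred P] :
    regProb n d P = #{G ∈ regularGraphs n d | P G} / #(regularGraphs n d) := by
  have hdeg : ∀ G : SimpleGraph (Fin n),
      (∀ v, Nat.card (G.neighborSet v) = d) ↔ G.IsRegularOfDegree d := fun G => by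
    simp only [SimpleGraph.IsRegularOfDegree, Nat.card_eq_fintype_card,
      SimpleGraph.card_neighborSet_eq_degree]
  unfold regProb regularGraphs
  simp only [hdeg, filter_filter]

lemma regProb_nonneg : 0 ≤ regProb n d P := by
  rw [regProb_eq_card_div_card]
  positivity

lemma regProb_le_one : regProb n d P ≤ 1 := by
  rw [regProb_eq_card_div_card]
  exact div_le_one_of_le₀ (by exact_mod_cast card_filter_le _ _) (by positivity)

lemma regProb_mono (h : ∀ G : SimpleGraph (Fin n), G.IsRegularOfDegree d → P G → Q G) :
    regProb n d P ≤ regProb n d Q := by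
  simp only [regProb_eq_card_div_card]
  gcongr with G hG
  exact h G (mem_regularGraphs.1 hG)

lemma regProb_eq_zero (h : ∀ G : SimpleGraph (Fin n), G.IsRegularOfDegree d → ¬ P G) :
    regProb n d P = 0 := by
  have hempty : #{G ∈ regularGraphs n d | P G} = 0 :=
    card_eq_zero.2 (filter_eq_empty_iff.2 fun G hG => h G (mem_regularGraphs.1 hG))
  rw [regProb_eq_card_div_card, hempty, Nat.cast_zero, zero_div]

lemma regProb_not (h : ∃ G : SimpleGraph (Fin n), G.IsRegularOfDegree d) :
    regProb n d (fun G => ¬ P G) = 1 - regProb n d P := by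
  obtain ⟨G, hG⟩ := h
  have hpos : (0 : ℝ) < #(regularGraphs n d) := by
    exact_mod_cast card_pos.2 ⟨G, mem_regularGraphs.2 hG⟩
  have hsplit := card_filter_add_card_filter_not (s := regularGraphs n d) P
  simp only [regProb_eq_card_div_card]
  rw [eq_sub_iff_add_eq, ← add_div, div_eq_one_iff_eq hpos.ne']
  exact_mod_cast (add_comm _ _).trans hsplit

lemma regProb_exists_le {ι : Type*} (I : Finset ι) (P : ι → SimpleGraph (Fin n) → Prop) :
    regProb n d (fun G => ∃ i ∈ I, P i G) ≤ ∑ i ∈ I, regProb n d (P i) := by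
  simp only [regProb_eq_card_div_card, ← sum_div]
  gcongr
  have hsub : ({G ∈ regularGraphs n d | ∃ i ∈ I, P i G} : Finset _) ⊆
      I.biUnion fun i => {G ∈ regularGraphs n d | P i G} := by
    intro G
    simp only [mem_filter, mem_biUnion]
    tauto
  exact_mod_cast (card_le_card hsub).trans card_biUnion_le

lemma regProb_exists_le_card_mul {ι : Type*} (I : Finset ι) {P : ι → SimpleGraph (Fin n) → Prop}
    {p : ℝ} (hP : ∀ i ∈ I, regProb n d (P i) ≤ p) :
    regProb n d (fun G => ∃ i ∈ I, P i G) ≤ #I * p := by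
  refine (regProb_exists_le I P).trans ?_
  simpa using sum_le_card_nsmul I _ p hP

lemma regProb_or_le :
    regProb n d (fun G => P G ∨ Q G) ≤ regProb n d P + regProb n d Q := by
  simp only [regProb_eq_card_div_card, ← add_div, filter_or]
  gcongr
  exact_mod_cast card_union_le _ _

variable {ι : Type*} {Φ : ι → SimpleGraph (Fin n) → SimpleGraph (Fin n)}
  {Fwd Rev : SimpleGraph (Fin n) → Finset ι}

lemma sum_sum_le_sum_sum_of_moves {Γ : Type*} {Φ : ι → Γ → Γ}
    (hΦ : ∀ i, Function.Injective (Φ i)) {𝒜 ℬ : Finset Γ} {Fwd Rev : Γ → Finset ι}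
    {ω : Γ → ι → ℝ} (hω : ∀ G i, 0 ≤ ω G i)
    (h : ∀ G ∈ 𝒜, ∀ i ∈ Fwd G, Φ i G ∈ ℬ ∧ i ∈ Rev (Φ i G) ∧ ω G i ≤ ω (Φ i G) i) :
    ∑ G ∈ 𝒜, ∑ i ∈ Fwd G, ω G i ≤ ∑ G ∈ ℬ, ∑ i ∈ Rev G, ω G i := by
  simp only [Finset.sum_sigma']
  let move : (Σ _ : Γ, ι) → (Σ _ : Γ, ι) := fun p => ⟨Φ p.2 p.1, p.2⟩
  have hinj : Set.InjOn move (𝒜.sigma Fwd) := by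
    rintro ⟨G, i⟩ _ ⟨H, j⟩ _ heq
    simp only [move, Sigma.mk.injEq] at heq
    obtain rfl := eq_of_heq heq.2
    rw [hΦ i heq.1]
  calc ∑ p ∈ 𝒜.sigma Fwd, ω p.1 p.2
      ≤ ∑ p ∈ 𝒜.sigma Fwd, ω (move p).1 (move p).2 := sum_le_sum fun p hp =>
        (h p.1 (mem_sigma.1 hp).1 p.2 (mem_sigma.1 hp).2).2.2
    _ = ∑ q ∈ (𝒜.sigma Fwd).image move, ω q.1 q.2 := by rw [sum_image hinj]
    _ ≤ ∑ q ∈ ℬ.sigma Rev, ω q.1 q.2 := by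
        refine sum_le_sum_of_subset_of_nonneg ?_ fun q _ _ => hω _ _
        refine image_subset_iff.2 fun p hp => ?_
        obtain ⟨hB, hRev, -⟩ := h p.1 (mem_sigma.1 hp).1 p.2 (mem_sigma.1 hp).2
        exact mem_sigma.2 ⟨hB, hRev⟩

theorem regProb_mul_le_of_weighted_moves (hΦ : ∀ i, Function.Injective (Φ i))
    {ω : SimpleGraph (Fin n) → ι → ℝ} (hω : ∀ G i, 0 ≤ ω G i)
    (h : ∀ G : SimpleGraph (Fin n), G.IsRegularOfDegree d → P G → ∀ i ∈ Fwd G,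
      (Φ i G).IsRegularOfDegree d ∧ Q (Φ i G) ∧ i ∈ Rev (Φ i G) ∧ ω G i ≤ ω (Φ i G) i)
    {F R : ℝ}
    (hF : ∀ G : SimpleGraph (Fin n), G.IsRegularOfDegree d → P G → F ≤ ∑ i ∈ Fwd G, ω G i)
    (hR : ∀ G : SimpleGraph (Fin n), G.IsRegularOfDegree d → Q G → ∑ i ∈ Rev G, ω G i ≤ R) :
    regProb n d P * F ≤ regProb n d Q * R := by
  simp only [regProb_eq_card_div_card, div_mul_eq_mul_div]
  refine div_le_div_of_nonneg_right ?_ (Nat.cast_nonneg _)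
  have hmem : ∀ {P : SimpleGraph (Fin n) → Prop} {G},
      G ∈ ({G ∈ regularGraphs n d | P G} : Finset _) ↔ G.IsRegularOfDegree d ∧ P G := by
    simp [mem_regularGraphs]
  calc #{G ∈ regularGraphs n d | P G} * F
      ≤ ∑ G ∈ regularGraphs n d with P G, ∑ i ∈ Fwd G, ω G i := by
        rw [← nsmul_eq_mul]
        exact card_nsmul_le_sum _ _ _ fun G hG => hF G (hmem.1 hG).1 (hmem.1 hG).2
    _ ≤ ∑ G ∈ regularGraphs n d with Q G, ∑ i ∈ Rev G, ω G i := by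
        refine sum_sum_le_sum_sum_of_moves hΦ hω fun G hG i hi => ?_
        obtain ⟨hreg, hQ, hrest⟩ := h G (hmem.1 hG).1 (hmem.1 hG).2 i hi
        exact ⟨hmem.2 ⟨hreg, hQ⟩, hrest⟩
    _ ≤ #{G ∈ regularGraphs n d | Q G} * R := by
        rw [← nsmul_eq_mul]
        exact sum_le_card_nsmul _ _ _ fun G hG => hR G (hmem.1 hG).1 (hmem.1 hG).2

theorem regProb_mul_le_of_moves (hΦ : ∀ i, Function.Injective (Φ i))
    (h : ∀ G : SimpleGraph (Fin n), G.IsRegularOfDegree d → P G → ∀ i ∈ Fwd G,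
      (Φ i G).IsRegularOfDegree d ∧ Q (Φ i G) ∧ i ∈ Rev (Φ i G))
    {F R : ℝ} (hF : ∀ G : SimpleGraph (Fin n), G.IsRegularOfDegree d → P G → F ≤ #(Fwd G))
    (hR : ∀ G : SimpleGraph (Fin n), G.IsRegularOfDegree d → Q G → (#(Rev G) : ℝ) ≤ R) :
    regProb n d P * F ≤ regProb n d Q * R :=
  regProb_mul_le_of_weighted_moves hΦ (ω := fun _ _ => 1) (fun _ _ => zero_le_one)
    (fun G hG hP i hi => ⟨(h G hG hP i hi).1, (h G hG hP i hi).2.1, (h G hG hP i hi).2.2, le_rfl⟩)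
    (by simpa using hF) (by simpa using hR)

end RegProb

section Counting

variable {α : Type*} {β : α → Type*} {A : Finset α} {B : ∀ x, Finset (β x)} {a b : ℝ}

lemma mul_le_card_sigma (ha : a ≤ #A) (hb : ∀ x ∈ A, b ≤ #(B x)) (hb₀ : 0 ≤ b) :
    a * b ≤ #(A.sigma B) := by
  rw [card_sigma]
  push_cast
  calc a * b ≤ #A * b := by gcongr
    _ ≤ ∑ x ∈ A, (#(B x) : ℝ) := by
        rw [← nsmul_eq_mul]
        exact card_nsmul_le_sum _ _ _ hb

lemma card_sigma_le_mul (ha : #A ≤ a) (hb : ∀ x ∈ A, (#(B x) : ℝ) ≤ b) (hb₀ : 0 ≤ b) :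
    #(A.sigma B) ≤ a * b := by
  rw [card_sigma]
  push_cast
  calc ∑ x ∈ A, (#(B x) : ℝ) ≤ #A * b := by
        rw [← nsmul_eq_mul]
        exact sum_le_card_nsmul _ _ _ hb
    _ ≤ a * b := by gcongr

end Counting

lemma two_mul_le_of_mul_le_mul {x y a b : ℝ} (hx : 0 ≤ x) (hb : 0 < b) (hab : 2 * b ≤ a)
    (h : x * a ≤ y * b) : 2 * x ≤ y := by
  refine le_of_mul_le_mul_right ?_ hb
  calc 2 * x * b = x * (2 * b) := by ring
    _ ≤ x * a := by gcongr
    _ ≤ y * b := h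

lemma le_div_two_pow_add_of_two_mul_sub_le (e : ℕ → ℝ) {N T : ℝ} (k j : ℕ) (hN : ∀ i, e i ≤ N)
    (hT : 0 ≤ T) (hstep : ∀ i, k ≤ i → i < k + j → 2 * (e i - T) ≤ e (i + 1)) :
    e k ≤ N / 2 ^ j + 2 * T := by
  induction j generalizing k with
  | zero => simpa using (hN k).trans (le_add_of_nonneg_right (by positivity))
  | succ j ih =>
    have hnext := ih (k + 1) fun i hi hi' => hstep i (by lia) (by lia)
    have hk := hstep k le_rfl (by lia)
    have hhalf : N / 2 ^ (j + 1) = N / 2 ^ j / 2 := by rw [pow_succ, div_mul_eq_div_div]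
    linarith

/-! ### Codegrees -/

section Codegree

variable {V : Type*} [Fintype V] [DecidableEq V]

/-- The neighbours of `a`, other than `b`, that are not neighbours of `b`. -/
noncomputable def exclusiveNbrs (G : SimpleGraph V) (a b : V) : Finset V :=
  (G.neighborFinset a \ G.neighborFinset b).erase b

/-- The number of common neighbours of `u` and `v`. -/
noncomputable def codegree (G : SimpleGraph V) (u v : V) : ℕ :=
  #(G.neighborFinset u ∩ G.neighborFinset v)

/-- The vertices other than `u` and `v` that are adjacent to neither of them. -/
noncomputable def commonNonNbrs (G : SimpleGraph V) (u v : V) : Finset V :=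
  univ \ insert u (insert v (G.neighborFinset u ∪ G.neighborFinset v))

variable {G : SimpleGraph V} {d : ℕ}

lemma mem_exclusiveNbrs {a b x : V} :
    x ∈ exclusiveNbrs G a b ↔ x ≠ b ∧ G.Adj a x ∧ ¬ G.Adj b x := by
  simp [exclusiveNbrs]

lemma mem_commonNonNbrs {u v x : V} :
    x ∈ commonNonNbrs G u v ↔ x ≠ u ∧ x ≠ v ∧ ¬ G.Adj u x ∧ ¬ G.Adj v x := by
  simp [commonNonNbrs]

lemma codegree_comm (G : SimpleGraph V) (u v : V) : codegree G u v = codegree G v u := by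
  rw [codegree, inter_comm, codegree]

lemma codegree_le (hG : G.IsRegularOfDegree d) (u v : V) : codegree G u v ≤ d :=
  (card_le_card inter_subset_left).trans_eq (hG u)

lemma card_neighborFinset_sdiff_add_codegree (hG : G.IsRegularOfDegree d) (u v : V) :
    #(G.neighborFinset u \ G.neighborFinset v) + codegree G u v = d :=
  (card_sdiff_add_card_inter _ _).trans (hG u)

lemma card_exclusiveNbrs_comm (hG : G.IsRegularOfDegree d) (a b : V) :
    #(exclusiveNbrs G a b) = #(exclusiveNbrs G b a) := by
  have hab := card_neighborFinset_sdiff_add_codegree hG a b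
  have hba := card_neighborFinset_sdiff_add_codegree hG b a
  rw [codegree_comm] at hba
  unfold exclusiveNbrs
  by_cases h : G.Adj a b
  · rw [card_erase_of_mem (by simp [h]), card_erase_of_mem (by simp [h.symm])]
    lia
  · rw [erase_eq_of_notMem (by simp [h]), erase_eq_of_notMem (by simp [h, G.adj_comm b])]
    lia

lemma card_add_codegree_le_card_commonNonNbrs (hG : G.IsRegularOfDegree d) (u v : V) :
    Fintype.card V + codegree G u v ≤ #(commonNonNbrs G u v) + 2 * d + 2 := by
  have hcompl := card_sdiff_add_card_eq_card
    (subset_univ (insert u (insert v (G.neighborFinset u ∪ G.neighborFinset v))))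
  have hu := card_insert_le u (insert v (G.neighborFinset u ∪ G.neighborFinset v))
  have hv := card_insert_le v (G.neighborFinset u ∪ G.neighborFinset v)
  have hunion := card_union_add_card_inter (G.neighborFinset u) (G.neighborFinset v)
  have hdu : #(G.neighborFinset u) = d := hG u
  have hdv : #(G.neighborFinset v) = d := hG v
  rw [card_univ] at hcompl
  unfold codegree commonNonNbrs
  lia

lemma IsSwitchable.card_exclusiveNbrs_switch {w w' s z : V} (h : IsSwitchable G w w' s z) :
    #(exclusiveNbrs (switch G w w' s z) w w') = #(exclusiveNbrs G w w') := by
  have heq : exclusiveNbrs (switch G w w' s z) w w'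
      = insert s ((exclusiveNbrs G w w').erase z) := by
    unfold exclusiveNbrs
    rw [h.neighborFinset_switch, h.neighborFinset_switch_snd]
    ext x
    simp only [mem_insert, mem_erase, Finset.mem_sdiff, SimpleGraph.mem_neighborFinset]
    grind [h.transpose.ne, h.adj_left.ne]
  rw [heq, card_insert_erase]
  · simp [mem_exclusiveNbrs, h.adj_left]
  · simp [mem_exclusiveNbrs, h.adj_right, h.not_adj_right, h.ne_right]

section CodegreeSwitching

variable {u v z y q : V}

lemma isSwitchable_of_common_of_commonNonNbr (hz : z ∈ G.neighborFinset u ∩ G.neighborFinset v)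
    (hy : y ∈ commonNonNbrs G u v) (hq : q ∈ exclusiveNbrs G y z) : IsSwitchable G y z u q := by
  simp only [mem_inter, SimpleGraph.mem_neighborFinset] at hz
  rw [mem_commonNonNbrs] at hy
  rw [mem_exclusiveNbrs] at hq
  exact ⟨fun e => hy.2.2.1 (e ▸ hz.1), hz.1.symm, fun e => hy.2.2.1 e.symm, hy.1.symm, hq.2.1,
    hq.2.2, hq.1⟩

lemma neighborFinset_codegree_switch (huv : u ≠ v)
    (hz : z ∈ G.neighborFinset u ∩ G.neighborFinset v) (hy : y ∈ commonNonNbrs G u v)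
    (hq : q ∈ exclusiveNbrs G y z) :
    (switch G y z u q).neighborFinset v = G.neighborFinset v := by
  simp only [mem_inter, SimpleGraph.mem_neighborFinset] at hz
  rw [mem_commonNonNbrs] at hy
  rw [mem_exclusiveNbrs] at hq
  exact neighborFinset_switch_of_ne hy.2.1.symm hz.2.ne huv.symm
    fun e => hy.2.2.2 (e ▸ hq.2.1.symm)

lemma codegree_switch_add_one (huv : u ≠ v) (hz : z ∈ G.neighborFinset u ∩ G.neighborFinset v)
    (hy : y ∈ commonNonNbrs G u v) (hq : q ∈ exclusiveNbrs G y z) :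
    codegree (switch G y z u q) u v + 1 = codegree G u v := by
  have hsw := isSwitchable_of_common_of_commonNonNbr hz hy hq
  unfold codegree
  rw [hsw.neighborFinset_switch_left, neighborFinset_codegree_switch huv hz hy hq,
    insert_inter_of_notMem (by simpa using (mem_commonNonNbrs.1 hy).2.2.2), erase_inter,
    card_erase_add_one hz]

lemma mem_reverse_codegree_switch (huv : u ≠ v)
    (hz : z ∈ G.neighborFinset u ∩ G.neighborFinset v) (hy : y ∈ commonNonNbrs G u v)
    (hq : q ∈ exclusiveNbrs G y z) :
    z ∈ (switch G y z u q).neighborFinset v \ (switch G y z u q).neighborFinset u ∧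
    y ∈ (switch G y z u q).neighborFinset u \ (switch G y z u q).neighborFinset v ∧
    q ∈ exclusiveNbrs (switch G y z u q) z y := by
  have hsw := isSwitchable_of_common_of_commonNonNbr hz hy hq
  simp only [exclusiveNbrs, neighborFinset_codegree_switch huv hz hy hq,
    hsw.neighborFinset_switch, hsw.neighborFinset_switch_snd, hsw.neighborFinset_switch_left]
  simp only [mem_inter, SimpleGraph.mem_neighborFinset] at hz
  rw [mem_commonNonNbrs] at hy
  simp only [mem_insert, mem_erase, Finset.mem_sdiff, SimpleGraph.mem_neighborFinset]
  have hzy : z ≠ y := hsw.ne.symm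
  have hqy : q ≠ y := hsw.adj_right.ne'
  have hqu : q ≠ u := hsw.transpose.ne.symm
  tauto

end CodegreeSwitching

end Codegree

section CodegreeTail

variable {n d : ℕ} {u v : Fin n}

/-- The switchings lowering the codegree of `u` and `v`, encoded as `⟨(z, y), q⟩`: the edges
`zu` and `yq` are replaced by `yu` and `zq`. -/
noncomputable def codegreeFwd (u v : Fin n) (G : SimpleGraph (Fin n)) :
    Finset (Σ _ : Fin n × Fin n, Fin n) :=
  ((G.neighborFinset u ∩ G.neighborFinset v) ×ˢ commonNonNbrs G u v).sigma
    fun p => exclusiveNbrs G p.2 p.1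

/-- The reversals of the switchings in `codegreeFwd`, in the same encoding. -/
noncomputable def codegreeRev (u v : Fin n) (G : SimpleGraph (Fin n)) :
    Finset (Σ _ : Fin n × Fin n, Fin n) :=
  ((G.neighborFinset v \ G.neighborFinset u) ×ˢ (G.neighborFinset u \ G.neighborFinset v)).sigma
    fun p => exclusiveNbrs G p.1 p.2

/-- The weight given to a switching: it makes the choices of `q`, for fixed `z` and `y`, count
as a single one. -/
noncomputable def codegreeWeight (G : SimpleGraph (Fin n)) (i : Σ _ : Fin n × Fin n, Fin n) : ℝ :=
  (#(exclusiveNbrs G i.1.2 i.1.1) : ℝ)⁻¹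

lemma le_sum_codegreeFwd {G : SimpleGraph (Fin n)} (hG : G.IsRegularOfDegree d) {k : ℕ}
    (hk : codegree G u v = k + 1) :
    (k + 1 : ℝ) * (n - 2 * d + k - 1) ≤ ∑ i ∈ codegreeFwd u v G, codegreeWeight G i := by
  have hone : ∀ p ∈ (G.neighborFinset u ∩ G.neighborFinset v) ×ˢ commonNonNbrs G u v,
      ∑ q ∈ exclusiveNbrs G p.2 p.1, codegreeWeight G ⟨p, q⟩ = 1 := by
    rintro ⟨z, y⟩ hp
    simp only [mem_product, mem_inter, SimpleGraph.mem_neighborFinset, mem_commonNonNbrs] at hp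
    obtain ⟨⟨huz, -⟩, hyu, -, huy, -⟩ := hp
    have hmem : u ∈ exclusiveNbrs G z y :=
      mem_exclusiveNbrs.2 ⟨hyu.symm, huz.symm, fun e => huy e.symm⟩
    have hpos : #(exclusiveNbrs G y z) ≠ 0 := by
      rw [card_exclusiveNbrs_comm hG]
      exact (card_pos.2 ⟨u, hmem⟩).ne'
    simp [codegreeWeight, hpos]
  have hY : (n : ℝ) - 2 * d + k - 1 ≤ #(commonNonNbrs G u v) := by
    have hcard := card_add_codegree_le_card_commonNonNbrs hG u v
    rw [hk, Fintype.card_fin] at hcard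
    have : (n : ℝ) + (k + 1) ≤ #(commonNonNbrs G u v) + 2 * d + 2 := by exact_mod_cast hcard
    linarith
  calc (k + 1 : ℝ) * (n - 2 * d + k - 1) ≤ (k + 1) * #(commonNonNbrs G u v) := by gcongr
    _ = ∑ _ ∈ (G.neighborFinset u ∩ G.neighborFinset v) ×ˢ commonNonNbrs G u v, (1 : ℝ) := by
        rw [sum_const, card_product, show #(_ ∩ _) = k + 1 from hk]
        simp
    _ = ∑ i ∈ codegreeFwd u v G, codegreeWeight G i := by
        rw [codegreeFwd, sum_sigma, sum_congr rfl hone]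

lemma sum_codegreeRev_le {G : SimpleGraph (Fin n)} (hG : G.IsRegularOfDegree d) {k : ℕ}
    (hk : codegree G u v = k) :
    ∑ i ∈ codegreeRev u v G, codegreeWeight G i ≤ ((d : ℝ) - k) ^ 2 := by
  have hsdiff : ∀ a b, codegree G a b = k →
      (#(G.neighborFinset a \ G.neighborFinset b) : ℝ) = d - k := fun a b hab => by
    rw [eq_sub_iff_add_eq, ← hab]
    exact_mod_cast card_neighborFinset_sdiff_add_codegree hG a b
  calc ∑ i ∈ codegreeRev u v G, codegreeWeight G i
      ≤ ∑ _ ∈ (G.neighborFinset v \ G.neighborFinset u) ×ˢ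
          (G.neighborFinset u \ G.neighborFinset v), (1 : ℝ) := by
        rw [codegreeRev, sum_sigma]
        refine sum_le_sum fun p _ => ?_
        simp only [codegreeWeight, sum_const, nsmul_eq_mul]
        rw [card_exclusiveNbrs_comm hG]
        exact mul_inv_le_one
    _ = ((d : ℝ) - k) ^ 2 := by
        rw [sum_const, card_product, nsmul_eq_mul, mul_one, Nat.cast_mul, hsdiff u v hk,
          hsdiff v u ((codegree_comm G v u).trans hk), sq]

lemma regProb_codegree_succ_mul_le (huv : u ≠ v) (k : ℕ) :
    regProb n d (fun G => codegree G u v = k + 1) * ((k + 1) * (n - 2 * d + k - 1))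
      ≤ regProb n d (fun G => codegree G u v = k) * (d - k) ^ 2 := by
  refine regProb_mul_le_of_weighted_moves
    (Φ := fun i G => switch G i.1.2 i.1.1 u i.2) (Fwd := codegreeFwd u v)
    (Rev := codegreeRev u v) (ω := codegreeWeight)
    (fun i => (switch_involutive _ _ _ _).injective)
    (fun G i => by unfold codegreeWeight; positivity) ?_
    (fun G hG hk => le_sum_codegreeFwd hG hk) (fun G hG hk => sum_codegreeRev_le hG hk)
  rintro G hG hk ⟨⟨z, y⟩, q⟩ hi
  simp only [codegreeFwd, mem_sigma, mem_product] at hi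
  obtain ⟨⟨hz, hy⟩, hq⟩ := hi
  have hsw := isSwitchable_of_common_of_commonNonNbr hz hy hq
  obtain ⟨hz', hy', hq'⟩ := mem_reverse_codegree_switch huv hz hy hq
  refine ⟨hsw.isRegularOfDegree_switch hG, ?_, ?_, ?_⟩
  · have := codegree_switch_add_one huv hz hy hq
    lia
  · exact mem_sigma.2 ⟨mem_product.2 ⟨hz', hy'⟩, hq'⟩
  · exact (congrArg (fun m : ℕ => (m : ℝ)⁻¹) hsw.card_exclusiveNbrs_switch.symm).le

lemma regProb_codegree_eq_le (huv : u ≠ v) {k₀ : ℕ}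
    (hk : ∀ k : ℕ, k₀ ≤ k → k < d → 2 * ((d : ℝ) - k) ^ 2 ≤ (k + 1) * (n - 2 * d + k - 1))
    (j : ℕ) (hj : k₀ + j ≤ d) : regProb n d (fun G => codegree G u v = k₀ + j) ≤ 1 / 2 ^ j := by
  induction j with
  | zero => simpa using regProb_le_one
  | succ j ih =>
    have hlt : k₀ + j < d := by lia
    have hpos : 0 < ((d : ℝ) - (k₀ + j : ℕ)) ^ 2 := by
      have : ((k₀ + j : ℕ) : ℝ) < d := by exact_mod_cast hlt
      exact pow_pos (by linarith) 2
    have hhalf : 2 * regProb n d (fun G => codegree G u v = k₀ + j + 1)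
        ≤ regProb n d (fun G => codegree G u v = k₀ + j) :=
      two_mul_le_of_mul_le_mul regProb_nonneg hpos (hk _ (Nat.le_add_right _ _) hlt)
        (regProb_codegree_succ_mul_le huv (k₀ + j))
    have hpow : (1 : ℝ) / 2 ^ (j + 1) = 1 / 2 ^ j / 2 := by rw [pow_succ, div_mul_eq_div_div]
    rw [hpow, ← add_assoc]
    linarith [ih (by lia)]

theorem regProb_le_codegree_le (huv : u ≠ v) {k₀ : ℕ} (L : ℕ) (hdn : d < n)
    (hk : ∀ k : ℕ, k₀ ≤ k → k < d → 2 * ((d : ℝ) - k) ^ 2 ≤ (k + 1) * (n - 2 * d + k - 1)) :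
    regProb n d (fun G => k₀ + L ≤ codegree G u v) ≤ n / 2 ^ L := by
  calc regProb n d (fun G => k₀ + L ≤ codegree G u v)
      ≤ regProb n d (fun G => ∃ k ∈ Icc (k₀ + L) d, codegree G u v = k) :=
        regProb_mono fun G hG h => ⟨_, mem_Icc.2 ⟨h, codegree_le hG u v⟩, rfl⟩
    _ ≤ #(Icc (k₀ + L) d) * (1 / 2 ^ L) := by
        refine regProb_exists_le_card_mul _ fun k hkd => ?_
        rw [mem_Icc] at hkd
        obtain ⟨j, rfl⟩ := Nat.exists_eq_add_of_le (show k₀ ≤ k by lia)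
        refine (regProb_codegree_eq_le huv hk j hkd.2).trans ?_
        gcongr
        · norm_num
        · lia
    _ ≤ n / 2 ^ L := by
        rw [mul_one_div]
        gcongr
        rw [Nat.card_Icc]
        lia

end CodegreeTail

/-! ### Creating relays by switching -/

section RelaySwitching

variable {V : Type*} [Fintype V] [DecidableEq V] {G : SimpleGraph V} {d : ℕ} {v w w' s z : V}
  {Q X : Finset V}

/-- The switchings turning a neighbour `w` of `v` into a relay to `X`, encoded as
`⟨(w, s), w', z⟩`: the edges `w's` and `wz` are replaced by `ws` and `w'z`, where `s ∈ X`. -/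
noncomputable def relayFwd (v : V) (Q X : Finset V) (G : SimpleGraph V) :
    Finset (Σ _ : V × V, Σ _ : V, V) :=
  (((G.neighborFinset v \ Q) \ relays G v Q X) ×ˢ X).sigma fun p =>
    (exclusiveNbrs G p.2 v \ Q).sigma fun w' => (exclusiveNbrs G p.1 w').erase v

/-- The pairs `(w, s)` such that `w` is a relay to `X` and `s` is its only neighbour in `X`. -/
noncomputable def tightRelays (v : V) (Q X : Finset V) (G : SimpleGraph V) : Finset (V × V) :=
  {p ∈ relays G v Q X ×ˢ X | G.Adj p.1 p.2 ∧ ∀ t ∈ X, G.Adj p.1 t → t = p.2}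

/-- A set containing the reversals of the switchings in `relayFwd`, in the same encoding. -/
noncomputable def relayRev (v : V) (Q X : Finset V) (G : SimpleGraph V) :
    Finset (Σ _ : V × V, Σ _ : V, V) :=
  (tightRelays v Q X G).sigma fun _ => univ.sigma fun w' => G.neighborFinset w'

lemma mem_relayFwd : (⟨(w, s), w', z⟩ : Σ _ : V × V, Σ _ : V, V) ∈ relayFwd v Q X G ↔
    ((G.Adj v w ∧ w ∉ Q ∧ ∀ t ∈ X, ¬ G.Adj w t) ∧ s ∈ X) ∧
      ((w' ≠ v ∧ G.Adj s w' ∧ ¬ G.Adj v w') ∧ w' ∉ Q) ∧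
        z ≠ v ∧ z ≠ w' ∧ G.Adj w z ∧ ¬ G.Adj w' z := by
  simp only [relayFwd, mem_sigma, mem_product, Finset.mem_sdiff, SimpleGraph.mem_neighborFinset,
    mem_relays, mem_exclusiveNbrs, mem_erase]
  grind

lemma isSwitchable_of_mem_relayFwd (hXQ : X ⊆ Q) (h : ⟨(w, s), w', z⟩ ∈ relayFwd v Q X G) :
    IsSwitchable G w w' s z := by
  obtain ⟨⟨⟨hvw, hwQ, hwX⟩, hs⟩, ⟨⟨-, hsw', hvw'⟩, -⟩, -, hzw', hwz, hw'z⟩ := mem_relayFwd.1 h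
  exact ⟨fun e => hvw' (e ▸ hvw), hsw'.symm, hwX s hs, fun e => hwQ (e ▸ hXQ hs), hwz, hw'z, hzw'⟩

lemma neighborFinset_switch_of_mem_relayFwd (hv : Misses G X v)
    (h : ⟨(w, s), w', z⟩ ∈ relayFwd v Q X G) :
    (switch G w w' s z).neighborFinset v = G.neighborFinset v := by
  obtain ⟨⟨⟨hvw, -, -⟩, hs⟩, ⟨⟨hw'v, -, -⟩, -⟩, hzv, -⟩ := mem_relayFwd.1 h
  exact neighborFinset_switch_of_ne hvw.ne hw'v.symm (fun e => hv.1 (e ▸ hs)) hzv.symm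

lemma relays_switch_of_mem_relayFwd (hXQ : X ⊆ Q) (hv : Misses G X v)
    (h : ⟨(w, s), w', z⟩ ∈ relayFwd v Q X G) :
    relays (switch G w w' s z) v Q X = insert w (relays G v Q X) := by
  have hsw := isSwitchable_of_mem_relayFwd hXQ h
  have hvadj : ∀ x, (switch G w w' s z).Adj v x ↔ G.Adj v x := fun x => by
    simp only [← SimpleGraph.mem_neighborFinset, neighborFinset_switch_of_mem_relayFwd hv h]
  obtain ⟨⟨⟨hvw, hwQ, -⟩, hs⟩, ⟨⟨-, -, hvw'⟩, hw'Q⟩, -⟩ := mem_relayFwd.1 h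
  ext x
  rw [mem_insert, mem_relays, mem_relays, hvadj]
  rcases eq_or_ne x w with rfl | hxw
  · simp only [true_or, iff_true]
    exact ⟨hvw, hwQ, s, hs, (hsw.switch_adj s).2 (Or.inl rfl)⟩
  · simp only [hxw, false_or]
    refine and_congr_right fun hvx => and_congr_right fun _ => exists_congr fun t =>
      and_congr_right fun ht => switch_adj_of_not_isSwitchPair ?_
    have htQ := hXQ ht
    rintro (⟨rfl | rfl, -⟩ | ⟨rfl | rfl, -⟩)
    exacts [hxw rfl, hvw' hvx, hwQ htQ, hw'Q htQ]

lemma mem_relayRev_switch (hXQ : X ⊆ Q) (hv : Misses G X v)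
    (h : ⟨(w, s), w', z⟩ ∈ relayFwd v Q X G) :
    ⟨(w, s), w', z⟩ ∈ relayRev v Q X (switch G w w' s z) := by
  have hsw := isSwitchable_of_mem_relayFwd hXQ h
  obtain ⟨⟨⟨-, -, hwX⟩, hs⟩, -⟩ := mem_relayFwd.1 h
  simp only [relayRev, tightRelays, mem_sigma, mem_filter, mem_product, mem_univ, true_and,
    hsw.neighborFinset_switch_snd, relays_switch_of_mem_relayFwd hXQ hv h]
  refine ⟨⟨⟨mem_insert_self _ _, hs⟩, (hsw.switch_adj s).2 (Or.inl rfl), fun t ht hwt => ?_⟩,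
    mem_insert_self _ _⟩
  exact ((hsw.switch_adj t).1 hwt).resolve_right fun hold => hwX t ht hold.1

lemma le_card_exclusiveNbrs (hG : G.IsRegularOfDegree d) (a b : V) :
    d ≤ #(exclusiveNbrs G a b) + codegree G a b + 1 := by
  have hsdiff := card_neighborFinset_sdiff_add_codegree hG a b
  have herase := pred_card_le_card_erase (s := G.neighborFinset a \ G.neighborFinset b) (a := b)
  unfold exclusiveNbrs
  lia

lemma le_card_exclusiveNbrs_sdiff (hG : G.IsRegularOfDegree d) (a b : V) (Q : Finset V) :
    d ≤ #(exclusiveNbrs G a b \ Q) + codegree G a b + #(G.neighborFinset a ∩ Q) + 1 := by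
  have hexcl := le_card_exclusiveNbrs hG a b
  have hsplit := card_sdiff_add_card_inter (exclusiveNbrs G a b) Q
  have hinter : #(exclusiveNbrs G a b ∩ Q) ≤ #(G.neighborFinset a ∩ Q) :=
    card_le_card (inter_subset_inter_right ((erase_subset _ _).trans sdiff_subset))
  lia

lemma mul_le_card_relayFwd (hG : G.IsRegularOfDegree d) (hv : Misses G X v) {m b k : ℕ}
    (hm : #(G.neighborFinset v \ Q) = m) (hb : b ≤ #X) (hk : #(relays G v Q X) ≤ k) {c q f : ℝ}
    (hc : ∀ x y, x ≠ y → codegree G x y ≤ c) (hq : ∀ x ∈ X, #(G.neighborFinset x ∩ Q) ≤ q)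
    (hf₀ : 0 ≤ f) (hf : f + c + q + 2 ≤ d) (hq₀ : 0 ≤ q) :
    ((m : ℝ) - k) * b * (f * f) ≤ #(relayFwd v Q X G) := by
  refine mul_le_card_sigma ?_ ?_ (by positivity)
  · have hnew : (m : ℝ) - k ≤ #((G.neighborFinset v \ Q) \ relays G v Q X) := by
      have hsdiff := le_card_sdiff (relays G v Q X) (G.neighborFinset v \ Q)
      rw [sub_le_iff_le_add]
      exact_mod_cast (by lia : m ≤ #((G.neighborFinset v \ Q) \ relays G v Q X) + k)
    rw [card_product, Nat.cast_mul]
    gcongr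
  · rintro ⟨w, s⟩ hp
    simp only [mem_product, Finset.mem_sdiff, SimpleGraph.mem_neighborFinset] at hp
    have hsv : s ≠ v := fun e => hv.1 (e ▸ hp.2)
    refine mul_le_card_sigma ?_ (fun w' hw' => ?_) hf₀
    · have hcard : (d : ℝ) ≤ #(exclusiveNbrs G s v \ Q) + codegree G s v +
          #(G.neighborFinset s ∩ Q) + 1 := mod_cast le_card_exclusiveNbrs_sdiff hG s v Q
      linarith [hc s v hsv, hq s hp.2]
    · rw [Finset.mem_sdiff, mem_exclusiveNbrs] at hw'
      have hww' : w ≠ w' := fun e => hw'.1.2.2 (e ▸ hp.1.1.1)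
      have herase := pred_card_le_card_erase (s := exclusiveNbrs G w w') (a := v)
      have hexcl := le_card_exclusiveNbrs hG w w'
      have hcard : (d : ℝ) ≤ #((exclusiveNbrs G w w').erase v) + codegree G w w' + 2 :=
        mod_cast (by lia)
      linarith [hc w w' hww']

lemma card_tightRelays_le (v : V) (Q X : Finset V) (G : SimpleGraph V) :
    #(tightRelays v Q X G) ≤ #(relays G v Q X) := by
  refine card_le_card_of_injOn Prod.fst (fun p hp => ?_) ?_
  · exact (mem_product.1 (mem_filter.1 hp).1).1
  · rintro ⟨w, s⟩ hp ⟨w₂, s₂⟩ hp₂ (rfl : w = w₂)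
    simp only [tightRelays, coe_filter, mem_product, Set.mem_ofPred_eq] at hp hp₂
    rw [hp.2.2 s₂ hp₂.1.2 hp₂.2.1]

lemma card_relayRev_le (hG : G.IsRegularOfDegree d) {k : ℕ} (hk : #(relays G v Q X) ≤ k) :
    (#(relayRev v Q X G) : ℝ) ≤ k * (Fintype.card V * d) := by
  refine card_sigma_le_mul (mod_cast (card_tightRelays_le v Q X G).trans hk) (fun _ _ => ?_)
    (by positivity)
  exact card_sigma_le_mul (by simp) (fun x _ => mod_cast (hG x).le) (by positivity)

end RelaySwitching

section RelayTail

variable {n d : ℕ} {v : Fin n} {m b : ℕ} {Q X : SimpleGraph (Fin n) → Finset (Fin n)}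

/-- `v` is outside `X G` and has no neighbour there, `X G` has at least `b` elements, and `v` has
exactly `m` neighbours outside `Q G`. -/
def IsRelayBase (Q X : SimpleGraph (Fin n) → Finset (Fin n)) (v : Fin n) (m b : ℕ)
    (G : SimpleGraph (Fin n)) : Prop :=
  Misses G (X G) v ∧ b ≤ #(X G) ∧ #(G.neighborFinset v \ Q G) = m

/-- `Q` and `X` do not change under a switching that only affects pairs leaving `Q G` and whose
vertex `s` lies in `X G`. -/
def IsSwitchInvariant (Q X : SimpleGraph (Fin n) → Finset (Fin n)) : Prop :=
  ∀ ⦃G : SimpleGraph (Fin n)⦄ ⦃w w' s z : Fin n⦄, IsSwitchable G w w' s z → w ∉ Q G → w' ∉ Q G →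
    s ∈ X G → Q (switch G w w' s z) = Q G ∧ X (switch G w w' s z) = X G

variable {T : SimpleGraph (Fin n) → Prop} {c q f : ℝ}

lemma regProb_card_relays_le_mul_le
    (hXQ : ∀ G, X G ⊆ Q G) (hinv : IsSwitchInvariant Q X)
    (hc : ∀ G : SimpleGraph (Fin n), T G → ∀ x y, x ≠ y → codegree G x y ≤ c)
    (hq : ∀ G : SimpleGraph (Fin n), T G → ∀ x ∈ X G, #(G.neighborFinset x ∩ Q G) ≤ q)
    (hf₀ : 0 ≤ f) (hf : f + c + q + 2 ≤ d) (hq₀ : 0 ≤ q) (k : ℕ) :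
    regProb n d (fun G => (IsRelayBase Q X v m b G ∧ #(relays G v (Q G) (X G)) ≤ k) ∧ T G) *
        (((m : ℝ) - k) * b * (f * f))
      ≤ regProb n d (fun G => IsRelayBase Q X v m b G ∧ #(relays G v (Q G) (X G)) ≤ k + 1) *
        ((k + 1 : ℕ) * (n * d)) := by
  refine regProb_mul_le_of_moves (Φ := fun i G => switch G i.1.1 i.2.1 i.1.2 i.2.2)
    (Fwd := fun G => relayFwd v (Q G) (X G) G) (Rev := fun G => relayRev v (Q G) (X G) G)
    (fun i => (switch_involutive _ _ _ _).injective) ?_ ?_ ?_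
  · rintro G hG ⟨⟨⟨hv, hb, hm⟩, hk⟩, -⟩ ⟨⟨w, s⟩, w', z⟩ hi
    have hsw := isSwitchable_of_mem_relayFwd (hXQ G) hi
    obtain ⟨⟨⟨-, hwQ, -⟩, hs⟩, ⟨-, hw'Q⟩, -⟩ := mem_relayFwd.1 hi
    obtain ⟨hQ, hX⟩ := hinv hsw hwQ hw'Q hs
    have hnbr := neighborFinset_switch_of_mem_relayFwd hv hi
    refine ⟨hsw.isRegularOfDegree_switch hG, ⟨⟨?_, ?_, ?_⟩, ?_⟩, ?_⟩
    · simpa only [Misses, hX, ← SimpleGraph.mem_neighborFinset, hnbr] using hv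
    · rwa [hX]
    · rwa [hQ, hnbr]
    · rw [hQ, hX, relays_switch_of_mem_relayFwd (hXQ G) hv hi]
      exact (card_insert_le _ _).trans (by lia)
    · rw [hQ, hX]
      exact mem_relayRev_switch (hXQ G) hv hi
  · rintro G hG ⟨⟨⟨hv, hb, hm⟩, hk⟩, hT⟩
    exact mul_le_card_relayFwd hG hv hm hb hk (hc G hT) (hq G hT) hf₀ hf hq₀
  · rintro G hG ⟨-, hk⟩
    simpa using card_relayRev_le hG hk

theorem regProb_card_relays_le
    (hXQ : ∀ G, X G ⊆ Q G) (hinv : IsSwitchInvariant Q X)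
    (hc : ∀ G : SimpleGraph (Fin n), T G → ∀ x y, x ≠ y → codegree G x y ≤ c)
    (hq : ∀ G : SimpleGraph (Fin n), T G → ∀ x ∈ X G, #(G.neighborFinset x ∩ Q G) ≤ q)
    (hf₀ : 0 ≤ f) (hf : f + c + q + 2 ≤ d) (hq₀ : 0 ≤ q) (hd : 0 < d) {k j : ℕ}
    (hineq : 2 * (((k + j : ℕ) : ℝ) * (n * d)) ≤ (m - (k + j : ℕ)) * b * (f * f)) :
    regProb n d (fun G => IsRelayBase Q X v m b G ∧ #(relays G v (Q G) (X G)) ≤ k)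
      ≤ 1 / 2 ^ j + 2 * regProb n d (fun G => ¬ T G) := by
  let few : ℕ → SimpleGraph (Fin n) → Prop := fun i G =>
    IsRelayBase Q X v m b G ∧ #(relays G v (Q G) (X G)) ≤ i
  refine le_div_two_pow_add_of_two_mul_sub_le (fun i => regProb n d (few i)) k j
    (fun _ => regProb_le_one) regProb_nonneg fun i _ hi => ?_
  have hsplit : regProb n d (few i) - regProb n d (fun G => ¬ T G)
      ≤ regProb n d (fun G => few i G ∧ T G) := by
    rw [sub_le_iff_le_add]
    exact (regProb_mono fun G _ h => by tauto).trans regProb_or_le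
  have hstep : regProb n d (fun G => few i G ∧ T G) * _ ≤ regProb n d (few (i + 1)) * _ :=
    regProb_card_relays_le_mul_le hXQ hinv hc hq hf₀ hf hq₀ i
  have hnd : 0 < ((i + 1 : ℕ) : ℝ) * (n * d) := by
    have := v.pos
    positivity
  have hratio : 2 * (((i + 1 : ℕ) : ℝ) * (n * d)) ≤ (m - i) * b * (f * f) := by
    have hi' : ((i + 1 : ℕ) : ℝ) ≤ (k + j : ℕ) := by exact_mod_cast hi
    have hi'' : (i : ℝ) ≤ (k + j : ℕ) := by exact_mod_cast (Nat.le_succ i).trans hi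
    calc 2 * (((i + 1 : ℕ) : ℝ) * (n * d)) ≤ 2 * (((k + j : ℕ) : ℝ) * (n * d)) := by
          gcongr 2 * (?_ * _)
      _ ≤ (m - (k + j : ℕ)) * b * (f * f) := hineq
      _ ≤ (m - i) * b * (f * f) := by gcongr
  have hdouble : 2 * regProb n d (fun G => few i G ∧ T G) ≤ regProb n d (few (i + 1)) :=
    two_mul_le_of_mul_le_mul regProb_nonneg hnd hratio hstep
  linarith

end RelayTail

/-! ### Edges between two sets of vertices -/

section CrossingSwitches

variable {V : Type*}

/-- The quadruples `⟨(a, x), (b, y)⟩` with `(a, b) ∈ E` and `(x, y) ∈ F`. -/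
def transposedPairs (E F : Finset (V × V)) : Finset (Σ _ : V × V, V × V) :=
  (E ×ˢ F).map
    ((Equiv.prodProdProdComm V V V V).trans (Equiv.sigmaEquivProd _ _).symm).toEmbedding

lemma mem_transposedPairs {E F : Finset (V × V)} {a b x y : V} :
    (⟨(a, x), (b, y)⟩ : Σ _ : V × V, V × V) ∈ transposedPairs E F ↔ (a, b) ∈ E ∧ (x, y) ∈ F := by
  simp [transposedPairs]

lemma card_transposedPairs (E F : Finset (V × V)) : #(transposedPairs E F) = #E * #F := by
  rw [transposedPairs, card_map, card_product]

lemma card_interedges_comm (G : SimpleGraph V) (A B : Finset V) :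
    #(G.interedges A B) = #(G.interedges B A) :=
  haveI := G.symm
  Rel.card_interedges_comm A B

variable [Fintype V] {G : SimpleGraph V} {d : ℕ}

lemma card_interedges_eq_sum [DecidableEq V] (G : SimpleGraph V) (A B : Finset V) :
    #(G.interedges A B) = ∑ a ∈ A, #(G.neighborFinset a ∩ B) := by
  rw [SimpleGraph.interedges_def, card_filter, sum_product]
  refine sum_congr rfl fun a _ => ?_
  rw [← card_filter]
  congr 1
  ext b
  simp [and_comm]

lemma card_interedges_univ_right (hG : G.IsRegularOfDegree d) (A : Finset V) :
    #(G.interedges A univ) = #A * d := by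
  simp only [card_interedges_eq_sum, inter_univ, SimpleGraph.card_neighborFinset_eq_degree, hG _,
    sum_const, smul_eq_mul]

variable [DecidableEq V] {A B : Finset V}

lemma card_interedges_compl_add (hG : G.IsRegularOfDegree d) (A B : Finset V) :
    #(G.interedges A Bᶜ) + #(G.interedges A B) = #A * d := by
  simp only [card_interedges_eq_sum, ← sum_add_distrib, ← sdiff_eq_inter_compl,
    card_sdiff_add_card_inter, SimpleGraph.card_neighborFinset_eq_degree, hG _, sum_const,
    smul_eq_mul]

/-- The edges in `F` that do not start in `A` and do not end in `B`. -/
noncomputable def edgesAvoiding (G : SimpleGraph V) (F : Finset (V × V)) (A B : Finset V) :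
    Finset (V × V) :=
  F \ (G.interedges A univ ∪ G.interedges univ B)

lemma le_card_edgesAvoiding (hG : G.IsRegularOfDegree d) (F : Finset (V × V)) (A B : Finset V) :
    (#F : ℝ) - (#A + #B) * d ≤ #(edgesAvoiding G F A B) := by
  have hsdiff := le_card_sdiff (G.interedges A univ ∪ G.interedges univ B) F
  have hunion := card_union_le (G.interedges A univ) (G.interedges univ B)
  rw [card_interedges_comm G univ, card_interedges_univ_right hG,
    card_interedges_univ_right hG, ← add_mul] at hunion
  rw [sub_le_iff_le_add]
  exact_mod_cast (by unfold edgesAvoiding; lia :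
    #F ≤ #(edgesAvoiding G F A B) + (#A + #B) * d)

/-- The switchings replacing an edge `ax` with `a ∈ A`, `x ∉ B` and an edge `by` with `b ∈ B`,
`y ∉ A` by the edges `ab` and `xy`, encoded as `⟨(a, x), (b, y)⟩`. -/
noncomputable def joiningFwd (A B : Finset V) (G : SimpleGraph V) : Finset (Σ _ : V × V, V × V) :=
  (G.interedges A Bᶜ).sigma fun e => edgesAvoiding G (G.interedges B Aᶜ) (G.neighborFinset e.1)
    (insert e.2 (G.neighborFinset e.2))

/-- The switchings replacing an edge `ax` with `a ∈ A`, `x ∈ B` and an edge `by` outside `A ∪ B` by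
the edges `ab` and `xy`, encoded as `⟨(a, x), (b, y)⟩`. -/
noncomputable def splittingFwd (A B : Finset V) (G : SimpleGraph V) :
    Finset (Σ _ : V × V, V × V) :=
  (G.interedges A B).sigma fun e => edgesAvoiding G (G.interedges univ univ)
    (A ∪ B ∪ G.neighborFinset e.1) (A ∪ B ∪ G.neighborFinset e.2)

variable {a b x y : V}

lemma mem_joiningFwd : (⟨(a, x), (b, y)⟩ : Σ _ : V × V, V × V) ∈ joiningFwd A B G ↔
    (a ∈ A ∧ x ∉ B ∧ G.Adj a x) ∧ (b ∈ B ∧ y ∉ A ∧ G.Adj b y) ∧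
      ¬ G.Adj a b ∧ y ≠ x ∧ ¬ G.Adj x y := by
  simp only [joiningFwd, edgesAvoiding, mem_sigma, Finset.mem_sdiff, mem_union, mem_compl,
    SimpleGraph.mem_interedges_iff, SimpleGraph.mem_neighborFinset, mem_insert, mem_univ, true_and]
  tauto

lemma mem_splittingFwd : (⟨(a, x), (b, y)⟩ : Σ _ : V × V, V × V) ∈ splittingFwd A B G ↔
    (a ∈ A ∧ x ∈ B ∧ G.Adj a x) ∧ G.Adj b y ∧
      ((b ∉ A ∧ b ∉ B) ∧ ¬ G.Adj a b) ∧ (y ∉ A ∧ y ∉ B) ∧ ¬ G.Adj x y := by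
  simp only [splittingFwd, edgesAvoiding, mem_sigma, Finset.mem_sdiff, mem_union,
    SimpleGraph.mem_interedges_iff, SimpleGraph.mem_neighborFinset, mem_univ, true_and]
  tauto

lemma isSwitchable_of_mem_joiningFwd (hAB : Disjoint A B)
    (h : ⟨(a, x), (b, y)⟩ ∈ joiningFwd A B G) : IsSwitchable G a y b x := by
  obtain ⟨⟨ha, -, hax⟩, ⟨hb, hy, hby⟩, hab, hyx, hxy⟩ := mem_joiningFwd.1 h
  exact ⟨fun e => hy (e ▸ ha), hby.symm, hab, (disjoint_iff_ne.1 hAB a ha b hb).symm, hax,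
    fun e => hxy e.symm, hyx.symm⟩

lemma isSwitchable_of_mem_splittingFwd (h : ⟨(a, x), (b, y)⟩ ∈ splittingFwd A B G) :
    IsSwitchable G a y b x := by
  obtain ⟨⟨ha, hx, hax⟩, hby, ⟨hb, hab⟩, hy, hxy⟩ := mem_splittingFwd.1 h
  exact ⟨fun e => hy.1 (e ▸ ha), hby.symm, hab, fun e => hb.1 (e ▸ ha), hax, fun e => hxy e.symm,
    fun e => hy.2 (e ▸ hx)⟩

lemma card_interedges_switch_of_mem_joiningFwd (hAB : Disjoint A B)
    (h : ⟨(a, x), (b, y)⟩ ∈ joiningFwd A B G) :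
    #((switch G a y b x).interedges A B) ≤ #(G.interedges A B) + 2 := by
  obtain ⟨⟨ha, hx, -⟩, ⟨hb, hy, -⟩, -⟩ := mem_joiningFwd.1 h
  have hbA : b ∉ A := disjoint_right.1 hAB hb
  have haB : a ∉ B := disjoint_left.1 hAB ha
  have hsub : (switch G a y b x).interedges A B ⊆
      insert (a, b) (insert (x, y) (G.interedges A B)) := by
    rintro ⟨p, q⟩ hpq
    by_cases hpair : IsSwitchPair a y b x p q
    · simp only [IsSwitchPair, SimpleGraph.mem_interedges_iff] at hpair hpq
      grind
    · rw [SimpleGraph.mk_mem_interedges_iff, switch_adj_of_not_isSwitchPair hpair] at hpq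
      exact mem_insert_of_mem (mem_insert_of_mem (G.mk_mem_interedges_iff.2 hpq))
  grind [card_le_card hsub, card_insert_le]

lemma card_interedges_le_of_mem_splittingFwd (h : ⟨(a, x), (b, y)⟩ ∈ splittingFwd A B G) :
    #(G.interedges A B) ≤ #((switch G a y b x).interedges A B) + 2 := by
  obtain ⟨-, -, ⟨hb, -⟩, hy, -⟩ := mem_splittingFwd.1 h
  have hsub : G.interedges A B ⊆
      insert (a, x) (insert (x, a) ((switch G a y b x).interedges A B)) := by
    rintro ⟨p, q⟩ hpq
    by_cases hpair : IsSwitchPair a y b x p q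
    · simp only [IsSwitchPair, SimpleGraph.mem_interedges_iff] at hpair hpq
      grind
    · rw [SimpleGraph.mk_mem_interedges_iff, ← switch_adj_of_not_isSwitchPair hpair] at hpq
      exact mem_insert_of_mem (mem_insert_of_mem ((SimpleGraph.mk_mem_interedges_iff _).2 hpq))
  grind [card_le_card hsub, card_insert_le]

lemma mul_le_card_joiningFwd (hG : G.IsRegularOfDegree d) {k : ℕ} (hk : #(G.interedges A B) ≤ k)
    (hB : (k : ℝ) + (2 * d + 1) * d ≤ #B * d) :
    ((#A : ℝ) * d - k) * (#B * d - k - (2 * d + 1) * d) ≤ #(joiningFwd A B G) := by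
  have hedges (C D : Finset V) (hCD : #(G.interedges C D) ≤ k) :
      (#C : ℝ) * d - k ≤ #(G.interedges C Dᶜ) := by
    rw [sub_le_iff_le_add]
    exact_mod_cast (card_interedges_compl_add hG C D).ge.trans (by gcongr)
  refine mul_le_card_sigma (hedges A B hk) (fun e _ => ?_) (by linarith)
  have hBA := hedges B A (card_interedges_comm G B A ▸ hk)
  have havoid := le_card_edgesAvoiding hG (G.interedges B Aᶜ) (G.neighborFinset e.1)
    (insert e.2 (G.neighborFinset e.2))
  have hins : (#(insert e.2 (G.neighborFinset e.2)) : ℝ) ≤ d + 1 := by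
    exact_mod_cast (card_insert_le _ _).trans (Nat.succ_le_succ (hG e.2).le)
  have hnbr : (#(G.neighborFinset e.1) : ℝ) = d := mod_cast hG e.1
  have hforb : ((#(G.neighborFinset e.1) : ℝ) + #(insert e.2 (G.neighborFinset e.2))) * d ≤
      (2 * d + 1) * d := by
    gcongr ?_ * _
    linarith
  linarith

lemma mul_le_card_splittingFwd (hG : G.IsRegularOfDegree d) {k : ℕ} (hk : k ≤ #(G.interedges A B))
    (hV : 2 * (#A + #B + d) ≤ Fintype.card V) :
    (k : ℝ) * ((Fintype.card V - 2 * (#A + #B + d)) * d) ≤ #(splittingFwd A B G) := by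
  have hV' : 2 * ((#A : ℝ) + #B + d) ≤ Fintype.card V := by exact_mod_cast hV
  refine mul_le_card_sigma (by exact_mod_cast hk) (fun e _ => ?_)
    (mul_nonneg (by linarith) (by positivity))
  have hforb (v : V) : (#(A ∪ B ∪ G.neighborFinset v) : ℝ) ≤ #A + #B + d := by
    have hd : #(G.neighborFinset v) = d := hG v
    have hAB := card_union_le A B
    have hABv := card_union_le (A ∪ B) (G.neighborFinset v)
    exact_mod_cast (by lia : #(A ∪ B ∪ G.neighborFinset v) ≤ #A + #B + d)
  have havoid := le_card_edgesAvoiding hG (G.interedges univ univ)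
    (A ∪ B ∪ G.neighborFinset e.1) (A ∪ B ∪ G.neighborFinset e.2)
  rw [card_interedges_univ_right hG, card_univ, Nat.cast_mul, ← sub_mul] at havoid
  refine le_trans ?_ havoid
  gcongr
  linarith [hforb e.1, hforb e.2]

end CrossingSwitches

section CrossingTail

variable {n d : ℕ} {A B : Finset (Fin n)}

lemma regProb_card_interedges_le_mul_le (hAB : Disjoint A B) {k : ℕ}
    (hB : (k : ℝ) + (2 * d + 1) * d ≤ #B * d) :
    regProb n d (fun G => #(G.interedges A B) ≤ k) *
        (((#A : ℝ) * d - k) * (#B * d - k - (2 * d + 1) * d))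
      ≤ regProb n d (fun G => #(G.interedges A B) ≤ k + 2) * ((k + 2 : ℕ) * (n * d)) := by
  refine regProb_mul_le_of_moves (Φ := fun i G => switch G i.1.1 i.2.2 i.2.1 i.1.2)
    (Fwd := joiningFwd A B)
    (Rev := fun G => transposedPairs (G.interedges A B) (G.interedges univ univ))
    (fun i => (switch_involutive _ _ _ _).injective) ?_ ?_ ?_
  · rintro G hG hk ⟨⟨a, x⟩, b, y⟩ hi
    have hsw := isSwitchable_of_mem_joiningFwd hAB hi
    obtain ⟨⟨ha, -⟩, ⟨hb, -⟩, -⟩ := mem_joiningFwd.1 hi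
    refine ⟨hsw.isRegularOfDegree_switch hG, ?_, ?_⟩
    · exact (card_interedges_switch_of_mem_joiningFwd hAB hi).trans (by lia)
    · simp only [mem_transposedPairs, SimpleGraph.mem_interedges_iff, mem_univ, true_and]
      refine ⟨⟨ha, hb, (hsw.switch_adj b).2 (Or.inl rfl)⟩, ?_⟩
      rw [← SimpleGraph.mem_neighborFinset, hsw.neighborFinset_switch_right]
      exact mem_insert_self _ _
  · exact fun G hG hk => mul_le_card_joiningFwd hG hk hB
  · intro G hG hk
    rw [card_transposedPairs, card_interedges_univ_right hG, card_univ, Fintype.card_fin]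
    exact_mod_cast Nat.mul_le_mul_right _ hk

lemma regProb_le_card_interedges_mul_le {k : ℕ} (hn : 2 * (#A + #B + d) ≤ n) :
    regProb n d (fun G => k ≤ #(G.interedges A B)) * (k * ((n - 2 * (#A + #B + d)) * d))
      ≤ regProb n d (fun G => k ≤ #(G.interedges A B) + 2) * (#A * d * (#B * d)) := by
  refine regProb_mul_le_of_moves (Φ := fun i G => switch G i.1.1 i.2.2 i.2.1 i.1.2)
    (Fwd := splittingFwd A B)
    (Rev := fun G => transposedPairs (G.interedges A univ) (G.interedges B univ))
    (fun i => (switch_involutive _ _ _ _).injective) ?_ ?_ ?_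
  · rintro G hG hk ⟨⟨a, x⟩, b, y⟩ hi
    have hsw := isSwitchable_of_mem_splittingFwd hi
    obtain ⟨⟨ha, hx, -⟩, -⟩ := mem_splittingFwd.1 hi
    refine ⟨hsw.isRegularOfDegree_switch hG, ?_, ?_⟩
    · exact hk.trans (card_interedges_le_of_mem_splittingFwd hi)
    · simp only [mem_transposedPairs, SimpleGraph.mem_interedges_iff, mem_univ, true_and]
      refine ⟨⟨ha, (hsw.switch_adj b).2 (Or.inl rfl)⟩, hx, ?_⟩
      rw [← SimpleGraph.mem_neighborFinset, hsw.neighborFinset_switch_right]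
      exact mem_insert_self _ _
  · intro G hG hk
    simpa using mul_le_card_splittingFwd hG hk (by simpa using hn)
  · intro G hG _
    rw [card_transposedPairs, card_interedges_univ_right hG, card_interedges_univ_right hG]
    push_cast
    rfl

lemma two_mul_regProb_card_interedges_le (hd : 0 < d) (hAB : Disjoint A B) {b : ℝ} (hA : b ≤ #A)
    (hB : b ≤ #B) (hdb : 48 * (d : ℝ) ≤ b) {i : ℕ} (hi : 8 * ((i : ℝ) + 1) * n ≤ b ^ 2 * d) :
    2 * regProb n d (fun G => #(G.interedges A B) ≤ 2 * i)
      ≤ regProb n d (fun G => #(G.interedges A B) ≤ 2 * i + 2) := by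
  have hd1 : (1 : ℝ) ≤ d := by exact_mod_cast hd
  have hb : 0 < b := by linarith
  have hn : b ≤ n := hA.trans (by exact_mod_cast card_finset_fin_le A)
  have hn0 : (0 : ℝ) < n := hb.trans_le hn
  have hib : 8 * ((i : ℝ) + 1) ≤ b * d := by
    refine le_of_mul_le_mul_right ?_ hb
    calc 8 * ((i : ℝ) + 1) * b ≤ 8 * (i + 1) * n := by gcongr
      _ ≤ b * d * b := by linarith
  have hAd : b * d ≤ #A * d := by gcongr
  have hBd : b * d ≤ #B * d := by gcongr
  have hdd : 48 * (d : ℝ) * d ≤ b * d := by gcongr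
  have hstep := regProb_card_interedges_le_mul_le (d := d) hAB (k := 2 * i)
    (by push_cast; nlinarith)
  push_cast at hstep
  refine two_mul_le_of_mul_le_mul regProb_nonneg (by positivity) ?_ hstep
  calc 2 * ((2 * (i : ℝ) + 2) * (n * d)) = (8 * (i + 1) * n) * d / 2 := by ring
    _ ≤ (b ^ 2 * d) * d / 2 := by gcongr
    _ ≤ (3 / 4 * (b * d)) * (11 / 16 * (b * d)) := by nlinarith [sq_nonneg (b * d)]
    _ ≤ (#A * d - 2 * i) * (#B * d - 2 * i - (2 * d + 1) * d) := by
        gcongr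
        · nlinarith
        · linarith
        · nlinarith

theorem regProb_forall_not_adj_le (hd : 0 < d) (hAB : Disjoint A B) {b : ℝ} (hA : b ≤ #A)
    (hB : b ≤ #B) (hdb : 48 * (d : ℝ) ≤ b) {j : ℕ} (hj : 8 * (j : ℝ) * n ≤ b ^ 2 * d) :
    regProb n d (fun G => ∀ x ∈ A, ∀ y ∈ B, ¬ G.Adj x y) ≤ 1 / 2 ^ j := by
  have hchain := le_div_two_pow_add_of_two_mul_sub_le (N := 1) (T := 0)
    (fun i => regProb n d (fun G => #(G.interedges A B) ≤ 2 * i)) 0 j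
    (fun _ => regProb_le_one) le_rfl fun i _ hi => ?_
  · simp only [mul_zero, add_zero] at hchain
    refine (regProb_mono fun G _ hnone => ?_).trans hchain
    rw [Nat.le_zero, card_eq_zero, eq_empty_iff_forall_notMem]
    rintro ⟨x, y⟩ hxy
    rw [SimpleGraph.mk_mem_interedges_iff] at hxy
    exact hnone x hxy.1 y hxy.2.1 hxy.2.2
  · have hi' : (i : ℝ) + 1 ≤ j := by exact_mod_cast (by lia : i + 1 ≤ j)
    rw [sub_zero]
    exact two_mul_regProb_card_interedges_le hd hAB hA hB hdb
      (hj.trans' (by gcongr))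

lemma two_mul_regProb_le_card_interedges (hd : 0 < d) (hA : 0 < #A) (hB : 0 < #B)
    (hn : 8 * (#A + #B) ≤ n) (hdn : 8 * d ≤ n) {k : ℕ} (hk : 4 * (#A * #B * d : ℝ) ≤ k * n) :
    2 * regProb n d (fun G => k ≤ #(G.interedges A B))
      ≤ regProb n d (fun G => k ≤ #(G.interedges A B) + 2) := by
  have hn' : 8 * ((#A : ℝ) + #B) ≤ n := by exact_mod_cast hn
  have hdn' : 8 * (d : ℝ) ≤ n := by exact_mod_cast hdn
  refine two_mul_le_of_mul_le_mul regProb_nonneg (by positivity) ?_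
    (regProb_le_card_interedges_mul_le (by lia))
  calc 2 * (#A * d * (#B * d) : ℝ) = 4 * (#A * #B * d) * (d / 2) := by ring
    _ ≤ k * n * (d / 2) := by gcongr
    _ = k * (n / 2 * d) := by ring
    _ ≤ k * ((n - 2 * (#A + #B + d)) * d) := by
        gcongr
        linarith

theorem regProb_le_card_interedges_le (hd : 0 < d) (hA : 0 < #A) (hB : 0 < #B)
    (hn : 8 * (#A + #B) ≤ n) (hdn : 8 * d ≤ n) {k j : ℕ} (hjk : 2 * j ≤ k)
    (hk : 4 * (#A * #B * d : ℝ) ≤ (k - 2 * j) * n) :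
    regProb n d (fun G => k ≤ #(G.interedges A B)) ≤ 1 / 2 ^ j := by
  have hchain := le_div_two_pow_add_of_two_mul_sub_le (N := 1) (T := 0)
    (fun i => regProb n d (fun G => k - 2 * i ≤ #(G.interedges A B))) 0 j
    (fun _ => regProb_le_one) le_rfl fun i _ hi => ?_
  · simpa using hchain
  · have hi' : (i : ℝ) ≤ j := by exact_mod_cast (by lia : i ≤ j)
    have hdouble := two_mul_regProb_le_card_interedges hd hA hB hn hdn (k := k - 2 * i) <| by
      rw [Nat.cast_sub (by lia)]
      push_cast
      exact hk.trans (by gcongr)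
    rw [sub_zero]
    exact hdouble.trans (regProb_mono fun G _ h => by lia)

end CrossingTail

/-! ### Random colourings -/

section Colourings

variable {V κ : Type*} [Fintype V]

/-- The vertices of colour `j`. -/
noncomputable def colourClass (c : V → κ) (j : κ) : Finset V := {x | c x = j}

lemma mem_colourClass {c : V → κ} {j : κ} {x : V} : x ∈ colourClass c j ↔ c x = j := by
  simp [colourClass]

lemma disjoint_colourClass (c : V → κ) {i j : κ} (hij : i ≠ j) :
    Disjoint (colourClass c i) (colourClass c j) :=
  disjoint_left.2 fun _ hi hj => hij ((mem_colourClass.1 hi).symm.trans (mem_colourClass.1 hj))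

variable [DecidableEq V] [Fintype κ]

/-- Up to constant factors, `F` has as many vertices of colour `j` as expected of a uniformly random
colouring. -/
def IsBalanced (c : V → κ) (F : Finset V) (j : κ) : Prop :=
  (#F : ℝ) / (4 * Fintype.card κ) ≤ #(F ∩ colourClass c j) ∧
    (#(F ∩ colourClass c j) : ℝ) ≤ 3 * #F / Fintype.card κ

lemma sum_pow_card_inter_colourClass (F : Finset V) (j : κ) (t : ℝ) :
    ∑ c : V → κ, t ^ #(F ∩ colourClass c j) =
      (Fintype.card κ - 1 + t) ^ #F * Fintype.card κ ^ (Fintype.card V - #F) := by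
  let weight : V → κ → ℝ := fun x i => if x ∈ F ∧ i = j then t else 1
  have hweight (x : V) :
      ∑ i, weight x i = if x ∈ F then (Fintype.card κ : ℝ) - 1 + t else Fintype.card κ := by
    split_ifs with hx
    · rw [← sum_erase_add _ _ (mem_univ j),
        sum_congr rfl fun i hi => show weight x i = 1 from if_neg fun h => ne_of_mem_erase hi h.2]
      simp [weight, hx, card_erase_of_mem, Nat.cast_sub (Fintype.card_pos_iff.2 ⟨j⟩)]
    · simp [weight, hx]
  have hprod (c : V → κ) : t ^ #(F ∩ colourClass c j) = ∏ x, weight x (c x) := by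
    rw [prod_ite, prod_const, prod_const_one, mul_one]
    congr 2
    ext x
    simp [mem_colourClass]
  calc ∑ c : V → κ, t ^ #(F ∩ colourClass c j) = ∑ c : V → κ, ∏ x, weight x (c x) :=
        sum_congr rfl fun c _ => hprod c
    _ = ∏ x, ∑ i, weight x i := by rw [prod_univ_sum, Fintype.piFinset_univ]
    _ = _ := by
        simp only [hweight, prod_ite, prod_const, filter_mem_eq_inter, univ_inter]
        rw [← card_compl]
        congr 3
        ext x
        simp

lemma sum_pow_card_inter_colourClass_le (F : Finset V) (j : κ) {t : ℝ} (ht : 0 ≤ t) :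
    ∑ c : V → κ, t ^ #(F ∩ colourClass c j) ≤
      Fintype.card κ ^ Fintype.card V * Real.exp (#F * ((t - 1) / Fintype.card κ)) := by
  have hκ : (1 : ℝ) ≤ Fintype.card κ := by exact_mod_cast Fintype.card_pos_iff.2 ⟨j⟩
  have hbase : (Fintype.card κ : ℝ) - 1 + t ≤
      Fintype.card κ * Real.exp ((t - 1) / Fintype.card κ) := by
    calc (Fintype.card κ : ℝ) - 1 + t = Fintype.card κ * ((t - 1) / Fintype.card κ + 1) := by
          field_simp
          ring
      _ ≤ _ := by
          gcongr
          exact Real.add_one_le_exp _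
  rw [sum_pow_card_inter_colourClass]
  calc ((Fintype.card κ : ℝ) - 1 + t) ^ #F * Fintype.card κ ^ (Fintype.card V - #F)
      ≤ (Fintype.card κ * Real.exp ((t - 1) / Fintype.card κ)) ^ #F *
          Fintype.card κ ^ (Fintype.card V - #F) := by
        gcongr
    _ = Fintype.card κ ^ (#F + (Fintype.card V - #F)) *
          Real.exp ((t - 1) / Fintype.card κ) ^ #F := by
        rw [mul_pow, pow_add]
        ring
    _ = _ := by rw [Nat.add_sub_cancel' (card_le_univ F), ← Real.exp_nat_mul]

lemma card_filter_mul_le_sum {ι : Type*} [Fintype ι] (P : ι → Prop) {f : ι → ℝ} {a : ℝ}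
    (hf : ∀ i, 0 ≤ f i) (hP : ∀ i, P i → a ≤ f i) : #{i | P i} * a ≤ ∑ i, f i := by
  rw [← nsmul_eq_mul]
  exact (card_nsmul_le_sum _ _ _ fun i hi => hP i (mem_filter.1 hi).2).trans
    (sum_le_univ_sum_of_nonneg hf)

lemma card_inter_colourClass_lt_le (F : Finset V) (j : κ) :
    (#{c : V → κ | (#(F ∩ colourClass c j) : ℝ) < #F / (4 * Fintype.card κ)} : ℝ) ≤
      Fintype.card κ ^ Fintype.card V * Real.exp (-(#F / (4 * Fintype.card κ))) := by
  set μ : ℝ := #F / (4 * Fintype.card κ) with hμ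
  have hlow (k : ℕ) (hk : (k : ℝ) < μ) : Real.exp (-μ) ≤ (1 / 2) ^ k := by
    calc Real.exp (-μ) ≤ Real.exp (k * -Real.log 2) := by
          have : k * Real.log 2 ≤ k * 1 := by
            gcongr
            linarith [Real.log_two_lt_d9]
          gcongr
          linarith
      _ = (1 / 2) ^ k := by
          rw [Real.exp_nat_mul, Real.exp_neg, Real.exp_log (by norm_num), one_div]
  have hexp : Real.exp (#F * ((1 / 2 - 1) / Fintype.card κ)) = Real.exp (-μ) * Real.exp (-μ) := by
    rw [← Real.exp_add, hμ]
    ring_nf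
  refine le_of_mul_le_mul_right ?_ (Real.exp_pos (-μ))
  rw [mul_assoc, ← hexp]
  exact (card_filter_mul_le_sum _ (fun _ => by positivity) fun c hc => hlow _ hc).trans
    (sum_pow_card_inter_colourClass_le F j (by norm_num))

lemma card_lt_inter_colourClass_le (F : Finset V) (j : κ) :
    (#{c : V → κ | 3 * #F / Fintype.card κ < (#(F ∩ colourClass c j) : ℝ)} : ℝ) ≤
      Fintype.card κ ^ Fintype.card V * Real.exp (-(#F / (4 * Fintype.card κ))) := by
  set μ : ℝ := #F / (4 * Fintype.card κ) with hμ
  have hμ' : 3 * #F / (Fintype.card κ : ℝ) = 12 * μ := by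
    rw [hμ]
    ring
  have hhigh (k : ℕ) (hk : 12 * μ < k) : Real.exp (6 * μ) ≤ 2 ^ k := by
    calc Real.exp (6 * μ) ≤ Real.exp (k * Real.log 2) := by
          have : k * (1 / 2) ≤ k * Real.log 2 := by
            gcongr
            linarith [Real.log_two_gt_d9]
          exact Real.exp_le_exp.2 (by linarith)
      _ = 2 ^ k := by rw [Real.exp_nat_mul, Real.exp_log (by norm_num)]
  have hexp : Real.exp (#F * ((2 - 1) / Fintype.card κ)) ≤ Real.exp (-μ) * Real.exp (6 * μ) := by
    rw [← Real.exp_add]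
    gcongr
    have : 0 ≤ μ := by positivity
    calc (#F : ℝ) * ((2 - 1) / Fintype.card κ) = 4 * μ := by
          rw [hμ]
          ring
      _ ≤ -μ + 6 * μ := by linarith
  refine le_of_mul_le_mul_right ?_ (Real.exp_pos (6 * μ))
  rw [mul_assoc]
  calc _ ≤ ∑ c : V → κ, (2 : ℝ) ^ #(F ∩ colourClass c j) :=
        card_filter_mul_le_sum _ (fun _ => by positivity) fun c hc => hhigh _ (hμ' ▸ hc)
    _ ≤ _ := sum_pow_card_inter_colourClass_le F j (by norm_num)
    _ ≤ _ := by gcongr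

lemma card_not_isBalanced_le (F : Finset V) (j : κ) :
    (#{c : V → κ | ¬ IsBalanced c F j} : ℝ) ≤
      Fintype.card κ ^ Fintype.card V * (2 * Real.exp (-(#F / (4 * Fintype.card κ)))) := by
  have hunion : (#{c : V → κ | ¬ IsBalanced c F j} : ℝ) ≤
      #{c : V → κ | (#(F ∩ colourClass c j) : ℝ) < #F / (4 * Fintype.card κ)} +
        #{c : V → κ | 3 * #F / Fintype.card κ < (#(F ∩ colourClass c j) : ℝ)} := by
    simp only [IsBalanced, not_and_or, not_le, filter_or]
    exact_mod_cast card_union_le _ _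
  linarith [card_inter_colourClass_lt_le F j, card_lt_inter_colourClass_le F j]

lemma card_exists_not_isBalanced_le {ι : Type*} (I : Finset ι) (F : ι → Finset V) (j : ι → κ) :
    (#{c : V → κ | ∃ i ∈ I, ¬ IsBalanced c (F i) (j i)} : ℝ) ≤ Fintype.card κ ^ Fintype.card V *
      ∑ i ∈ I, 2 * Real.exp (-(#(F i) / (4 * Fintype.card κ))) := by
  have hunion : ({c : V → κ | ∃ i ∈ I, ¬ IsBalanced c (F i) (j i)} : Finset (V → κ)) =
      I.biUnion fun i => {c : V → κ | ¬ IsBalanced c (F i) (j i)} := by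
    ext c
    simp
  rw [hunion, mul_sum]
  calc _ ≤ ∑ i ∈ I, (#{c : V → κ | ¬ IsBalanced c (F i) (j i)} : ℝ) := by
        exact_mod_cast card_biUnion_le
    _ ≤ _ := sum_le_sum fun i _ => card_not_isBalanced_le (F i) (j i)

lemma exists_forall_isBalanced [Nonempty κ] {ι : Type*} (I : Finset ι) (F : ι → Finset V)
    (j : ι → κ) (hI : ∑ i ∈ I, 2 * Real.exp (-(#(F i) / (4 * Fintype.card κ))) < 1) :
    ∃ c : V → κ, ∀ i ∈ I, IsBalanced c (F i) (j i) := by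
  by_contra! hnone
  have hall : (#{c : V → κ | ∃ i ∈ I, ¬ IsBalanced c (F i) (j i)} : ℝ) =
      Fintype.card κ ^ Fintype.card V := by
    rw [filter_true_of_mem fun c _ => hnone c]
    simp
  have hpos : (0 : ℝ) < Fintype.card κ ^ Fintype.card V := by positivity
  nlinarith [card_exists_not_isBalanced_le I F j]

end Colourings

section RandomColouring

variable {n d : ℕ} {κ : Type*} [Fintype κ] [Nonempty κ]

lemma exists_regProb_le_of_card_le {ι : Type*} [Fintype ι] [Nonempty ι]
    {R : ι → SimpleGraph (Fin n) → Prop} {p : ℝ} (hp : 0 ≤ p)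
    (hR : ∀ G : SimpleGraph (Fin n), G.IsRegularOfDegree d → #{i | R i G} ≤ Fintype.card ι * p) :
    ∃ i, regProb n d (R i) ≤ p := by
  suffices hsum : ∑ i, regProb n d (R i) ≤ ∑ _i : ι, p by
    obtain ⟨i, -, hi⟩ := exists_le_of_sum_le univ_nonempty hsum
    exact ⟨i, hi⟩
  have hcount := sum_card_bipartiteAbove_eq_sum_card_bipartiteBelow (s := univ)
    (t := regularGraphs n d) R
  simp only [bipartiteAbove, bipartiteBelow] at hcount
  have hcard : ∑ i, (#{G ∈ regularGraphs n d | R i G} : ℝ) ≤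
      #(regularGraphs n d) * (Fintype.card ι * p) := by
    rw [← Nat.cast_sum, hcount, Nat.cast_sum, ← nsmul_eq_mul]
    exact sum_le_card_nsmul _ _ _ fun G hG => hR G (mem_regularGraphs.1 hG)
  simp only [regProb_eq_card_div_card, ← sum_div, sum_const, card_univ, nsmul_eq_mul]
  exact div_le_of_le_mul₀ (by positivity) (by positivity) (by linarith)

lemma exists_colouring_regProb_le (J : Finset κ) :
    ∃ c : Fin n → κ,
      regProb n d (fun G => ∃ v, ∃ j ∈ J, ¬ IsBalanced c (G.neighborFinset v) j) ≤
        n * #J * (2 * Real.exp (-(d / (4 * Fintype.card κ)))) := by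
  refine exists_regProb_le_of_card_le (by positivity) fun G hG => ?_
  have hcard (v : Fin n) : #(G.neighborFinset v) = d := hG v
  have hbad := card_exists_not_isBalanced_le (univ ×ˢ J) (fun i => G.neighborFinset i.1) Prod.snd
  simp only [Prod.exists, mem_product, mem_univ, true_and, hcard, sum_const, card_product,
    card_univ, Fintype.card_fin, nsmul_eq_mul, Nat.cast_mul] at hbad
  rw [Fintype.card_fun, Fintype.card_fin, Nat.cast_pow]
  convert hbad using 4

end RandomColouring

/-! ### Linking the root to disjoint connected sets -/

section Expansion

variable {V : Type*}

/-- Any two disjoint sets of at least `m` vertices are joined by an edge. -/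
def JoinsLargeSets (G : SimpleGraph V) (m : ℕ) : Prop :=
  ∀ A B : Finset V, Disjoint A B → m ≤ #A → m ≤ #B → ∃ a ∈ A, ∃ b ∈ B, G.Adj a b

/-- From a nonempty set `Y` of at most `m` vertices, fewer than `g` edges per vertex of `Y` lead to
any set that is not larger than `Y`. -/
def IsLocallySparse (G : SimpleGraph V) (m g : ℕ) : Prop :=
  ∀ Y Z : Finset V, 0 < #Y → #Y ≤ m → #Z ≤ #Y → #(G.interedges Y Z) < g * #Y

/-- `G` induces a connected graph on the nonempty set `D`. -/
def IsConnectedSet (G : SimpleGraph V) (D : Finset V) : Prop :=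
  ∃ x ∈ D, ∀ y ∈ D, (edgesWithin G D).Reachable x y

/-- No edge of `G` leads from `A` to the rest of `R`. -/
def IsClosedIn (G : SimpleGraph V) (R A : Finset V) : Prop :=
  ∀ y ∈ A, ∀ z ∈ R, z ∉ A → ¬ G.Adj y z

variable {G : SimpleGraph V} {m s : ℕ} {R : Finset V}

lemma IsClosedIn.union [DecidableEq V] {A B : Finset V} (hA : IsClosedIn G R A)
    (hB : IsClosedIn G R B) : IsClosedIn G R (A ∪ B) := by
  intro y hy z hz hzAB
  rw [mem_union, not_or] at hzAB
  rcases mem_union.1 hy with hy | hy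
  · exact hA y hy z hz hzAB.1
  · exact hB y hy z hz hzAB.2

lemma reachable_edgesWithin_insert [DecidableEq V] {D : Finset V} {x y z : V}
    (hD : ∀ w ∈ D, (edgesWithin G D).Reachable x w) (hy : y ∈ D) (hyz : G.Adj y z) :
    ∀ w ∈ insert z D, (edgesWithin G (insert z D)).Reachable x w := by
  have hold (w : V) (hw : w ∈ D) : (edgesWithin G (insert z D)).Reachable x w :=
    (hD w hw).mono (edgesWithin_mono (subset_insert z D))
  refine forall_mem_insert .. |>.2 ⟨(hold y hy).trans (SimpleGraph.Adj.reachable ?_), hold⟩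
  exact ⟨hyz, mem_insert_of_mem hy, mem_insert_self z D⟩

lemma exists_isClosedIn_card_lt (hs : 1 ≤ s)
    (hnone : ∀ D ⊆ R, #D = s → ¬ IsConnectedSet G D) {x : V} (hx : x ∈ R) :
    ∃ D ⊆ R, x ∈ D ∧ #D < s ∧ IsClosedIn G R D := by
  let grown : Finset (Finset V) :=
    {D ∈ R.powerset | x ∈ D ∧ #D ≤ s ∧ ∀ y ∈ D, (edgesWithin G D).Reachable x y}
  have hgrown : grown.Nonempty := ⟨{x}, by simp [grown, hx, hs]⟩
  obtain ⟨D, hD, hmax⟩ := exists_max_image grown card hgrown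
  obtain ⟨hDR, hxD, hDs, hconn⟩ :
      D ⊆ R ∧ x ∈ D ∧ #D ≤ s ∧ ∀ y ∈ D, (edgesWithin G D).Reachable x y := by
    simpa [grown] using hD
  have hlt : #D < s := hDs.lt_of_ne fun h => hnone D hDR h ⟨x, hxD, hconn⟩
  refine ⟨D, hDR, hxD, hlt, fun y hy z hz hzD hyz => ?_⟩
  have hcard := card_insert_of_notMem hzD
  have hins : insert z D ∈ grown := by
    simp only [grown, mem_filter, mem_powerset]
    exact ⟨insert_subset hz hDR, mem_insert_of_mem hxD, by lia,
      reachable_edgesWithin_insert hconn hy hyz⟩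
  have := hmax _ hins
  lia

lemma exists_isClosedIn_card_mem_Ico (hm : 0 < m) (hR : m ≤ #R)
    (hsmall : ∀ x ∈ R, ∃ D ⊆ R, x ∈ D ∧ #D ≤ m ∧ IsClosedIn G R D) :
    ∃ A ⊆ R, m ≤ #A ∧ #A < 2 * m ∧ IsClosedIn G R A := by
  let small : Finset (Finset V) := {A ∈ R.powerset | #A < m ∧ IsClosedIn G R A}
  have hmem (A : Finset V) : A ∈ small ↔ A ⊆ R ∧ #A < m ∧ IsClosedIn G R A := by simp [small]
  have hne : small.Nonempty := ⟨∅, (hmem ∅).2 ⟨empty_subset R, hm, by simp [IsClosedIn]⟩⟩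
  obtain ⟨A, hA, hmax⟩ := exists_max_image small card hne
  obtain ⟨hAR, hAm, hAclosed⟩ := (hmem A).1 hA
  obtain ⟨x, hx, hxA⟩ := exists_mem_notMem_of_card_lt_card (hAm.trans_le hR)
  obtain ⟨D, hDR, hxD, hDm, hDclosed⟩ := hsmall x hx
  refine ⟨A ∪ D, union_subset hAR hDR, ?_, ?_, hAclosed.union hDclosed⟩
  · by_contra! hlt
    have hgrow : #A < #(A ∪ D) := card_lt_card <|
      (ssubset_iff_of_subset subset_union_left).2 ⟨x, mem_union_right A hxD, hxA⟩
    exact hgrow.not_ge (hmax _ ((hmem _).2 ⟨union_subset hAR hDR, hlt, hAclosed.union hDclosed⟩))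
  · have := card_union_le A D
    lia

lemma JoinsLargeSets.exists_isConnectedSet (hG : JoinsLargeSets G m) (hs : 1 ≤ s) (hsm : s ≤ m)
    (hR : 3 * m ≤ #R) : ∃ D ⊆ R, #D = s ∧ IsConnectedSet G D := by
  by_contra! hnone
  obtain ⟨A, hAR, hmA, hAm, hclosed⟩ := exists_isClosedIn_card_mem_Ico (hs.trans hsm)
    (by lia) fun x hx =>
      let ⟨D, hDR, hxD, hDs, hD⟩ := exists_isClosedIn_card_lt hs hnone hx
      ⟨D, hDR, hxD, hDs.le.trans hsm, hD⟩
  have hcard := card_sdiff_add_card_eq_card hAR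
  obtain ⟨a, ha, b, hb, hab⟩ := hG A (R \ A) disjoint_sdiff hmA (by lia)
  rw [Finset.mem_sdiff] at hb
  exact hclosed a ha b hb.1 hb.2 hab

lemma JoinsLargeSets.exists_disjoint_isConnectedSet (hG : JoinsLargeSets G m) (hs : 1 ≤ s)
    (hsm : s ≤ m) (N : ℕ) (hR : 3 * m + N * s ≤ #R) :
    ∃ T : Fin N → Finset V, (∀ i, T i ⊆ R) ∧ (∀ i, #(T i) = s) ∧ (∀ i, IsConnectedSet G (T i)) ∧
      Pairwise fun i j => Disjoint (T i) (T j) := by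
  induction N generalizing R with
  | zero => exact ⟨Fin.elim0, Fin.rec0, Fin.rec0, Fin.rec0, Fin.rec0⟩
  | succ N ih =>
    obtain ⟨D, hDR, hDs, hD⟩ := hG.exists_isConnectedSet hs hsm (R := R) (by lia)
    have hcard := card_sdiff_add_card_eq_card hDR
    obtain ⟨T, hTR, hTs, hT, hdisj⟩ := ih (R := R \ D) (by rw [add_mul] at hR; lia)
    have hDT (i : Fin N) : Disjoint D (T i) := disjoint_of_subset_right (hTR i) disjoint_sdiff
    refine ⟨Fin.cons D T, Fin.cases hDR fun i => (hTR i).trans sdiff_subset, Fin.cases hDs hTs,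
      Fin.cases hD hT, ?_⟩
    refine Fin.cases (Fin.cases (absurd rfl) fun j _ => hDT j) fun i => Fin.cases
      (fun _ => (hDT i).symm) fun j hij => hdisj (ne_of_apply_ne Fin.succ hij)

end Expansion

section Linking

variable {V ι : Type*}

/-- `f` sends every vertex of `A ∪ R`, injectively, either to itself or to a neighbour of it within
`R`, or to the index of a set `T j` in which it has a neighbour. Following `f` from the vertices of
`A` thus gives vertex-disjoint paths ending in distinct sets `T j`. -/
structure IsLinking [DecidableEq V] (G : SimpleGraph V) (A R : Finset V) (T : ι → Finset V)
    (f : V → V ⊕ ι) : Prop where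
  injOn : Set.InjOn f ↑(A ∪ R)
  step : ∀ x ∈ A ∪ R, (∃ y ∈ R, (y = x ∨ G.Adj x y) ∧ f x = .inl y) ∨
    ∃ j, (∃ u ∈ T j, G.Adj x u) ∧ f x = .inr j

/-- `y` is on the path that starts in `a` and follows the vertex values of `f`. -/
def Follows (f : V → V ⊕ ι) : V → V → Prop := Relation.ReflTransGen fun x y => f x = .inl y

/-- The vertices followed from `a`, together with `B`. -/
noncomputable def linkingCore [Fintype V] [DecidableEq V] (f : V → V ⊕ ι) (a : V)
    (B : Finset V) : Finset V :=
  ({y | Follows f a y} : Finset V) ∪ B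

lemma mem_linkingCore [Fintype V] [DecidableEq V] {f : V → V ⊕ ι} {a y : V} {B : Finset V} :
    y ∈ linkingCore f a B ↔ Follows f a y ∨ y ∈ B := by
  simp [linkingCore]

namespace IsLinking

variable [DecidableEq V] {G : SimpleGraph V} {A R : Finset V} {T : ι → Finset V} {f : V → V ⊕ ι}
  {a a' r x y : V}

lemma mem_and_eq_or_adj (hf : IsLinking G A R T f) (hx : x ∈ A ∪ R) (hxy : f x = .inl y) :
    y ∈ R ∧ (y = x ∨ G.Adj x y) := by
  rcases hf.step x hx with ⟨z, hz, hadj, hxz⟩ | ⟨j, -, hxj⟩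
  · cases hxy.symm.trans hxz
    exact ⟨hz, hadj⟩
  · cases hxy.symm.trans hxj

lemma mem_of_follows (hf : IsLinking G A R T f) (ha : a ∈ A) (hay : Follows f a y) :
    y ∈ A ∪ R := by
  induction hay with
  | refl => exact mem_union_left R ha
  | tail _ hxy hx => exact mem_union_right A (hf.mem_and_eq_or_adj hx hxy).1

lemma eq_of_follows (hf : IsLinking G A R T f) (hAR : Disjoint A R) (ha : a ∈ A) (ha' : a' ∈ A)
    (hay : Follows f a y) (ha'y : Follows f a' y) : a = a' := by
  induction hay with
  | refl =>
    rcases ha'y.cases_tail with h | ⟨x, ha'x, hxa⟩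
    · exact h
    · exact absurd (hf.mem_and_eq_or_adj (hf.mem_of_follows ha' ha'x) hxa).1
        (disjoint_left.1 hAR ha)
  | @tail x y hax hxy ih =>
    have hx := hf.mem_of_follows ha hax
    rcases ha'y.cases_tail with rfl | ⟨x', ha'x', hx'y⟩
    · exact absurd (hf.mem_and_eq_or_adj hx hxy).1 (disjoint_left.1 hAR ha')
    · have hxx' : x = x' :=
        hf.injOn (mem_coe.2 hx) (mem_coe.2 (hf.mem_of_follows ha' ha'x')) (hxy.trans hx'y.symm)
      exact ih (hxx' ▸ ha'x')

lemma exists_follows_adj [Finite V] (hf : IsLinking G A R T f) (hAR : Disjoint A R) (ha : a ∈ A) :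
    ∃ x j, Follows f a x ∧ f x = .inr j ∧ ∃ u ∈ T j, G.Adj x u := by
  have := Fintype.ofFinite V
  by_contra! hnone
  -- Otherwise `f` maps the finite set of followed vertices injectively into itself minus `a`.
  let followed : Finset V := {x | Follows f a x}
  have hmem (x : V) : x ∈ followed ↔ Follows f a x := by simp [followed]
  have hmaps : ∀ x ∈ followed, f x ∈ (followed.erase a).map Function.Embedding.inl := by
    intro x hx
    rw [hmem] at hx
    rcases hf.step x (hf.mem_of_follows ha hx) with ⟨y, hy, -, hxy⟩ | ⟨j, ⟨u, hu, hxu⟩, hxj⟩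
    · rw [hxy]
      refine mem_map_of_mem _ (mem_erase.2 ⟨?_, (hmem y).2 (hx.tail hxy)⟩)
      rintro rfl
      exact disjoint_left.1 hAR ha hy
    · exact absurd hxu (hnone x j hx hxj u hu)
  have hle := card_le_card_of_injOn f hmaps fun x hx y hy => hf.injOn
    (hf.mem_of_follows ha ((hmem x).1 hx)) (hf.mem_of_follows ha ((hmem y).1 hy))
  rw [card_map] at hle
  exact (card_erase_lt_of_mem ((hmem a).2 .refl)).not_ge hle

lemma reachable_of_follows [Fintype V] (hf : IsLinking G A R T f) (ha : a ∈ A) (hra : G.Adj r a)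
    {B : Finset V} (hay : Follows f a y) :
    (edgesWithin G (insert r (linkingCore f a B))).Reachable y r := by
  have hcore {z : V} (hz : Follows f a z) : z ∈ insert r (linkingCore f a B) :=
    mem_insert_of_mem (mem_linkingCore.2 (.inl hz))
  induction hay with
  | refl => exact SimpleGraph.Adj.reachable ⟨hra.symm, hcore .refl, mem_insert_self _ _⟩
  | @tail x y hax hxy ih =>
    rcases (hf.mem_and_eq_or_adj (hf.mem_of_follows ha hax) hxy).2 with rfl | hadj
    · exact ih
    · exact (SimpleGraph.Adj.reachable (G := edgesWithin G (insert r (linkingCore f a B)))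
        ⟨hadj.symm, hcore (hax.tail hxy), hcore hax⟩).trans ih

lemma reachable_of_mem_linkingCore [Fintype V] (hf : IsLinking G A R T f) (ha : a ∈ A)
    (hra : G.Adj r a) {B : Finset V} (hB : IsConnectedSet G B) (hax : Follows f a x)
    (hxB : ∃ u ∈ B, G.Adj x u) (hy : y ∈ linkingCore f a B) :
    (edgesWithin G (insert r (linkingCore f a B))).Reachable y r := by
  rcases mem_linkingCore.1 hy with hay | hyB
  · exact hf.reachable_of_follows ha hra hay
  obtain ⟨z, -, hz⟩ := hB
  obtain ⟨u, hu, hxu⟩ := hxB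
  have hsub : B ⊆ insert r (linkingCore f a B) := fun w hw =>
    mem_insert_of_mem (mem_linkingCore.2 (.inr hw))
  have hyu := ((hz y hyB).symm.trans (hz u hu)).mono (edgesWithin_mono (G := G) hsub)
  have hux : (edgesWithin G (insert r (linkingCore f a B))).Adj u x :=
    ⟨hxu.symm, hsub hu, mem_insert_of_mem (mem_linkingCore.2 (.inl hax))⟩
  exact hyu.trans (hux.reachable.trans (hf.reachable_of_follows ha hra hax))

theorem exists_isCoreSystem [Finite V] (hf : IsLinking G A R T f)
    (hA : ∀ a ∈ A, G.Adj r a) (hAR : Disjoint A R) (hrR : r ∉ R) (hT : ∀ j, IsConnectedSet G (T j))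
    (hTdisj : Pairwise fun i j => Disjoint (T i) (T j)) (hrT : ∀ j, r ∉ T j)
    (hART : ∀ j, Disjoint (A ∪ R) (T j)) :
    ∃ D : A → Finset V, IsCoreSystem G r D ∧ ∀ a, ∃ j, T j ⊆ D a ∧ D a ⊆ (A ∪ R) ∪ T j := by
  have := Fintype.ofFinite V
  choose x j hax hxj hadj using fun a : A => hf.exists_follows_adj hAR a.2
  have hj {a a' : A} (hne : a ≠ a') : j a ≠ j a' := fun hjj => hne <| Subtype.ext <| by
    have hxx : x a = x a' := hf.injOn (hf.mem_of_follows a.2 (hax a))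
      (hf.mem_of_follows a'.2 (hax a')) (by rw [hxj, hxj, hjj])
    exact hf.eq_of_follows hAR a.2 a'.2 (hax a) (hxx ▸ hax a')
  have hsub (a : A) : linkingCore f a (T (j a)) ⊆ (A ∪ R) ∪ T (j a) := fun y hy =>
    mem_union.2 ((mem_linkingCore.1 hy).imp_left (hf.mem_of_follows a.2))
  have hr : r ∉ A ∪ R := fun h => (mem_union.1 h).elim (fun h => G.irrefl (hA r h)) hrR
  refine ⟨fun a => linkingCore f a (T (j a)), ⟨fun a a' hne => ?_, fun a h => ?_, fun a y hy => ?_⟩,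
    fun a => ⟨j a, fun y hy => mem_linkingCore.2 (.inr hy), hsub a⟩⟩
  · rw [disjoint_left]
    intro y hy hy'
    rcases mem_linkingCore.1 hy with hy | hy <;> rcases mem_linkingCore.1 hy' with hy' | hy'
    · exact hne (Subtype.ext (hf.eq_of_follows hAR a.2 a'.2 hy hy'))
    · exact disjoint_left.1 (hART _) (hf.mem_of_follows a.2 hy) hy'
    · exact disjoint_left.1 (hART _) (hf.mem_of_follows a'.2 hy') hy
    · exact disjoint_left.1 (hTdisj (hj hne)) hy hy'
  · exact (mem_union.1 (hsub a h)).elim hr (hrT _)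
  · exact hf.reachable_of_mem_linkingCore a.2 (hA a a.2) (hT _) (hax a) (hadj a) hy

end IsLinking

end Linking

section ExistsLinking

variable {V ι : Type*}

/-- The vertices of `R` that are in `Y` or adjacent to a vertex of `Y`. -/
noncomputable def closedNbrs (G : SimpleGraph V) (R Y : Finset V) : Finset V :=
  {z ∈ R | ∃ y ∈ Y, z = y ∨ G.Adj y z}

lemma mem_closedNbrs {G : SimpleGraph V} {R Y : Finset V} {z : V} :
    z ∈ closedNbrs G R Y ↔ z ∈ R ∧ ∃ y ∈ Y, z = y ∨ G.Adj y z := mem_filter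

/-- The indices of the sets `T j` that are joined to `Y` by an edge. -/
noncomputable def adjacentIndices [Fintype ι] (G : SimpleGraph V) (T : ι → Finset V)
    (Y : Finset V) : Finset ι :=
  {j | ∃ y ∈ Y, ∃ u ∈ T j, G.Adj y u}

variable {G : SimpleGraph V} {A R Y : Finset V} {m s g k : ℕ}

lemma IsLocallySparse.card_le_card_closedNbrs [Fintype V] [DecidableEq V]
    (hG : IsLocallySparse G m g) (hYm : #Y ≤ m)
    (hg : ∀ y ∈ Y, g ≤ #(G.neighborFinset y ∩ R)) : #Y ≤ #(closedNbrs G R Y) := by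
  rcases Y.eq_empty_or_nonempty with rfl | hY
  · simp
  by_contra! hlt
  refine (hG Y (closedNbrs G R Y) hY.card_pos hYm hlt.le).not_ge ?_
  rw [card_interedges_eq_sum, mul_comm, ← smul_eq_mul]
  refine card_nsmul_le_sum _ _ _ fun y hy => (hg y hy).trans (card_le_card fun z hz => ?_)
  simp only [mem_inter, SimpleGraph.mem_neighborFinset] at hz ⊢
  exact ⟨hz.1, mem_closedNbrs.2 ⟨hz.2, y, hy, .inr hz.1⟩⟩

lemma card_le_card_closedNbrs_add [DecidableEq V] (hY : Y ⊆ A ∪ R) :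
    #Y ≤ #(closedNbrs G R Y) + #A := by
  refine (card_le_card fun y hy => ?_).trans (card_union_le _ _)
  rcases mem_union.1 (hY hy) with hyA | hyR
  · exact mem_union_right _ hyA
  · exact mem_union_left _ (mem_closedNbrs.2 ⟨hyR, y, hy, .inl rfl⟩)

lemma JoinsLargeSets.le_card_adjacentIndices [Fintype ι] {T : ι → Finset V}
    (hG : JoinsLargeSets G m) (hYm : m ≤ #Y) (hT : ∀ j, #(T j) = s)
    (hTdisj : Pairwise fun i j => Disjoint (T i) (T j)) (hYT : ∀ j, Disjoint Y (T j))
    (hι : 2 * k ≤ Fintype.card ι) (hk : m ≤ k * s) : k ≤ #(adjacentIndices G T Y) := by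
  by_contra! hlt
  have hcompl : k ≤ #(adjacentIndices G T Y)ᶜ := by
    rw [card_compl]
    lia
  have hcard : #((adjacentIndices G T Y)ᶜ.biUnion T) = #(adjacentIndices G T Y)ᶜ * s := by
    rw [card_biUnion fun i _ j _ hij => hTdisj hij]
    simp [hT]
  obtain ⟨a, ha, b, hb, hab⟩ := hG Y ((adjacentIndices G T Y)ᶜ.biUnion T)
    ((disjoint_biUnion_right ..).2 fun j _ => hYT j) hYm
    (hcard ▸ hk.trans (Nat.mul_le_mul_right s hcompl))
  obtain ⟨j, hj, hbj⟩ := mem_biUnion.1 hb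
  exact mem_compl.1 hj (mem_filter.2 ⟨mem_univ j, a, ha, b, hbj, hab⟩)

lemma exists_isLinking [DecidableEq V] [Fintype ι] {T : ι → Finset V}
    (hHall : ∀ Y ⊆ A ∪ R, #Y ≤ #(closedNbrs G R Y) + #(adjacentIndices G T Y)) :
    ∃ f : V → V ⊕ ι, IsLinking G A R T f := by
  let targets (y : ↥(A ∪ R)) : Finset (V ⊕ ι) :=
    (closedNbrs G R {y.1}).disjSum (adjacentIndices G T {y.1})
  have hbiUnion (Y : Finset ↥(A ∪ R)) : Y.biUnion targets =
      (closedNbrs G R (Y.map (.subtype _))).disjSum (adjacentIndices G T (Y.map (.subtype _))) := by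
    ext (z | j)
    · simp [targets, mem_closedNbrs]
      grind
    · simp [targets, adjacentIndices]
  have hcard (Y : Finset ↥(A ∪ R)) : #Y ≤ #(Y.biUnion targets) := by
    rw [hbiUnion, card_disjSum, ← card_map (.subtype _)]
    exact hHall _ fun y hy => property_of_mem_map_subtype Y hy
  obtain ⟨f, hinj, hf⟩ := (all_card_le_biUnion_card_iff_exists_injective targets).1 hcard
  refine ⟨fun x => if hx : x ∈ A ∪ R then f ⟨x, hx⟩ else .inl x, fun x hx y hy hxy => ?_,
    fun x hx => ?_⟩
  · rw [mem_coe] at hx hy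
    simp only [hx, hy, dite_true] at hxy
    exact congrArg Subtype.val (hinj hxy)
  · simp only [hx, dite_true]
    have := hf ⟨x, hx⟩
    simp only [targets, mem_disjSum, mem_closedNbrs, adjacentIndices, mem_filter, mem_singleton,
      exists_eq_left, mem_univ, true_and] at this
    rcases this with ⟨y, ⟨hy, hxy⟩, hfx⟩ | ⟨j, hj, hfx⟩
    · exact .inl ⟨y, hy, hxy, hfx.symm⟩
    · exact .inr ⟨j, hj, hfx.symm⟩

theorem exists_isCoreSystem [Fintype V] [DecidableEq V] {r : V} {d : ℕ} {R₁ R₂ : Finset V}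
    (hA : ∀ a ∈ A, G.Adj r a) (hAd : #A = d) (hA₁ : Disjoint A R₁) (hA₂ : Disjoint A R₂)
    (h₁₂ : Disjoint R₁ R₂) (hr₁ : r ∉ R₁) (hr₂ : r ∉ R₂) (hG : JoinsLargeSets G m)
    (hsparse : IsLocallySparse G m g) (hs : 1 ≤ s) (hsm : s ≤ m) (hds : m ≤ d * s)
    (hR₁ : 3 * m + 2 * d * s ≤ #R₁) (hg : ∀ y ∈ A ∪ R₂, g ≤ #(G.neighborFinset y ∩ R₂)) :
    ∃ D : Fin d → Finset V, IsCoreSystem G r D ∧ (∀ i, s ≤ #(D i)) ∧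
      ∀ i, D i ⊆ A ∪ R₁ ∪ R₂ := by
  obtain ⟨T, hTR, hTs, hT, hTdisj⟩ := hG.exists_disjoint_isConnectedSet hs hsm (2 * d) hR₁
  have hART (j : Fin (2 * d)) : Disjoint (A ∪ R₂) (T j) := disjoint_union_left.2
    ⟨disjoint_of_subset_right (hTR j) hA₁, (disjoint_of_subset_left (hTR j) h₁₂).symm⟩
  obtain ⟨f, hf⟩ : ∃ f, IsLinking G A R₂ T f := exists_isLinking fun Y hY => by
    rcases le_total #Y m with hYm | hYm
    · have := hsparse.card_le_card_closedNbrs hYm fun y hy => hg y (hY hy)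
      lia
    · have := card_le_card_closedNbrs_add (G := G) hY
      have := hG.le_card_adjacentIndices hYm hTs hTdisj
        (fun j => disjoint_of_subset_left hY (hART j)) (by simp) hds
      lia
  obtain ⟨D, hD, hDT⟩ := hf.exists_isCoreSystem hA hA₂ hr₂ hT hTdisj
    (fun j hr => hr₁ (hTR j hr)) hART
  let e := A.equivFinOfCardEq hAd
  refine ⟨D ∘ e.symm, hD.comp e.symm.injective, fun i => ?_, fun i => ?_⟩
  · obtain ⟨j, hj, -⟩ := hDT (e.symm i)
    exact (hTs j).ge.trans (card_le_card hj)
  · obtain ⟨j, -, hj⟩ := hDT (e.symm i)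
    refine hj.trans (union_subset (union_subset ?_ subset_union_right)
      ((hTR j).trans (subset_union_right.trans subset_union_left)))
    exact subset_union_left.trans subset_union_left

end ExistsLinking

/-! ### Dense graphs: single neighbours of the root as cores -/

section SingletonCores

variable {n : ℕ} {G : SimpleGraph (Fin n)} {r : Fin n}

lemma card_missing_add_card_inter_le {V ι : Type*} [Fintype V] [DecidableEq V] [Fintype ι]
    {G : SimpleGraph V} {T : Finset V} {u : ι → V} (hu : Function.Injective u)
    (huT : ∀ i, u i ∈ T) (v : V) :
    #{i | Misses G {u i} v} + #(T ∩ G.neighborFinset v) ≤ #T := by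
  have hmissing : #{i | Misses G {u i} v} ≤ #(T \ G.neighborFinset v) := by
    refine card_le_card_of_injOn u (fun i hi => ?_) hu.injOn
    have hmiss : Misses G {u i} v := (mem_filter.1 hi).2
    simpa [huT i] using hmiss.2 (u i) (mem_singleton_self _)
  have hcard := card_sdiff_add_card_inter T (G.neighborFinset v)
  lia

lemma hasISTs_of_subset_neighborFinset {T : Finset (Fin n)} (hT : T ⊆ G.neighborFinset r) (K : ℕ)
    (hsmall : ∀ v ≠ r, ∀ u ∈ T, v ≠ u → ¬ G.Adj v u →
      K ≤ #((G.neighborFinset v ∩ G.neighborFinset u) \ T))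
    (hlarge : ∀ v ≠ r, ∀ S ⊆ T, #S = K → Misses G S v → #T ≤ #(relays G v S S)) :
    HasISTs G r #T := by
  let u (i : Fin #T) : Fin n := T.equivFin.symm i
  have huT (i) : u i ∈ T := (T.equivFin.symm i).2
  have hu : Function.Injective u := Subtype.val_injective.comp T.equivFin.symm.injective
  have hadj (i) : G.Adj r (u i) := by simpa using hT (huT i)
  have hD : IsCoreSystem G r fun i => {u i} :=
    ⟨fun i j hij => disjoint_singleton.2 (hu.ne hij), fun i => by simpa using (hadj i).ne,
      fun i x hx => by
        obtain rfl := mem_singleton.1 hx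
        exact SimpleGraph.Adj.reachable ⟨(hadj i).symm, by simp, by simp⟩⟩
  refine hasISTs_of_card_relays hD (Q := T) (fun i => singleton_subset_iff.2 (huT i)) K
    (fun v hv i hi => ?_) fun v hv S hS hmiss => ?_
  · refine (hsmall v hv (u i) (huT i) (by simpa using hi.1) (hi.2 _ (by simp))).trans
      (card_le_card fun w hw => mem_relays.2 ?_)
    simp only [Finset.mem_sdiff, mem_inter, SimpleGraph.mem_neighborFinset] at hw
    exact ⟨hw.1.1, hw.2, u i, mem_singleton_self _, hw.1.2.symm⟩
  · have hmiss' : Misses G (S.image u) v :=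
      ⟨fun h => by
        obtain ⟨i, hi, rfl⟩ := mem_image.1 h
        exact (hmiss i hi).1 (mem_singleton_self _),
        forall_mem_image.2 fun i hi => (hmiss i hi).2 _ (mem_singleton_self _)⟩
    have hlarge' := hlarge v hv (S.image u) (image_subset_iff.2 fun i _ => huT i)
      (by rw [card_image_of_injective _ hu, hS]) hmiss'
    have hsub : relays G v (S.image u) (S.image u) ⊆
        relays G v T (S.biUnion fun i => {u i}) ∪ (T ∩ G.neighborFinset v) := fun w hw => by
      rw [biUnion_singleton]
      obtain ⟨hvw, -, hw⟩ := mem_relays.1 hw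
      by_cases hwT : w ∈ T
      · simp [hwT, hvw]
      · exact mem_union_left _ (mem_relays.2 ⟨hvw, hwT, hw⟩)
    have hcard := (card_le_card hsub).trans (card_union_le _ _)
    have := card_missing_add_card_inter_le (G := G) hu huT v
    lia

lemma two_mul_degree_le_card_add_codegree {V : Type*} [Fintype V] [DecidableEq V]
    {G : SimpleGraph V} {d : ℕ} (hG : G.IsRegularOfDegree d) (u v : V) :
    2 * d ≤ Fintype.card V + codegree G u v := by
  have hunion := card_union_add_card_inter (G.neighborFinset u) (G.neighborFinset v)
  have hcard (v) : #(G.neighborFinset v) = d := hG v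
  rw [hcard, hcard] at hunion
  have := card_le_univ (G.neighborFinset u ∪ G.neighborFinset v)
  unfold codegree
  lia

theorem hasISTs_of_add_le_two_mul_degree {d t : ℕ} (hG : G.IsRegularOfDegree d)
    (ht : n + t ≤ 2 * d) : HasISTs G r t := by
  have hcodegree (u v) : t ≤ codegree G u v := by
    have := two_mul_degree_le_card_add_codegree hG u v
    rw [Fintype.card_fin] at this
    lia
  obtain ⟨T, hT, rfl⟩ := exists_subset_card_eq (s := G.neighborFinset r)
    ((hcodegree r r).trans (card_le_card inter_subset_left))
  refine hasISTs_of_subset_neighborFinset hT 1 (fun v _ u hu _ _ => ?_)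
    fun v _ S _ hS hmiss => ?_
  · have hproper : (G.neighborFinset v ∩ G.neighborFinset u) ∩ T ⊂ T :=
      Finset.ssubset_iff_subset_ne.2 ⟨inter_subset_right, fun h => by
        have := (mem_inter.1 (mem_inter.1 (h.symm ▸ hu)).1).2
        simp at this⟩
    have hcard := card_lt_card hproper
    have hsplit := card_sdiff_add_card_inter (G.neighborFinset v ∩ G.neighborFinset u) T
    have := hcodegree v u
    unfold codegree at this
    lia
  · obtain ⟨u, rfl⟩ := card_eq_one.1 hS
    refine (hcodegree v u).trans (card_le_card fun w hw => mem_relays.2 ?_)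
    simp only [mem_inter, SimpleGraph.mem_neighborFinset] at hw
    exact ⟨hw.1, by simpa using hw.2.ne', u, mem_singleton_self _, hw.2.symm⟩

end SingletonCores

/-! ### Degrees linear in `n` -/

section Estimates

variable {n : ℕ}

lemma one_le_log_natCast (hn : 3 ≤ n) : 1 ≤ Real.log n := by
  have hn' : (3 : ℝ) ≤ n := mod_cast hn
  rw [Real.le_log_iff_exp_le (by linarith)]
  linarith [Real.exp_one_lt_d9]

lemma exp_neg_le_one_div_pow {x : ℝ} (hn : 0 < n) {B : ℕ} (h : B * Real.log n ≤ x) :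
    Real.exp (-x) ≤ 1 / (n : ℝ) ^ B := by
  calc Real.exp (-x) ≤ Real.exp (-(B * Real.log n)) := Real.exp_le_exp.2 (by linarith)
    _ = 1 / (n : ℝ) ^ B := by
      rw [Real.exp_neg, Real.exp_nat_mul, Real.exp_log (mod_cast hn), one_div]

lemma one_div_two_pow_le_one_div_pow {B L : ℕ} (hn : 0 < n) (h : 2 * B * Real.log n ≤ L) :
    1 / (2 : ℝ) ^ L ≤ 1 / (n : ℝ) ^ B := by
  have hexp : 1 / (2 : ℝ) ^ L = Real.exp (-(L * Real.log 2)) := by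
    rw [Real.exp_neg, Real.exp_nat_mul, Real.exp_log two_pos, one_div]
  rw [hexp]
  refine exp_neg_le_one_div_pow hn ?_
  nlinarith [Real.log_two_gt_d9, Nat.cast_nonneg (α := ℝ) L]

lemma mul_le_mul_of_div_le {x y l C d : ℝ} (hy : 0 < y) (hl : 0 ≤ l) (hC : x / y ≤ C)
    (h : C * l ≤ d) : x * l ≤ y * d := by
  rw [div_le_iff₀ hy] at hC
  calc x * l ≤ C * y * l := by gcongr
    _ = y * (C * l) := by ring
    _ ≤ y * d := by gcongr

end Estimates

section UnionBounds

variable {n d : ℕ}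

lemma regProb_not_forall_codegree_lt_le {k₀ L B : ℕ} (hdn : d < n)
    (hk : ∀ k : ℕ, k₀ ≤ k → k < d → 2 * ((d : ℝ) - k) ^ 2 ≤ (k + 1) * (n - 2 * d + k - 1))
    (hL : 2 * ((B : ℝ) + 3) * Real.log n ≤ L) :
    regProb n d (fun G => ¬ ∀ u v, u ≠ v → codegree G u v < k₀ + L) ≤ 1 / (n : ℝ) ^ B := by
  have hn : 0 < n := by lia
  have hpair : ∀ p ∈ (univ : Finset (Fin n)).offDiag,
      regProb n d (fun G => k₀ + L ≤ codegree G p.1 p.2) ≤ n * (1 / (n : ℝ) ^ (B + 3)) := by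
    intro p hp
    refine (regProb_le_codegree_le (mem_offDiag.1 hp).2.2 L hdn hk).trans ?_
    rw [div_eq_mul_one_div]
    gcongr (n : ℝ) * ?_
    exact one_div_two_pow_le_one_div_pow (B := B + 3) hn (by push_cast; exact hL)
  calc _ ≤ regProb n d (fun G => ∃ p ∈ (univ : Finset (Fin n)).offDiag,
        k₀ + L ≤ codegree G p.1 p.2) := by
        refine regProb_mono fun G _ h => ?_
        push Not at h
        obtain ⟨u, v, huv, h⟩ := h
        exact ⟨(u, v), by simp [huv], h⟩
    _ ≤ #(univ : Finset (Fin n)).offDiag * (n * (1 / (n : ℝ) ^ (B + 3))) :=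
        regProb_exists_le_card_mul _ hpair
    _ ≤ (n * n : ℕ) * (n * (1 / (n : ℝ) ^ (B + 3))) := by
        gcongr
        rw [offDiag_card, card_univ, Fintype.card_fin]
        lia
    _ = 1 / (n : ℝ) ^ B := by
        have : (n : ℝ) ≠ 0 := mod_cast hn.ne'
        push_cast
        field_simp
        ring

lemma regProb_misses_and_card_relays_le {k j : ℕ} {c f : ℝ} (hd : 0 < d) (hf₀ : 0 ≤ f)
    (v : Fin n) (S : Finset (Fin n)) (hf : f + c + #S + 2 ≤ d)
    (hineq : 2 * (((k + j : ℕ) : ℝ) * (n * d)) ≤ (d - (k + j : ℕ)) * #S * (f * f)) :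
    regProb n d (fun G => Misses G S v ∧ #(relays G v S S) ≤ k) ≤
      1 / 2 ^ j + 2 * regProb n d (fun G => ¬ ∀ x y, x ≠ y → (codegree G x y : ℝ) ≤ c) := by
  refine (regProb_mono fun G hG h => ⟨⟨h.1, le_rfl, ?_⟩, h.2⟩).trans
    (regProb_card_relays_le (Q := fun _ => S) (X := fun _ => S) (v := v) (m := d) (b := #S)
      (T := fun G => ∀ x y, x ≠ y → (codegree G x y : ℝ) ≤ c)
      (fun _ => subset_rfl) (fun _ _ _ _ _ _ _ _ _ => ⟨rfl, rfl⟩) (fun _ hG => hG) (q := #S)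
      (fun G _ x _ => mod_cast card_le_card inter_subset_right) hf₀ hf (Nat.cast_nonneg _) hd hineq)
  have hdisj : Disjoint (G.neighborFinset v) S :=
    disjoint_left.2 fun w hw hwS => h.1.2 w hwS (by simpa using hw)
  rw [sdiff_eq_self_of_disjoint hdisj]
  exact hG v

-- There are at most `n ^ (K + 1)` choices of `v` and `S`.
lemma regProb_exists_misses_and_card_relays_le {K k j : ℕ} {c f : ℝ} (hd : 0 < d) (hf₀ : 0 ≤ f)
    (hc : regProb n d (fun G => ¬ ∀ x y, x ≠ y → (codegree G x y : ℝ) ≤ c) ≤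
      1 / (n : ℝ) ^ (K + 2))
    (hf : f + c + K + 2 ≤ d) (hj : 2 * ((K : ℝ) + 2) * Real.log n ≤ j)
    (hineq : 2 * (((k + j : ℕ) : ℝ) * (n * d)) ≤ (d - (k + j : ℕ)) * K * (f * f)) :
    regProb n d (fun G => ∃ v S, #S = K ∧ Misses G S v ∧ #(relays G v S S) ≤ k) ≤ 3 / n := by
  rcases n.eq_zero_or_pos with rfl | hn
  · refine (regProb_eq_zero fun G _ => ?_).trans_le (by simp)
    rintro ⟨v, -⟩
    exact v.elim0
  have hpair : ∀ p ∈ (univ : Finset (Fin n)) ×ˢ (univ : Finset (Fin n)).powersetCard K,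
      regProb n d (fun G => Misses G p.2 p.1 ∧ #(relays G p.1 p.2 p.2) ≤ k) ≤
        3 * (1 / (n : ℝ) ^ (K + 2)) := by
    intro p hp
    obtain rfl : #p.2 = K := (mem_powersetCard.1 (mem_product.1 hp).2).2
    have htail := regProb_misses_and_card_relays_le hd hf₀ p.1 p.2 hf hineq
    have hpow := one_div_two_pow_le_one_div_pow (B := #p.2 + 2) hn (by push_cast; exact hj)
    linarith
  calc _ ≤ regProb n d (fun G => ∃ p ∈ (univ : Finset (Fin n)) ×ˢ univ.powersetCard K,
        Misses G p.2 p.1 ∧ #(relays G p.1 p.2 p.2) ≤ k) := by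
        refine regProb_mono fun G _ ⟨v, S, hS, h⟩ => ⟨(v, S), ?_, h⟩
        simp [mem_powersetCard, hS]
    _ ≤ (n * n ^ K : ℕ) * (3 * (1 / (n : ℝ) ^ (K + 2))) := by
        refine (regProb_exists_le_card_mul _ hpair).trans ?_
        gcongr
        rw [card_product, card_powersetCard, card_univ, Fintype.card_fin]
        gcongr
        exact Nat.choose_le_pow n K
    _ = 3 / n := by
        have : (n : ℝ) ≠ 0 := mod_cast hn.ne'
        push_cast
        field_simp
        ring

end UnionBounds

section BalancedColouring

variable {n d : ℕ} {G : SimpleGraph (Fin n)} {κ : Type*} [Fintype κ] [Nonempty κ]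

lemma exists_forall_isBalanced_commonNbrs (hn : 3 ≤ n) (j : κ)
    (hG : ∀ u v, ¬ G.Adj u v → 12 * Fintype.card κ * Real.log n ≤ codegree G u v) :
    ∃ c : Fin n → κ, ∀ u v, ¬ G.Adj u v →
      IsBalanced c (G.neighborFinset u ∩ G.neighborFinset v) j := by
  let I : Finset (Fin n × Fin n) := {p | ¬ G.Adj p.1 p.2}
  have hexp : ∀ p ∈ I, 2 * Real.exp (-(#(G.neighborFinset p.1 ∩ G.neighborFinset p.2) /
      (4 * Fintype.card κ))) ≤ 2 * (1 / (n : ℝ) ^ 3) := by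
    intro p hp
    gcongr
    refine exp_neg_le_one_div_pow (by lia) ?_
    have hcodegree := hG p.1 p.2 (mem_filter.1 hp).2
    rw [le_div_iff₀ (by positivity)]
    refine le_trans (le_of_eq ?_) hcodegree
    push_cast
    ring
  have hsum : ∑ p ∈ I, 2 * Real.exp (-(#(G.neighborFinset p.1 ∩ G.neighborFinset p.2) /
      (4 * Fintype.card κ))) < 1 := by
    calc _ ≤ #I • (2 * (1 / (n : ℝ) ^ 3)) := sum_le_card_nsmul _ _ _ hexp
      _ ≤ (n * n : ℕ) * (2 * (1 / (n : ℝ) ^ 3)) := by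
          rw [nsmul_eq_mul]
          gcongr
          exact (card_le_univ I).trans_eq (by simp)
      _ = 2 / n := by
          have : (n : ℝ) ≠ 0 := mod_cast (by lia : n ≠ 0)
          push_cast
          field_simp
      _ < 1 := by
          have : (3 : ℝ) ≤ n := mod_cast hn
          rw [div_lt_one] <;> linarith
  obtain ⟨c, hc⟩ := exists_forall_isBalanced I _ (fun _ => j) hsum
  exact ⟨c, fun u v huv => hc (u, v) (by simp [I, huv])⟩

-- The singleton cores avoid one colour, and that colour supplies `K` relays to each of them.
lemma hasISTs_of_codegree_of_card_relays {r : Fin n} {t K : ℕ} {a : ℝ} (hn : 3 ≤ n)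
    (hG : G.IsRegularOfDegree d) (hcodegree : ∀ u v, ¬ G.Adj u v → a ≤ codegree G u v)
    (hlog : 12 * Fintype.card κ * Real.log n ≤ a) (hK : 4 * Fintype.card κ * (K : ℝ) ≤ a)
    (ht : t + 3 * (d : ℝ) / Fintype.card κ ≤ d)
    (hrelays : ∀ v S, #S = K → Misses G S v → t ≤ #(relays G v S S)) : HasISTs G r t := by
  have j : κ := Classical.arbitrary κ
  have hcard (v) : #(G.neighborFinset v) = d := hG v
  obtain ⟨c, hc⟩ := exists_forall_isBalanced_commonNbrs hn j
    fun u v huv => hlog.trans (hcodegree u v huv)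
  have hroots : t ≤ #(G.neighborFinset r \ colourClass c j) := by
    have hfew := (hc r r G.irrefl).2
    have hsplit := card_sdiff_add_card_inter (G.neighborFinset r) (colourClass c j)
    rw [inter_self, hcard] at hfew
    rw [hcard] at hsplit
    have hsplit' : (#(G.neighborFinset r \ colourClass c j) : ℝ) +
      #(G.neighborFinset r ∩ colourClass c j) = d := mod_cast hsplit
    have : (t : ℝ) ≤ #(G.neighborFinset r \ colourClass c j) := by linarith
    exact_mod_cast this
  obtain ⟨T, hT, rfl⟩ := exists_subset_card_eq hroots
  refine hasISTs_of_subset_neighborFinset (hT.trans sdiff_subset) K (fun v _ u _ _ hvu => ?_)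
    fun v _ S _ hS hmiss => hrelays v S hS hmiss
  have hmany : K ≤ #((G.neighborFinset v ∩ G.neighborFinset u) ∩ colourClass c j) := by
    have hKa : (K : ℝ) ≤ a / (4 * Fintype.card κ) := by
      rw [le_div_iff₀ (by positivity)]
      linarith
    have hcolour : a / (4 * Fintype.card κ) ≤ codegree G v u / (4 * Fintype.card κ) := by
      gcongr
      exact hcodegree v u hvu
    exact_mod_cast hKa.trans (hcolour.trans (hc v u hvu).1)
  refine hmany.trans (card_le_card fun w hw => ?_)
  obtain ⟨hw, hwj⟩ := mem_inter.1 hw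
  exact Finset.mem_sdiff.2 ⟨hw, fun hwT => (Finset.mem_sdiff.1 (hT hwT)).2 hwj⟩

end BalancedColouring

section LinearDegree

variable {n d K : ℕ} {c ε δ γ : ℝ}

lemma regProb_not_forall_codegree_le_sub_le {B : ℕ} (hn : 3 ≤ n) (hγ : 0 < γ)
    (hdγ : (d : ℝ) ≤ (1 - γ) * n) (hB : (2 * B + 10) * Real.log n ≤ γ / 8 * d) :
    regProb n d (fun G => ¬ ∀ u v, u ≠ v → (codegree G u v : ℝ) ≤ d - γ / 8 * d) ≤
      1 / (n : ℝ) ^ B := by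
  have hlog := one_le_log_natCast hn
  have hn' : (0 : ℝ) < n := mod_cast (by lia)
  have hγ₁ : γ ≤ 1 := by nlinarith [Nat.cast_nonneg (α := ℝ) d]
  have hdn : (d : ℝ) < n := by nlinarith
  have hlarge : 10 ≤ γ / 8 * d := by nlinarith [Nat.cast_nonneg (α := ℝ) B]
  let k₀ := ⌈d - 2 * (γ / 8 * d)⌉₊
  let L := ⌊γ / 8 * d⌋₊
  have hk₀ : d - 2 * (γ / 8 * d) ≤ k₀ := Nat.le_ceil _
  have hk₀' : k₀ < d - 2 * (γ / 8 * d) + 1 := Nat.ceil_lt_add_one (by nlinarith)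
  have hL : (L : ℝ) ≤ γ / 8 * d := Nat.floor_le (by positivity)
  have hL' : γ / 8 * d < L + 1 := Nat.lt_floor_add_one _
  refine (regProb_mono fun G _ => mt fun h u v huv => ?_).trans
    (regProb_not_forall_codegree_lt_le (k₀ := k₀) (L := L) (mod_cast hdn) (fun k hk hkd => ?_) ?_)
  · have : (codegree G u v : ℝ) + 1 ≤ k₀ + L := mod_cast h u v huv
    linarith
  · have hk' : (k₀ : ℝ) ≤ k := mod_cast hk
    have hkd' : (k : ℝ) ≤ d := mod_cast hkd.le
    have hhalf : (d : ℝ) / 2 ≤ k + 1 := by nlinarith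
    have hroom : γ * n / 4 ≤ (n : ℝ) - 2 * d + k - 1 := by
      have : γ / 8 * d ≤ γ / 8 * n := by gcongr
      linarith
    calc 2 * ((d : ℝ) - k) ^ 2 ≤ 2 * (2 * (γ / 8 * d)) ^ 2 := by
          have : (0 : ℝ) ≤ d - k := by linarith
          gcongr
          linarith
      _ = γ * d * (γ * d) / 8 := by ring
      _ ≤ γ * d * n / 8 := by
          have : γ * d ≤ n := by nlinarith
          gcongr
      _ = d / 2 * (γ * n / 4) := by ring
      _ ≤ _ := by gcongr
  · linarith

lemma codegree_eq_card_relays_singleton {V : Type*} [Fintype V] [DecidableEq V]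
    {G : SimpleGraph V} (u v : V) :
    codegree G u v = #(relays G u {v} {v}) := by
  refine congrArg card (Finset.ext fun w => ?_)
  simp only [mem_inter, SimpleGraph.mem_neighborFinset, mem_relays, mem_singleton, exists_eq_left]
  exact ⟨fun h => ⟨h.1, h.2.ne', h.2.symm⟩, fun h => ⟨h.1, h.2.2.symm⟩⟩

lemma regProb_not_forall_le_codegree_le (hn : 3 ≤ n) (hδ : 0 < δ) (hδ₁ : δ ≤ 1)
    (hδd : δ * n ≤ d) (hc : 0 < c) (hc₁ : c ≤ 1) (hcd : 6 ≤ c * d)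
    (hcodegree : regProb n d (fun G => ¬ ∀ u v, u ≠ v → (codegree G u v : ℝ) ≤ d - c * d) ≤
      1 / (n : ℝ) ^ 3)
    (hlog : 7 * Real.log n ≤ c ^ 2 * δ / 64 * d) :
    regProb n d (fun G => ¬ ∀ u v, u ≠ v → ¬ G.Adj u v → c ^ 2 * δ / 64 * d ≤ codegree G u v) ≤
      3 / n := by
  have hlog₁ := one_le_log_natCast hn
  have hd : (0 : ℝ) < d := by nlinarith
  obtain ⟨h, hh⟩ : ∃ h, h = c ^ 2 * δ / 64 := ⟨_, rfl⟩
  rw [← hh] at hlog ⊢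
  have hh₀ : 0 < h := by
    rw [hh]
    positivity
  have hhn : h * n ≤ c ^ 2 / 64 * d := by
    calc h * n = c ^ 2 / 64 * (δ * n) := by rw [hh]; ring
      _ ≤ c ^ 2 / 64 * d := by gcongr
  obtain ⟨k, hk, hk'⟩ : ∃ k : ℕ, (k : ℝ) ≤ h * d ∧ h * d < k + 1 :=
    ⟨_, Nat.floor_le (by positivity), Nat.lt_floor_add_one _⟩
  have hkd : ((k + k : ℕ) : ℝ) ≤ d / 2 := by
    have hc₂ : c ^ 2 * δ ≤ 1 := mul_le_one₀ (by nlinarith) hδ.le hδ₁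
    push_cast
    nlinarith
  refine (regProb_mono fun G _ => not_imp_comm.1 fun hfew u v huv hadj => ?_).trans
    (regProb_exists_misses_and_card_relays_le (K := 1) (k := k) (j := k)
      (c := d - c * d) (f := c * d / 2) (mod_cast hd) (by positivity) hcodegree
      (by push_cast; linarith) (by push_cast; linarith) ?_)
  · have hmany : k < codegree G u v := by
      rw [codegree_eq_card_relays_singleton]
      exact not_le.1 fun hle => hfew ⟨u, {v}, card_singleton v, by simp [Misses, huv, hadj], hle⟩
    have : (k : ℝ) + 1 ≤ codegree G u v := mod_cast hmany
    linarith
  · calc 2 * (((k + k : ℕ) : ℝ) * (n * d)) = 4 * (k * (n * d)) := by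
          push_cast
          ring
      _ ≤ 4 * (h * d * (n * d)) := by gcongr
      _ = 4 * (h * n) * d ^ 2 := by ring
      _ ≤ 4 * (c ^ 2 / 64 * d) * d ^ 2 := by gcongr
      _ ≤ (d - d / 2) * (1 : ℕ) * (c * d / 2 * (c * d / 2)) := by
          have : 0 ≤ c ^ 2 * (d : ℝ) ^ 3 := by positivity
          push_cast
          linarith
      _ ≤ _ := by gcongr

lemma regProb_not_forall_le_card_relays_le (hn : 3 ≤ n) (hε : 0 < ε) (hε₁ : ε < 1)
    (hδd : δ * n ≤ d) (hc : 0 < c) (hcd : 2 * (K + 2) ≤ c * d)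
    (hcodegree : regProb n d (fun G => ¬ ∀ u v, u ≠ v → (codegree G u v : ℝ) ≤ d - c * d) ≤
      1 / (n : ℝ) ^ (K + 2))
    (hK : 32 ≤ K * (ε * δ * c ^ 2)) (hlog : (8 * (K + 2) : ℝ) * Real.log n ≤ ε * d) :
    regProb n d (fun G => ¬ ∀ v S, #S = K → Misses G S v →
      ⌊(1 - ε) * (d : ℝ)⌋₊ ≤ #(relays G v S S)) ≤ 3 / n := by
  have hlog₁ := one_le_log_natCast hn
  have hd : (0 : ℝ) < d := by nlinarith [Nat.cast_nonneg (α := ℝ) K]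
  obtain ⟨e, he, he'⟩ : ∃ e : ℕ, (e : ℝ) ≤ ε * d / 2 ∧ ε * d / 2 < e + 1 :=
    ⟨_, Nat.floor_le (by positivity), Nat.lt_floor_add_one _⟩
  have hquarter : ε * d / 4 ≤ e := by nlinarith [Nat.cast_nonneg (α := ℝ) K]
  have hed : 2 * e ≤ d := by
    have : 2 * (e : ℝ) ≤ d := by nlinarith
    exact_mod_cast this
  have hde : d - 2 * e + e = d - e := by lia
  refine (regProb_mono fun G _ => not_imp_comm.1 fun h v S hS hmiss => ?_).trans
    (regProb_exists_misses_and_card_relays_le (K := K) (k := d - 2 * e) (j := e)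
      (c := d - c * d) (f := c * d / 2) (mod_cast hd) (by positivity) hcodegree (by linarith)
      (by linarith) ?_)
  · have hmany : d - 2 * e < #(relays G v S S) :=
      not_le.1 fun hle => h ⟨v, S, hS, hmiss, hle⟩
    refine Nat.floor_le_of_le ?_
    have : (d : ℝ) ≤ #(relays G v S S) + 2 * e := mod_cast (by lia)
    linarith
  · have hKe : 8 * (n : ℝ) ≤ e * K * c ^ 2 := by
      calc 8 * (n : ℝ) = 32 * n / 4 := by ring
        _ ≤ K * (ε * δ * c ^ 2) * n / 4 := by gcongr
        _ = ε * (δ * n) / 4 * K * c ^ 2 := by ring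
        _ ≤ ε * d / 4 * K * c ^ 2 := by gcongr
        _ ≤ e * K * c ^ 2 := by gcongr
    rw [hde, Nat.cast_sub (by lia)]
    calc 2 * (((d : ℝ) - e) * (n * d)) ≤ 2 * (d * (n * d)) := by
          gcongr
          linarith [Nat.cast_nonneg (α := ℝ) e]
      _ = 8 * n * (d ^ 2 / 4) := by ring
      _ ≤ e * K * c ^ 2 * (d ^ 2 / 4) := by gcongr
      _ = _ := by ring

lemma hasISTs_floor_of_codegree_of_card_relays {G : SimpleGraph (Fin n)} {r : Fin n} {q : ℕ}
    {h : ℝ} (hn : 3 ≤ n) (hε₁ : ε < 1) (hG : G.IsRegularOfDegree d) (hq : 3 ≤ q * ε) (hh : h ≤ 1)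
    (hcodegree : ∀ u v, u ≠ v → ¬ G.Adj u v → h * d ≤ codegree G u v)
    (hlog : 4 * q * (K + 3) * Real.log n ≤ h * d)
    (hrelays : ∀ v S, #S = K → Misses G S v → ⌊(1 - ε) * (d : ℝ)⌋₊ ≤ #(relays G v S S)) :
    HasISTs G r ⌊(1 - ε) * (d : ℝ)⌋₊ := by
  have hlog₁ := one_le_log_natCast hn
  have hd : (0 : ℝ) ≤ d := Nat.cast_nonneg d
  have hq₀ : 0 < q := Nat.pos_of_ne_zero fun h₀ => by
    rw [h₀] at hq
    norm_num at hq
  have : Nonempty (Fin q) := ⟨⟨0, hq₀⟩⟩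
  have hqK : (0 : ℝ) ≤ q * K := by positivity
  refine hasISTs_of_codegree_of_card_relays (κ := Fin q) (a := h * d) hn hG (fun u v huv => ?_)
    ?_ ?_ ?_ hrelays
  · by_cases heq : u = v
    · have hself : codegree G u v = d := by
        rw [← heq, codegree, inter_self]
        exact hG u
      rw [hself]
      nlinarith
    · exact hcodegree u v heq huv
  · rw [Fintype.card_fin]
    nlinarith
  · rw [Fintype.card_fin]
    nlinarith
  · have hcolour : 3 * (d : ℝ) / q ≤ ε * d := by
      rw [div_le_iff₀ (by positivity)]
      nlinarith
    have hfloor := Nat.floor_le (a := (1 - ε) * (d : ℝ)) (by nlinarith)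
    rw [Fintype.card_fin]
    linarith

theorem eventually_regProb_not_hasISTs_le_of_linear_degree (hε : 0 < ε) (hε₁ : ε < 1)
    (hδ : 0 < δ) (hγ : 0 < γ) :
    ∀ᶠ C : ℝ in atTop, ∀ n d : ℕ, 3 ≤ n → C * Real.log n ≤ d → δ * n ≤ d →
      (d : ℝ) ≤ (1 - γ) * n →
      regProb n d (fun G => ¬ ∀ r, HasISTs G r ⌊(1 - ε) * (d : ℝ)⌋₊) ≤ 6 / n := by
  obtain ⟨q, hq⟩ := exists_nat_gt (3 / ε)
  obtain ⟨K, hK⟩ := exists_nat_gt (32 / (ε * δ * (γ / 8) ^ 2))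
  rw [div_lt_iff₀ (by positivity)] at hq hK
  filter_upwards [eventually_ge_atTop ((2 * 3 + 10) / (γ / 8)),
    eventually_ge_atTop ((2 * (K + 2 : ℕ) + 10) / (γ / 8)),
    eventually_ge_atTop (7 / ((γ / 8) ^ 2 * δ / 64)), eventually_ge_atTop (8 * (K + 2) / ε),
    eventually_ge_atTop (4 * q * (K + 3) / ((γ / 8) ^ 2 * δ / 64))]
    with C hC₁ hC₂ hC₃ hC₄ hC₅ n d hn hCd hδd hdγ
  have hlog := one_le_log_natCast hn
  have hl : 0 ≤ Real.log n := by linarith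
  have hn' : (0 : ℝ) < n := mod_cast (by lia)
  have hγ₁ : γ ≤ 1 := by nlinarith [Nat.cast_nonneg (α := ℝ) d]
  have hδ₁ : δ ≤ 1 := by nlinarith
  have hfew₁ := regProb_not_forall_codegree_le_sub_le (B := 3) hn hγ hdγ
    (mul_le_mul_of_div_le (by positivity) hl hC₁ hCd)
  have hfew₂ := regProb_not_forall_codegree_le_sub_le hn hγ hdγ
    (mul_le_mul_of_div_le (by positivity) hl hC₂ hCd)
  have hcodegree := regProb_not_forall_le_codegree_le hn hδ hδ₁ hδd (by positivity) (by linarith)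
    (by nlinarith [mul_le_mul_of_div_le (by positivity) hl hC₁ hCd]) hfew₁
    (mul_le_mul_of_div_le (by positivity) hl hC₃ hCd)
  have hrelays := regProb_not_forall_le_card_relays_le hn hε hε₁ hδd (by positivity)
    (by
      have := mul_le_mul_of_div_le (by positivity) hl hC₂ hCd
      push_cast at this
      nlinarith [Nat.cast_nonneg (α := ℝ) K]) hfew₂ hK.le
    (mul_le_mul_of_div_le hε hl hC₄ hCd)
  calc _ ≤ _ := regProb_mono fun G hG => not_imp_comm.1 fun hgood r => ?_
    _ ≤ _ := regProb_or_le
    _ ≤ 3 / n + 3 / n := add_le_add hcodegree hrelays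
    _ = 6 / n := by ring
  obtain ⟨hcodegree, hrelays⟩ := not_or.1 hgood
  rw [not_not] at hcodegree hrelays
  exact hasISTs_floor_of_codegree_of_card_relays hn hε₁ hG hq.le
    (by nlinarith [mul_le_one₀ (by nlinarith : (γ / 8) ^ 2 ≤ 1) hδ.le hδ₁]) hcodegree
    (mul_le_mul_of_div_le (by positivity) hl hC₅ hCd) hrelays

end LinearDegree

/-! ### Expansion and local sparsity -/

section Expansion

variable {n d m g : ℕ}

lemma regProb_not_joinsLargeSets_le (hd : 0 < d) (hn : 0 < n) (hdm : 48 * (d : ℝ) ≤ m)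
    (hm : 32 * (n : ℝ) * n ≤ (m : ℝ) ^ 2 * d) :
    regProb n d (fun G => ¬ JoinsLargeSets G m) ≤ 1 / n := by
  let I : Finset (Finset (Fin n) × Finset (Fin n)) :=
    {p | Disjoint p.1 p.2 ∧ m ≤ #p.1 ∧ m ≤ #p.2}
  have hpair : ∀ p ∈ I, regProb n d (fun G => ∀ a ∈ p.1, ∀ b ∈ p.2, ¬ G.Adj a b) ≤
      1 / 2 ^ (4 * n) := by
    intro p hp
    obtain ⟨hdisj, hA, hB⟩ := (mem_filter.1 hp).2
    refine regProb_forall_not_adj_le (b := m) hd hdisj (mod_cast hA) (mod_cast hB) hdm ?_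
    push_cast
    linarith
  have hI : (#I : ℝ) ≤ 4 ^ n := by
    have : #I ≤ 2 ^ n * 2 ^ n := (card_le_univ _).trans (by simp)
    rw [← mul_pow] at this
    exact mod_cast this
  have hn4 : (n : ℝ) ≤ 4 ^ n := mod_cast (Nat.lt_pow_self (by norm_num)).le
  calc regProb n d (fun G => ¬ JoinsLargeSets G m)
      ≤ regProb n d (fun G => ∃ p ∈ I, ∀ a ∈ p.1, ∀ b ∈ p.2, ¬ G.Adj a b) :=
        regProb_mono fun G _ => not_imp_comm.1 fun hjoin A B hAB hA hB => by
          by_contra! hnone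
          exact hjoin ⟨(A, B), mem_filter.2 ⟨mem_univ _, hAB, hA, hB⟩, hnone⟩
    _ ≤ #I * (1 / 2 ^ (4 * n)) := regProb_exists_le_card_mul I hpair
    _ ≤ 4 ^ n * (1 / 2 ^ (4 * n)) := by gcongr
    _ = 1 / 4 ^ n := by
        rw [pow_mul, show (2 : ℝ) ^ 4 = 4 * 4 by norm_num, mul_pow]
        field_simp
    _ ≤ 1 / n := by gcongr

lemma sum_filter_nonempty_pow_card (V : Type*) [Fintype V] (a : ℝ) :
    ∑ Y : Finset V with Y.Nonempty, a ^ #Y = (a + 1) ^ Fintype.card V - 1 := by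
  have hall := Fintype.sum_pow_mul_eq_add_pow V a 1
  have hempty : ({Y | ¬ Y.Nonempty} : Finset (Finset V)) = {∅} := by
    ext Y
    simp
  rw [← sum_filter_add_sum_filter_not univ Finset.Nonempty, hempty] at hall
  rw [← hall]
  simp

lemma one_div_cube_add_one_pow_sub_one_le (hn : 0 < n) :
    (1 / (n : ℝ) ^ 3 + 1) ^ n - 1 ≤ 2 / (n : ℝ) ^ 2 := by
  have hn' : (1 : ℝ) ≤ n := mod_cast hn
  have hx : n * (1 / (n : ℝ) ^ 3) = 1 / (n : ℝ) ^ 2 := by field_simp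
  have hx₁ : |1 / (n : ℝ) ^ 2| ≤ 1 := by
    rw [abs_of_nonneg (by positivity), div_le_one (by positivity)]
    exact one_le_pow₀ hn'
  calc (1 / (n : ℝ) ^ 3 + 1) ^ n - 1 ≤ Real.exp (1 / (n : ℝ) ^ 3) ^ n - 1 := by
        gcongr
        exact Real.add_one_le_exp _
    _ = Real.exp (1 / (n : ℝ) ^ 2) - 1 := by rw [← Real.exp_nat_mul, hx]
    _ ≤ 2 * |1 / (n : ℝ) ^ 2| := (le_abs_self _).trans (Real.abs_exp_sub_one_le hx₁)
    _ = 2 / (n : ℝ) ^ 2 := by rw [abs_of_nonneg (by positivity), mul_one_div]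

lemma regProb_mul_card_le_card_interedges_le {Y Z : Finset (Fin n)} (hd : 0 < d) (hn : 3 ≤ n)
    (hmn : 16 * m ≤ n) (hdn : 8 * d ≤ n) (hg : 8 * m * d ≤ g * n) (hlog : 96 * Real.log n ≤ g)
    (hY : 0 < #Y) (hZ : 0 < #Z) (hYm : #Y ≤ m) (hZY : #Z ≤ #Y) :
    regProb n d (fun G => g * #Y ≤ #(G.interedges Y Z)) ≤
      (1 / (n : ℝ) ^ 3) ^ #Y * (1 / (n : ℝ) ^ 3) ^ #Z := by
  have hlog₁ := one_le_log_natCast hn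
  have hn' : (1 : ℝ) ≤ n := mod_cast (by lia)
  have hg96 : 96 ≤ g := by
    have : (96 : ℝ) ≤ g := by linarith
    exact mod_cast this
  have hgY : 96 ≤ g * #Y := hg96.trans (Nat.le_mul_of_pos_right g hY)
  refine (regProb_le_card_interedges_le (j := g * #Y / 4) hd hY hZ (by lia) hdn (by lia) ?_).trans
    ?_
  · have hZm : (#Z : ℝ) ≤ m := mod_cast hZY.trans hYm
    have hg' : 8 * (m : ℝ) * d ≤ g * n := mod_cast hg
    have hj : ((g * #Y / 4 : ℕ) : ℝ) ≤ g * #Y / 4 := by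
      simpa using Nat.cast_div_le (α := ℝ) (m := g * #Y) (n := 4)
    calc 4 * (#Y * #Z * d : ℝ) ≤ 4 * (#Y * m * d) := by gcongr
      _ = #Y / 2 * (8 * m * d) := by ring
      _ ≤ #Y / 2 * (g * n) := by gcongr
      _ = g * #Y / 2 * n := by ring
      _ ≤ _ := by
        gcongr
        push_cast
        linarith
  · have hj : (g : ℝ) * #Y ≤ 8 * (g * #Y / 4 : ℕ) := mod_cast (by lia : g * #Y ≤ 8 * (g * #Y / 4))
    have hlogY : 96 * Real.log n * #Y ≤ g * #Y := by gcongr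
    calc 1 / (2 : ℝ) ^ (g * #Y / 4) ≤ 1 / (n : ℝ) ^ (6 * #Y) :=
          one_div_two_pow_le_one_div_pow (by lia) (by push_cast at hj ⊢; linarith)
      _ = (1 / (n : ℝ) ^ 3) ^ #Y * (1 / (n : ℝ) ^ 3) ^ #Y := by
          rw [← pow_add, div_pow, one_pow, ← pow_mul]
          ring_nf
      _ ≤ _ := by
          gcongr (1 / (n : ℝ) ^ 3) ^ #Y * ?_
          refine pow_le_pow_of_le_one (by positivity) ?_ hZY
          rw [div_le_one (by positivity)]
          exact one_le_pow₀ hn'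

lemma exists_mul_card_le_card_interedges_of_not_isLocallySparse {V : Type*}
    {G : SimpleGraph V} (hg : 0 < g) (hG : ¬ IsLocallySparse G m g) :
    ∃ Y Z : Finset V, Y.Nonempty ∧ Z.Nonempty ∧ #Y ≤ m ∧ #Z ≤ #Y ∧
      g * #Y ≤ #(G.interedges Y Z) := by
  simp only [IsLocallySparse, not_forall, not_lt] at hG
  obtain ⟨Y, Z, hY, hYm, hZY, hmany⟩ := hG
  refine ⟨Y, Z, card_pos.1 hY, ?_, hYm, hZY, hmany⟩
  rw [nonempty_iff_ne_empty]
  rintro rfl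
  exact hmany.not_gt (by simpa [SimpleGraph.interedges, Rel.interedges] using ⟨hg, card_pos.1 hY⟩)

lemma regProb_not_isLocallySparse_le (hd : 0 < d) (hn : 3 ≤ n) (hmn : 16 * m ≤ n) (hdn : 8 * d ≤ n)
    (hg : 8 * m * d ≤ g * n) (hlog : 96 * Real.log n ≤ g) :
    regProb n d (fun G => ¬ IsLocallySparse G m g) ≤ 1 / n := by
  let N : Finset (Finset (Fin n)) := {Y | Y.Nonempty}
  let I := {p ∈ N ×ˢ N | #p.1 ≤ m ∧ #p.2 ≤ #p.1}
  let a := 1 / (n : ℝ) ^ 3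
  have hn' : (3 : ℝ) ≤ n := mod_cast hn
  have hg₀ : 0 < g := by
    have : (0 : ℝ) < g := by linarith [one_le_log_natCast hn]
    exact mod_cast this
  have hsub : ∀ G : SimpleGraph (Fin n), ¬ IsLocallySparse G m g →
      ∃ p ∈ I, g * #p.1 ≤ #(G.interedges p.1 p.2) := by
    intro G hG
    obtain ⟨Y, Z, hY, hZ, hYm, hZY, hmany⟩ :=
      exists_mul_card_le_card_interedges_of_not_isLocallySparse hg₀ hG
    exact ⟨(Y, Z), by simp [I, N, hY, hZ, hYm, hZY], hmany⟩
  calc regProb n d (fun G => ¬ IsLocallySparse G m g)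
      ≤ ∑ p ∈ I, regProb n d (fun G => g * #p.1 ≤ #(G.interedges p.1 p.2)) :=
        (regProb_mono fun G _ => hsub G).trans (regProb_exists_le I _)
    _ ≤ ∑ p ∈ I, a ^ #p.1 * a ^ #p.2 := by
        refine sum_le_sum fun p hp => ?_
        simp only [I, N, mem_filter, mem_product, mem_univ, true_and] at hp
        obtain ⟨⟨hY, hZ⟩, hYm, hZY⟩ := hp
        exact regProb_mul_card_le_card_interedges_le hd hn hmn hdn hg hlog hY.card_pos hZ.card_pos
          hYm hZY
    _ ≤ ∑ p ∈ N ×ˢ N, a ^ #p.1 * a ^ #p.2 :=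
        sum_le_sum_of_subset_of_nonneg (filter_subset _ _) fun _ _ _ => by positivity
    _ = ((a + 1) ^ n - 1) ^ 2 := by
        simp only [sum_product, ← sum_mul_sum, N, sum_filter_nonempty_pow_card, Fintype.card_fin,
          sq]
    _ ≤ (2 / (n : ℝ) ^ 2) ^ 2 := by
        have : (1 : ℝ) ≤ (a + 1) ^ n := one_le_pow₀ (le_add_of_nonneg_left (by positivity))
        have hle := one_div_cube_add_one_pow_sub_one_le (n := n) (by lia)
        exact pow_le_pow_left₀ (by linarith) hle 2
    _ ≤ 1 / n := by
        rw [div_pow, div_le_div_iff₀ (by positivity) (by positivity)]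
        have : (3 : ℝ) ^ 3 ≤ (n : ℝ) ^ 3 := by gcongr
        nlinarith

end Expansion

/-! ### Cores determined by an explored set -/

section ExploredCores

variable {V : Type*} {d s : ℕ}

lemma edgesWithin_switch {G : SimpleGraph V} {Q : Finset V} {w w' x z : V} (hw : w ∉ Q)
    (hw' : w' ∉ Q) :
    edgesWithin (switch G w w' x z) Q = edgesWithin G Q := by
  ext a b
  refine and_congr_left fun ⟨ha, hb⟩ => switch_adj_of_not_isSwitchPair ?_
  rintro (⟨rfl | rfl, -⟩ | ⟨rfl | rfl, -⟩) <;> contradiction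

variable [DecidableEq V]

/-- `D` is a core system of `H` rooted at `r` whose cores lie in `Q` and have at least `s`
vertices. -/
structure IsLargeCoreSystem (H : SimpleGraph V) (r : V) (Q : Finset V) (s : ℕ)
    (D : Fin d → Finset V) : Prop extends IsCoreSystem H r D where
  le_card : ∀ i, s ≤ #(D i)
  subset : ∀ i, D i ⊆ Q

/-- A choice of `d` large cores of `H` inside `Q`, all of them empty if there is none. -/
noncomputable def chosenCores (H : SimpleGraph V) (r : V) (Q : Finset V) (d s : ℕ) :
    Fin d → Finset V :=
  if h : ∃ D : Fin d → Finset V, IsLargeCoreSystem H r Q s D then h.choose else fun _ => ∅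

lemma isLargeCoreSystem_chosenCores {H : SimpleGraph V} {r : V} {Q : Finset V}
    (h : ∃ D : Fin d → Finset V, IsLargeCoreSystem H r Q s D) :
    IsLargeCoreSystem H r Q s (chosenCores H r Q d s) := by
  rw [chosenCores, dif_pos h]
  exact h.choose_spec

lemma chosenCores_subset (H : SimpleGraph V) (r : V) (Q : Finset V) (d s : ℕ) (i : Fin d) :
    chosenCores H r Q d s i ⊆ Q.erase r := by
  by_cases h : ∃ D : Fin d → Finset V, IsLargeCoreSystem H r Q s D
  · have hD := isLargeCoreSystem_chosenCores h
    exact subset_erase.2 ⟨hD.subset i, hD.root_notMem i⟩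
  · rw [chosenCores, dif_neg h]
    exact empty_subset _

lemma isLargeCoreSystem_edgesWithin_iff {G : SimpleGraph V} {r : V} {Q : Finset V}
    (hr : r ∈ Q) {D : Fin d → Finset V} :
    IsLargeCoreSystem (edgesWithin G Q) r Q s D ↔ IsLargeCoreSystem G r Q s D := by
  have hwithin (hD : ∀ i, D i ⊆ Q) (i : Fin d) :
      edgesWithin (edgesWithin G Q) (insert r (D i)) = edgesWithin G (insert r (D i)) := by
    ext a b
    have hsub := insert_subset hr (hD i)
    exact ⟨fun h => ⟨h.1.1, h.2⟩, fun h => ⟨⟨h.1, hsub h.2.1, hsub h.2.2⟩, h.2⟩⟩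
  constructor
  · rintro ⟨⟨hdisj, hroot, hreach⟩, hcard, hsub⟩
    exact ⟨⟨hdisj, hroot, fun i => by simpa only [hwithin hsub] using hreach i⟩, hcard, hsub⟩
  · rintro ⟨⟨hdisj, hroot, hreach⟩, hcard, hsub⟩
    exact ⟨⟨hdisj, hroot, fun i => by simpa only [hwithin hsub] using hreach i⟩, hcard, hsub⟩

variable [Fintype V]

/-- The vertices that may be used by the cores: the reservoir `P`, the root `r` and its
neighbours. -/
noncomputable def exploredSet (P : Finset V) (r : V) (G : SimpleGraph V) : Finset V :=
  insert r (P ∪ G.neighborFinset r)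

/-- Cores in `exploredSet P r G`, chosen from the edges of `G` inside that set alone so that
switchings elsewhere do not affect them. -/
noncomputable def exploredCores (P : Finset V) (r : V) (d s : ℕ) (G : SimpleGraph V) :
    Fin d → Finset V :=
  chosenCores (edgesWithin G (exploredSet P r G)) r (exploredSet P r G) d s

variable {G : SimpleGraph V} {P : Finset V} {r w w' x z : V}

lemma root_mem_exploredSet : r ∈ exploredSet P r G := mem_insert_self _ _

lemma isLargeCoreSystem_exploredCores
    (h : ∃ D : Fin d → Finset V, IsLargeCoreSystem G r (exploredSet P r G) s D) :
    IsLargeCoreSystem G r (exploredSet P r G) s (exploredCores P r d s G) := by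
  rw [← isLargeCoreSystem_edgesWithin_iff root_mem_exploredSet]
  refine isLargeCoreSystem_chosenCores (h.imp fun D hD => ?_)
  rwa [isLargeCoreSystem_edgesWithin_iff root_mem_exploredSet]

lemma biUnion_exploredCores_subset (S : Finset (Fin d)) :
    S.biUnion (exploredCores P r d s G) ⊆ (exploredSet P r G).erase r :=
  biUnion_subset.2 fun i _ => chosenCores_subset _ _ _ _ _ i

lemma card_neighborFinset_inter_exploredSet_le (y : V) :
    #(G.neighborFinset y ∩ exploredSet P r G) ≤
      #(G.neighborFinset y ∩ P) + codegree G y r + 1 := by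
  have hsub : G.neighborFinset y ∩ exploredSet P r G ⊆
      insert r (G.neighborFinset y ∩ P ∪ G.neighborFinset y ∩ G.neighborFinset r) := by
    rw [exploredSet, ← inter_union_distrib_left, insert_inter_distrib]
    exact inter_subset_inter_right (subset_insert _ _)
  calc _ ≤ _ := card_le_card hsub
    _ ≤ _ := card_insert_le _ _
    _ ≤ _ := Nat.succ_le_succ (card_union_le _ _)

lemma exploredSet_switch (h : IsSwitchable G w w' x z) (hw : w ∉ exploredSet P r G)
    (hw' : w' ∉ exploredSet P r G) (hx : x ≠ r) :
    exploredSet P r (switch G w w' x z) = exploredSet P r G := by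
  have hz : r ≠ z := by
    rintro rfl
    exact hw (by simp [exploredSet, h.adj_right.symm])
  have hrw : r ≠ w := fun e => hw (e ▸ root_mem_exploredSet)
  have hrw' : r ≠ w' := fun e => hw' (e ▸ root_mem_exploredSet)
  rw [exploredSet, neighborFinset_switch_of_ne hrw hrw' hx.symm hz, exploredSet]

lemma isSwitchInvariant_exploredCores {n : ℕ} (P : Finset (Fin n)) (r : Fin n)
    (S : Finset (Fin d)) :
    IsSwitchInvariant (exploredSet P r) fun G => S.biUnion (exploredCores P r d s G) := by
  intro G w w' x z h hw hw' hx
  have hQ := exploredSet_switch h hw hw' (ne_of_mem_erase (biUnion_exploredCores_subset S hx))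
  refine ⟨hQ, ?_⟩
  simp only [exploredCores, hQ, edgesWithin_switch hw hw']

lemma exists_isLargeCoreSystem_exploredSet {m g : ℕ} {R₁ R₂ : Finset V}
    (hreg : G.IsRegularOfDegree d) (h₁₂ : Disjoint R₁ R₂) (hG : JoinsLargeSets G m)
    (hsparse : IsLocallySparse G m g) (hs : 1 ≤ s) (hsm : s ≤ m) (hds : m ≤ d * s)
    (hR₁ : 3 * m + 2 * d * s + d + 1 ≤ #R₁)
    (hg : ∀ y ≠ r, g + codegree G y r + 1 ≤ #(G.neighborFinset y ∩ R₂)) :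
    ∃ D : Fin d → Finset V, IsLargeCoreSystem G r (exploredSet (R₁ ∪ R₂) r G) s D := by
  let N := insert r (G.neighborFinset r)
  have hdisj (R : Finset V) : Disjoint (G.neighborFinset r) (R \ N) :=
    disjoint_sdiff.mono_left (subset_insert _ _)
  have hcardR₁ : 3 * m + 2 * d * s ≤ #(R₁ \ N) := by
    have hN : #N ≤ d + 1 := (card_insert_le _ _).trans_eq (congrArg (· + 1) (hreg r))
    have := card_le_card_sdiff_add_card (s := R₁) (t := N)
    lia
  have hnbrs : ∀ y ∈ G.neighborFinset r ∪ R₂ \ N, g ≤ #(G.neighborFinset y ∩ (R₂ \ N)) := by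
    intro y hy
    have hyr : y ≠ r := by
      rintro rfl
      simp [N] at hy
    have hsplit : G.neighborFinset y ∩ R₂ ⊆
        G.neighborFinset y ∩ (R₂ \ N) ∪ G.neighborFinset y ∩ exploredSet ∅ r G := by
      simp only [exploredSet, empty_union, ← inter_union_distrib_left, sdiff_union_self_eq_union, N]
      exact inter_subset_inter_left subset_union_left
    have hcard := (card_le_card hsplit).trans (card_union_le _ _)
    have hexplored := card_neighborFinset_inter_exploredSet_le (G := G) (P := ∅) (r := r) y
    rw [inter_empty, card_empty] at hexplored
    have hgy := hg y hyr
    lia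
  obtain ⟨D, hD, hcard, hsub⟩ := exists_isCoreSystem (fun a ha => by simpa using ha) (hreg r)
    (hdisj R₁) (hdisj R₂) (h₁₂.mono sdiff_subset sdiff_subset) (by simp [N]) (by simp [N]) hG
    hsparse hs hsm hds hcardR₁ hnbrs
  refine ⟨D, hD, hcard, fun i => (hsub i).trans fun x hx => ?_⟩
  simp only [exploredSet, mem_union, Finset.mem_sdiff, mem_insert] at hx ⊢
  tauto

end ExploredCores

/-! ### The sparse regime -/

section FewRelays

variable {n d s K : ℕ} {P : Finset (Fin n)} {T : SimpleGraph (Fin n) → Prop}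

lemma regProb_card_relays_exploredCores_le {m b k j : ℕ} (hd : 20 ≤ d)
    (hT₁ : ∀ G, T G → ∀ u v, u ≠ v → (codegree G u v : ℝ) ≤ d / 100)
    (hT₂ : ∀ G, T G → ∀ v, (#(G.neighborFinset v ∩ P) : ℝ) ≤ d / 10)
    (r v : Fin n) (S : Finset (Fin d))
    (hineq : 8 * (((k + j : ℕ) : ℝ) * n) ≤ (m - (k + j : ℕ)) * b * d) :
    regProb n d (fun G => IsRelayBase (exploredSet P r)
        (fun G => S.biUnion (exploredCores P r d s G)) v m b G ∧
      #(relays G v (exploredSet P r G) (S.biUnion (exploredCores P r d s G))) ≤ k) ≤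
      1 / 2 ^ j + 2 * regProb n d (fun G => ¬ T G) := by
  have hd' : (20 : ℝ) ≤ d := mod_cast hd
  have hsub (G) : S.biUnion (exploredCores P r d s G) ⊆ (exploredSet P r G).erase r :=
    biUnion_exploredCores_subset S
  refine regProb_card_relays_le (f := d / 2) (c := d / 100) (q := d / 10 + d / 100 + 1)
    (fun G => (hsub G).trans (erase_subset _ _)) (isSwitchInvariant_exploredCores P r S) hT₁ ?_
    (by positivity) (by linarith) (by positivity) (by lia) ?_
  · intro G hG x hx
    have hxr : x ≠ r := ne_of_mem_erase (hsub G hx)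
    have hexplored : (#(G.neighborFinset x ∩ exploredSet P r G) : ℝ) ≤
        #(G.neighborFinset x ∩ P) + codegree G x r + 1 :=
      mod_cast card_neighborFinset_inter_exploredSet_le x
    linarith [hT₁ G hG x r hxr, hT₂ G hG x]
  · calc 2 * (((k + j : ℕ) : ℝ) * (n * d)) = 8 * (((k + j : ℕ) : ℝ) * n) * (d / 4) := by ring
      _ ≤ (m - (k + j : ℕ)) * b * d * (d / 4) := by gcongr
      _ = (m - (k + j : ℕ)) * b * (d / 2 * (d / 2)) := by ring

/-- For some root, some vertex with `m ≥ 3d/4` unexplored neighbours misses the union of some `K`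
explored cores and has at most `k m` relays to it. -/
def HasFewRelays (P : Finset (Fin n)) (d s K : ℕ) (k : ℕ → ℕ) (G : SimpleGraph (Fin n)) : Prop :=
  ∃ r v, ∃ S : Finset (Fin d), #S = K ∧ ∃ m ≤ d, 3 * d ≤ 4 * m ∧
    IsRelayBase (exploredSet P r) (fun G => S.biUnion (exploredCores P r d s G)) v m (K * s) G ∧
    #(relays G v (exploredSet P r G) (S.biUnion (exploredCores P r d s G))) ≤ k m

-- There are at most `n ^ (K + 3)` choices of `r`, `v`, `S` and `m`.
lemma regProb_hasFewRelays_le {B : ℕ} {k j : ℕ → ℕ} (hdn : d < n) (hd : 20 ≤ d)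
    (hB : K + 4 ≤ B)
    (hT₁ : ∀ G, T G → ∀ u v, u ≠ v → (codegree G u v : ℝ) ≤ d / 100)
    (hT₂ : ∀ G, T G → ∀ v, (#(G.neighborFinset v ∩ P) : ℝ) ≤ d / 10)
    (hT : regProb n d (fun G => ¬ T G) ≤ 1 / (n : ℝ) ^ B)
    (hineq : ∀ m ≤ d, 3 * d ≤ 4 * m →
      8 * (((k m + j m : ℕ) : ℝ) * n) ≤ (m - (k m + j m : ℕ)) * (K * s : ℕ) * d)
    (hj : ∀ m ≤ d, 3 * d ≤ 4 * m → 2 * B * Real.log n ≤ j m) :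
    regProb n d (HasFewRelays P d s K k) ≤ 3 / n := by
  have hn : 0 < n := by lia
  let I : Finset ((Fin n × Fin n) × Finset (Fin d) × ℕ) :=
    univ ×ˢ powersetCard K univ ×ˢ {m ∈ range n | m ≤ d ∧ 3 * d ≤ 4 * m}
  have hI : #I ≤ n ^ (K + 3) := by
    have hchoose : d.choose K ≤ n ^ K :=
      (Nat.choose_le_pow d K).trans (Nat.pow_le_pow_left hdn.le K)
    have hrange : #{m ∈ range n | m ≤ d ∧ 3 * d ≤ 4 * m} ≤ n :=
      (card_filter_le _ _).trans_eq (card_range n)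
    calc #I = n * n * (d.choose K * #{m ∈ range n | m ≤ d ∧ 3 * d ≤ 4 * m}) := by simp [I]
      _ ≤ n * n * (n ^ K * n) := by gcongr
      _ = n ^ (K + 3) := by ring
  have htail : ∀ i ∈ I, regProb n d (fun G => IsRelayBase (exploredSet P i.1.1)
        (fun G => i.2.1.biUnion (exploredCores P i.1.1 d s G)) i.1.2 i.2.2 (K * s) G ∧
      #(relays G i.1.2 (exploredSet P i.1.1 G) (i.2.1.biUnion (exploredCores P i.1.1 d s G))) ≤
        k i.2.2) ≤ 3 * (1 / (n : ℝ) ^ B) := by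
    rintro ⟨⟨r, v⟩, S, m⟩ hi
    obtain ⟨-, -, -, hm, hm'⟩ := by
      simpa only [I, mem_product, mem_filter] using hi
    have hswitch := regProb_card_relays_exploredCores_le (s := s) hd hT₁ hT₂ r v S (hineq m hm hm')
    have hpow := one_div_two_pow_le_one_div_pow hn (hj m hm hm')
    linarith
  calc _ ≤ _ := regProb_mono fun G _ h => by
        obtain ⟨r, v, S, hS, m, hm, hm', h⟩ := h
        have hmn : m < n := by lia
        exact ⟨((r, v), S, m), by simp [I, mem_powersetCard, hS, hm, hm', hmn], h⟩
    _ ≤ #I * (3 * (1 / (n : ℝ) ^ B)) := regProb_exists_le_card_mul I htail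
    _ ≤ (n ^ (K + 3) : ℕ) * (3 * (1 / (n : ℝ) ^ (K + 4))) := by
        gcongr
        exact_mod_cast hn
    _ = 3 / n := by
        have : (n : ℝ) ≠ 0 := mod_cast hn.ne'
        push_cast
        field_simp
        ring

variable {G : SimpleGraph (Fin n)} {r : Fin n}

lemma lt_card_relays_of_not_hasFewRelays {v : Fin n} {S : Finset (Fin d)} {k : ℕ → ℕ}
    (hG : G.IsRegularOfDegree d)
    (hD : IsLargeCoreSystem G r (exploredSet P r G) s (exploredCores P r d s G))
    (hfew : ¬ HasFewRelays P d s K k G)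
    (hv : 3 * d ≤ 4 * #(G.neighborFinset v \ exploredSet P r G)) (hS : #S = K)
    (hmiss : ∀ i ∈ S, Misses G (exploredCores P r d s G i) v) :
    k #(G.neighborFinset v \ exploredSet P r G) <
      #(relays G v (exploredSet P r G) (S.biUnion (exploredCores P r d s G))) := by
  by_contra! hle
  refine hfew ⟨r, v, S, hS, _, ?_, hv, ⟨?_, ?_, rfl⟩, hle⟩
  · exact (card_le_card sdiff_subset).trans_eq (hG v)
  · simp only [Misses, mem_biUnion, not_exists, not_and]
    exact ⟨fun i hi => (hmiss i hi).1, fun u ⟨i, hi, hu⟩ => (hmiss i hi).2 u hu⟩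
  · rw [card_biUnion fun i _ j _ hij => hD.disjoint i j hij, ← hS, ← smul_eq_mul]
    exact card_nsmul_le_sum _ _ _ fun i _ => hD.le_card i

lemma hasISTs_of_not_hasFewRelays {t k : ℕ} {k' : ℕ → ℕ} (hG : G.IsRegularOfDegree d)
    (hD : IsLargeCoreSystem G r (exploredSet P r G) s (exploredCores P r d s G))
    (hunexplored : ∀ v ≠ r, 3 * d ≤ 4 * #(G.neighborFinset v \ exploredSet P r G))
    (hsingle : ¬ HasFewRelays P d s 1 (fun _ => k) G) (hmany : ¬ HasFewRelays P d s K k' G)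
    (hK : K ≤ k + 1) (htd : t ≤ d)
    (ht : ∀ v ≠ r, t ≤ k' #(G.neighborFinset v \ exploredSet P r G) + 1) : HasISTs G r t := by
  refine hasISTs_of_card_relays (hD.toIsCoreSystem.comp (Fin.castLE_injective htd))
    (fun i => hD.subset _) K ?_ ?_
  · intro v hv i hi
    have hlt := lt_card_relays_of_not_hasFewRelays (S := {Fin.castLE htd i}) hG hD hsingle
      (hunexplored v hv) (card_singleton _) (by simpa using hi)
    rw [singleton_biUnion] at hlt
    exact hK.trans hlt
  · intro v hv S hS hmiss
    have hlt := lt_card_relays_of_not_hasFewRelays (S := S.map (Fin.castLEEmb htd)) hG hD hmany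
      (hunexplored v hv) (by rw [card_map, hS]) (by simpa using hmiss)
    have hmap : (S.map (Fin.castLEEmb htd)).biUnion (exploredCores P r d s G) =
        S.biUnion (exploredCores P r d s G ∘ Fin.castLE htd) := by
      ext
      simp
    rw [hmap] at hlt
    calc _ ≤ t := (card_le_univ _).trans_eq (Fintype.card_fin t)
      _ ≤ _ := (ht v hv).trans hlt

end FewRelays

section Spread

variable {n d q : ℕ} {c : Fin n → Fin q} {j₀ j₁ : Fin q} {G : SimpleGraph (Fin n)} {r : Fin n}

lemma div_le_card_colourClass {V κ : Type*} [Fintype V] [DecidableEq V] [Fintype κ]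
    {G : SimpleGraph V} {c : V → κ} {j : κ} (hd : 0 < d) (hG : G.IsRegularOfDegree d)
    (hbalanced : ∀ v, IsBalanced c (G.neighborFinset v) j) :
    (Fintype.card V : ℝ) / (4 * Fintype.card κ) ≤ #(colourClass c j) := by
  have hd' : (0 : ℝ) < d := mod_cast hd
  have hcard (v : V) : #(G.neighborFinset v) = d := hG v
  have hcount : ∑ v, #(G.neighborFinset v ∩ colourClass c j) = #(colourClass c j) * d := by
    rw [← card_interedges_eq_sum, card_interedges_comm, card_interedges_univ_right hG]
  refine le_of_mul_le_mul_right ?_ hd'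
  calc (Fintype.card V : ℝ) / (4 * Fintype.card κ) * d
      = Fintype.card V • ((d : ℝ) / (4 * Fintype.card κ)) := by
        rw [nsmul_eq_mul]
        ring
    _ ≤ ∑ v, (#(G.neighborFinset v ∩ colourClass c j) : ℝ) :=
        card_nsmul_le_sum _ _ _ fun v _ => by simpa only [hcard] using (hbalanced v).1
    _ = #(colourClass c j) * d := mod_cast hcount

/-- `G` is a `d`-regular graph with small codegrees in which both colours `j₀` and `j₁` appear in
about the right proportion around each vertex. -/
structure IsSpread (d : ℕ) (c : Fin n → Fin q) (j₀ j₁ : Fin q) (G : SimpleGraph (Fin n)) :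
    Prop where
  regular : G.IsRegularOfDegree d
  codegree_le : ∀ u v, u ≠ v → (codegree G u v : ℝ) ≤ d / (16 * q)
  isBalanced_left : ∀ v, IsBalanced c (G.neighborFinset v) j₀
  isBalanced_right : ∀ v, IsBalanced c (G.neighborFinset v) j₁

namespace IsSpread

lemma card_inter_union_le (hG : IsSpread d c j₀ j₁ G) (v : Fin n) :
    (#(G.neighborFinset v ∩ (colourClass c j₀ ∪ colourClass c j₁)) : ℝ) ≤ 6 * d / q := by
  have hcard : #(G.neighborFinset v) = d := hG.regular v
  have hleft := (hG.isBalanced_left v).2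
  have hright := (hG.isBalanced_right v).2
  rw [hcard, Fintype.card_fin] at hleft hright
  have hunion : (#(G.neighborFinset v ∩ (colourClass c j₀ ∪ colourClass c j₁)) : ℝ) ≤
      #(G.neighborFinset v ∩ colourClass c j₀) + #(G.neighborFinset v ∩ colourClass c j₁) := by
    rw [inter_union_distrib_left]
    exact_mod_cast card_union_le _ _
  calc _ ≤ 3 * (d : ℝ) / q + 3 * d / q := by linarith
    _ = 6 * d / q := by ring

lemma sub_le_card_sdiff_exploredSet (hG : IsSpread d c j₀ j₁ G) (hqd : 2 * q ≤ d) {v : Fin n}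
    (hv : v ≠ r) : (d : ℝ) - 7 * (d / q) ≤
      #(G.neighborFinset v \ exploredSet (colourClass c j₀ ∪ colourClass c j₁) r G) := by
  have hq : (0 : ℝ) < q := mod_cast j₀.pos
  have hquot : 2 ≤ (d : ℝ) / q := by
    rw [le_div_iff₀ hq]
    exact_mod_cast hqd
  have hcodegree := hG.codegree_le v r hv
  have hreservoir := hG.card_inter_union_le v
  rw [mul_div_assoc] at hreservoir
  rw [mul_comm, ← div_div] at hcodegree
  have hexplored : (#(G.neighborFinset v ∩
      exploredSet (colourClass c j₀ ∪ colourClass c j₁) r G) : ℝ) ≤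
        #(G.neighborFinset v ∩ (colourClass c j₀ ∪ colourClass c j₁)) + codegree G v r + 1 :=
    mod_cast card_neighborFinset_inter_exploredSet_le v
  have hsplit : (#(G.neighborFinset v \
      exploredSet (colourClass c j₀ ∪ colourClass c j₁) r G) : ℝ) +
        #(G.neighborFinset v ∩ exploredSet (colourClass c j₀ ∪ colourClass c j₁) r G) = d :=
    mod_cast (card_sdiff_add_card_inter _ _).trans (hG.regular v)
  linarith

lemma isLargeCoreSystem_exploredCores {m g s : ℕ} (hG : IsSpread d c j₀ j₁ G) (hj : j₀ ≠ j₁)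
    (hd : 0 < d) (hjoins : JoinsLargeSets G m) (hsparse : IsLocallySparse G m g) (hs : 1 ≤ s)
    (hsm : s ≤ m) (hms : m ≤ d * s)
    (hsize : ((3 * m + 2 * d * s + d + 1 : ℕ) : ℝ) ≤ n / (4 * q))
    (hg : (g : ℝ) + 1 ≤ 3 * (d / (16 * q))) :
    IsLargeCoreSystem G r (exploredSet (colourClass c j₀ ∪ colourClass c j₁) r G) s
      (exploredCores (colourClass c j₀ ∪ colourClass c j₁) r d s G) := by
  refine IndepTrees.isLargeCoreSystem_exploredCores <| exists_isLargeCoreSystem_exploredSet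
    hG.regular (disjoint_colourClass c hj) hjoins hsparse hs hsm hms ?_ ?_
  · have hclass := div_le_card_colourClass hd hG.regular hG.isBalanced_left
    rw [Fintype.card_fin, Fintype.card_fin] at hclass
    exact_mod_cast hsize.trans hclass
  · intro y hy
    have hcard : #(G.neighborFinset y) = d := hG.regular y
    have hcodegree := hG.codegree_le y r hy
    have hclass := (hG.isBalanced_right y).1
    rw [hcard, Fintype.card_fin] at hclass
    have hquarter : (d : ℝ) / (4 * q) = 4 * (d / (16 * q)) := by ring
    have : ((g + codegree G y r + 1 : ℕ) : ℝ) ≤ #(G.neighborFinset y ∩ colourClass c j₁) := by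
      push_cast
      linarith
    exact_mod_cast this

end IsSpread

lemma regProb_not_forall_codegree_le_two_mul_le {B : ℕ} {x : ℝ} (hdn : d < n)
    (hx : 2 * (d : ℝ) ^ 2 ≤ x * (n - 2 * d - 1)) (hlog : 2 * ((B : ℝ) + 3) * Real.log n + 1 ≤ x) :
    regProb n d (fun G => ¬ ∀ u v, u ≠ v → (codegree G u v : ℝ) ≤ 2 * x) ≤ 1 / (n : ℝ) ^ B := by
  have hx₀ : 0 < x := by
    have : 0 ≤ 2 * ((B : ℝ) + 3) * Real.log n := by positivity
    linarith
  have hdn' : 0 ≤ (n : ℝ) - 2 * d - 1 :=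
    nonneg_of_mul_nonneg_right ((by positivity : 0 ≤ 2 * (d : ℝ) ^ 2).trans hx) hx₀
  refine (regProb_mono fun G _ => mt fun hG u v huv => ?_).trans
    (regProb_not_forall_codegree_lt_le (k₀ := ⌈x⌉₊) (L := ⌊x⌋₊) hdn ?_ ?_)
  · have hlt : (codegree G u v : ℝ) + 1 ≤ ⌈x⌉₊ + ⌊x⌋₊ := mod_cast hG u v huv
    linarith [Nat.ceil_lt_add_one hx₀.le, Nat.floor_le hx₀.le]
  · intro k hk hkd
    have hxk : x ≤ k := Nat.ceil_le.1 hk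
    have hkd' : (0 : ℝ) ≤ d - k := by
      rw [sub_nonneg]
      exact_mod_cast hkd.le
    calc 2 * ((d : ℝ) - k) ^ 2 ≤ 2 * d ^ 2 := by
          gcongr
          linarith
      _ ≤ x * (n - 2 * d - 1) := hx
      _ ≤ (k + 1) * (n - 2 * d + k - 1) := by gcongr <;> linarith
  · linarith [Nat.lt_floor_add_one x]

lemma exists_regProb_not_isBalanced_le {B : ℕ} {κ : Type*} [Fintype κ] (j₀ j₁ : κ)
    (hn : 3 ≤ n) (hlog : (B + 3) * Real.log n ≤ d / (4 * Fintype.card κ)) :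
    ∃ c : Fin n → κ, regProb n d (fun G => ¬ ∀ v, IsBalanced c (G.neighborFinset v) j₀ ∧
      IsBalanced c (G.neighborFinset v) j₁) ≤ 1 / (n : ℝ) ^ B := by
  have hn' : (3 : ℝ) ≤ n := mod_cast hn
  have : Nonempty κ := ⟨j₀⟩
  obtain ⟨c, hc⟩ := exists_colouring_regProb_le (n := n) (d := d) {j₀, j₁}
  refine ⟨c, (regProb_mono fun G _ => not_imp_comm.1 fun hG v => ?_).trans (hc.trans ?_)⟩
  · push Not at hG
    exact ⟨hG v j₀ (by simp), hG v j₁ (by simp)⟩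
  have hexp := exp_neg_le_one_div_pow (n := n) (B := B + 3) (by lia)
    (by push_cast; exact hlog)
  calc (n : ℝ) * #{j₀, j₁} * (2 * Real.exp (-(d / (4 * Fintype.card κ))))
      ≤ n * (2 : ℕ) * (2 * (1 / (n : ℝ) ^ (B + 3))) := by
        gcongr
        exact card_le_two
    _ = 4 / n ^ 2 * (1 / (n : ℝ) ^ B) := by
        push_cast
        field_simp
        ring
    _ ≤ 1 * (1 / (n : ℝ) ^ B) := by
        gcongr
        rw [div_le_one (by positivity)]
        nlinarith
    _ = 1 / (n : ℝ) ^ B := one_mul _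

lemma two_mul_one_div_pow_succ_le {x : ℝ} (hx : 2 ≤ x) (B : ℕ) :
    2 * (1 / x ^ (B + 1)) ≤ 1 / x ^ B := by
  rw [mul_one_div, div_le_div_iff₀ (by positivity) (by positivity), one_mul, pow_succ']
  gcongr

lemma exists_regProb_not_isSpread_le {B : ℕ} (j₀ j₁ : Fin q) (hn : 3 ≤ n)
    (hdn : 100 * (q : ℝ) * d ≤ n) (hlog : (2 * B + 10) * Real.log n ≤ d / (32 * q)) :
    ∃ c : Fin n → Fin q, regProb n d (fun G => ¬ IsSpread d c j₀ j₁ G) ≤ 1 / (n : ℝ) ^ B := by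
  have hn' : (3 : ℝ) ≤ n := mod_cast hn
  have hq : (1 : ℝ) ≤ q := mod_cast j₀.pos
  have hlog₁ := one_le_log_natCast hn
  have hqd : (d : ℝ) ≤ q * d := le_mul_of_one_le_left (Nat.cast_nonneg d) hq
  have hdn' : d < n := by
    have : (d : ℝ) < n := by linarith
    exact_mod_cast this
  have hquarter : (d : ℝ) / (4 * q) = 8 * (d / (32 * q)) := by ring
  obtain ⟨c, hc⟩ := exists_regProb_not_isBalanced_le (n := n) (d := d) (B := B + 1) j₀ j₁ hn (by
    rw [Fintype.card_fin, hquarter]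
    push_cast
    have : 0 ≤ (B : ℝ) * Real.log n := by positivity
    linarith)
  have hcodegree := regProb_not_forall_codegree_le_two_mul_le (B := B + 1) (x := d / (32 * q)) hdn'
    (by
      calc 2 * (d : ℝ) ^ 2 = d / (32 * q) * (64 * q * d) := by
            field_simp
            ring
        _ ≤ d / (32 * q) * (n - 2 * d - 1) := by
            gcongr
            linarith)
    (by push_cast; linarith)
  refine ⟨c, ?_⟩
  calc _ ≤ 1 / (n : ℝ) ^ (B + 1) + 1 / (n : ℝ) ^ (B + 1) := by
        refine (regProb_mono fun G hG => not_imp_comm.1 fun hgood => ?_).trans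
          (regProb_or_le.trans (add_le_add hcodegree hc))
        simp only [not_or, not_not] at hgood
        exact ⟨hG, fun u v huv => (hgood.1 u v huv).trans_eq (by ring),
          fun v => (hgood.2 v).1, fun v => (hgood.2 v).2⟩
    _ = 2 * (1 / (n : ℝ) ^ (B + 1)) := by ring
    _ ≤ 1 / (n : ℝ) ^ B := two_mul_one_div_pow_succ_le (by linarith) B

end Spread

section SparseRegime

variable {n d q s K B : ℕ} {c : Fin n → Fin q} {j₀ j₁ : Fin q}

lemma IsSpread.hasISTs {G : SimpleGraph (Fin n)} {r : Fin n} {t e k : ℕ}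
    (hG : IsSpread d c j₀ j₁ G) (hq : 28 ≤ q) (hqd : 2 * q ≤ d)
    (hD : IsLargeCoreSystem G r (exploredSet (colourClass c j₀ ∪ colourClass c j₁) r G) s
      (exploredCores (colourClass c j₀ ∪ colourClass c j₁) r d s G))
    (hsingle : ¬ HasFewRelays (colourClass c j₀ ∪ colourClass c j₁) d s 1 (fun _ => k) G)
    (hmany : ¬ HasFewRelays (colourClass c j₀ ∪ colourClass c j₁) d s K (fun m => m - 2 * e) G)
    (hK : K ≤ k + 1) (ht : (t : ℝ) + 7 * (d / q) + 2 * e ≤ d) : HasISTs G r t := by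
  have hq' : (28 : ℝ) ≤ q := mod_cast hq
  have hquot : (d : ℝ) / q ≤ d / 28 := by gcongr
  have hquot₀ : 0 ≤ (d : ℝ) / q := by positivity
  have hcard {v : Fin n} (hv : v ≠ r) := hG.sub_le_card_sdiff_exploredSet hqd hv
  refine hasISTs_of_not_hasFewRelays hG.regular hD (fun v hv => ?_) hsingle hmany hK ?_
    fun v hv => ?_
  · have : 3 * (d : ℝ) ≤ 4 *
        #(G.neighborFinset v \ exploredSet (colourClass c j₀ ∪ colourClass c j₁) r G) := by
      linarith [hcard hv]
    exact_mod_cast this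
  · have : (t : ℝ) ≤ d := by
      have : (0 : ℝ) ≤ e := e.cast_nonneg
      linarith
    exact_mod_cast this
  · have : (t : ℝ) + 2 * e ≤
        #(G.neighborFinset v \ exploredSet (colourClass c j₀ ∪ colourClass c j₁) r G) := by
      linarith [hcard hv]
    have : t + 2 * e ≤
        #(G.neighborFinset v \ exploredSet (colourClass c j₀ ∪ colourClass c j₁) r G) :=
      mod_cast this
    lia

lemma regProb_hasFewRelays_le_of_isSpread {k j : ℕ → ℕ} (hdn : d < n) (hd : 20 ≤ d)
    (hq : 60 ≤ q) (hB : K + 4 ≤ B)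
    (hspread : regProb n d (fun G => ¬ IsSpread d c j₀ j₁ G) ≤ 1 / (n : ℝ) ^ B)
    (hineq : ∀ m ≤ d, 3 * d ≤ 4 * m →
      8 * (((k m + j m : ℕ) : ℝ) * n) ≤ (m - (k m + j m : ℕ)) * (K * s : ℕ) * d)
    (hj : ∀ m ≤ d, 3 * d ≤ 4 * m → 2 * B * Real.log n ≤ j m) :
    regProb n d (HasFewRelays (colourClass c j₀ ∪ colourClass c j₁) d s K k) ≤ 3 / n := by
  have hq' : (60 : ℝ) ≤ q := mod_cast hq
  refine regProb_hasFewRelays_le hdn hd hB ?_ ?_ hspread hineq hj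
  · intro G hG u v huv
    refine (hG.codegree_le u v huv).trans ?_
    gcongr
    linarith
  · intro G hG v
    calc _ ≤ 6 * (d : ℝ) / q := hG.card_inter_union_le v
      _ ≤ 6 * d / 60 := by gcongr
      _ = d / 10 := by ring

lemma regProb_hasFewRelays_one_le {k j : ℕ} (hdn : d < n) (hd : 20 ≤ d) (hq : 60 ≤ q) (hB : 5 ≤ B)
    (hspread : regProb n d (fun G => ¬ IsSpread d c j₀ j₁ G) ≤ 1 / (n : ℝ) ^ B)
    (hs : n ≤ 16 * q * (s * d)) (hkj : 256 * q * (k + j) ≤ d) (hj : 2 * B * Real.log n ≤ j) :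
    regProb n d (HasFewRelays (colourClass c j₀ ∪ colourClass c j₁) d s 1 fun _ => k) ≤ 3 / n := by
  refine regProb_hasFewRelays_le_of_isSpread (j := fun _ => j) hdn hd hq hB hspread
    (fun m _ hm => ?_) fun _ _ _ => hj
  have hs' : (n : ℝ) ≤ 16 * q * (s * d) := mod_cast hs
  have hkj' : 256 * q * ((k + j : ℕ) : ℝ) ≤ d := mod_cast hkj
  have hhalf : (d : ℝ) / 2 ≤ m - (k + j : ℕ) := by
    have hkjd : ((k + j : ℕ) : ℝ) ≤ d / 4 := by
      have : 4 * (k + j) ≤ d := le_trans (Nat.mul_le_mul_right _ (by lia)) hkj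
      rw [le_div_iff₀ (by norm_num), mul_comm]
      exact_mod_cast this
    have : 3 * (d : ℝ) ≤ 4 * m := mod_cast hm
    linarith
  calc 8 * (((k + j : ℕ) : ℝ) * n) ≤ 8 * (((k + j : ℕ) : ℝ) * (16 * q * (s * d))) := by gcongr
    _ = 256 * q * ((k + j : ℕ) : ℝ) / 2 * (s * d) := by ring
    _ ≤ d / 2 * (s * d) := by gcongr
    _ ≤ (m - (k + j : ℕ)) * (s * d) := by gcongr
    _ = (m - (k + j : ℕ)) * (1 * s : ℕ) * d := by
        push_cast
        ring

lemma regProb_hasFewRelays_sub_le {e : ℕ} (hdn : d < n) (hd : 20 ≤ d) (hq : 60 ≤ q)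
    (hB : K + 4 ≤ B)
    (hspread : regProb n d (fun G => ¬ IsSpread d c j₀ j₁ G) ≤ 1 / (n : ℝ) ^ B)
    (hs : n ≤ 16 * q * (s * d)) (he : 8 * e ≤ d) (hKe : 128 * q * d ≤ e * K)
    (hlog : 2 * B * Real.log n ≤ e) :
    regProb n d (HasFewRelays (colourClass c j₀ ∪ colourClass c j₁) d s K fun m => m - 2 * e) ≤
      3 / n := by
  refine regProb_hasFewRelays_le_of_isSpread (j := fun _ => e) hdn hd hq hB hspread
    (fun m hmd hm => ?_) fun _ _ _ => hlog
  have hsub : m - 2 * e + e = m - e := by lia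
  have hle : e ≤ m := by lia
  simp only [hsub, Nat.cast_sub hle, sub_sub_cancel]
  have hnat : 8 * ((m - e) * n) ≤ e * (K * s) * d := by
    calc 8 * ((m - e) * n) ≤ 8 * (d * (16 * q * (s * d))) := by gcongr; lia
      _ = 128 * q * d * (s * d) := by ring
      _ ≤ e * K * (s * d) := by gcongr
      _ = e * (K * s) * d := by ring
  rw [← Nat.cast_sub hle]
  exact_mod_cast hnat

lemma IsSpread.isLargeCoreSystem_of_joinsLargeSets {G : SimpleGraph (Fin n)} {r : Fin n}
    {m g : ℕ} (hG : IsSpread d c j₀ j₁ G) (hj : j₀ ≠ j₁) (hqd : 16 * q ≤ d)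
    (hdn : 512 * (q * d) ≤ n) (hjoins : JoinsLargeSets G m) (hsparse : IsLocallySparse G m g)
    (hm : 128 * q * m ≤ n) (hm' : n < 128 * q * (m + 1)) (hg : 8 * q * g ≤ d)
    (hs : n ≤ 16 * q * (s * d)) (hs' : 16 * q * (s * d) ≤ n + 16 * q * d) :
    IsLargeCoreSystem G r (exploredSet (colourClass c j₀ ∪ colourClass c j₁) r G) s
      (exploredCores (colourClass c j₀ ∪ colourClass c j₁) r d s G) := by
  have hq : 0 < q := j₀.pos
  have hd : 0 < d := by lia
  have hs₁ : 1 ≤ s := by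
    rw [Nat.one_le_iff_ne_zero]
    rintro rfl
    have : 0 < q * d := by positivity
    lia
  have hsm : s ≤ m := by
    have : 16 * (16 * q * s) ≤ d * (16 * q * s) := Nat.mul_le_mul_right _ (by lia)
    have : 128 * q * s < 128 * q * (m + 1) := by lia
    exact Nat.lt_succ_iff.1 (lt_of_mul_lt_mul_left' this)
  have hms : m ≤ d * s := by
    refine le_of_mul_le_mul_left (a := 16 * q) ?_ (by positivity)
    lia
  refine hG.isLargeCoreSystem_exploredCores hj hd hjoins hsparse hs₁ hsm hms ?_ ?_
  · rw [le_div_iff₀ (by positivity)]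
    have : (3 * m + 2 * d * s + d + 1) * (4 * q) ≤ n := by
      have : q ≤ q * d := Nat.le_mul_of_pos_right q hd
      lia
    exact_mod_cast this
  · have hg' : 8 * (q : ℝ) * g ≤ d := mod_cast hg
    have hqd' : 16 * (q : ℝ) ≤ d := mod_cast hqd
    rw [mul_div_assoc', le_div_iff₀ (by positivity)]
    linarith

lemma regProb_not_joinsLargeSets_le_of_sq_le {m : ℕ} (hq : 0 < q) (hqd : 2097152 * q ^ 2 ≤ d)
    (hdn : 6144 * (q * d) ≤ n) (hm' : n < 128 * q * (m + 1)) :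
    regProb n d (fun G => ¬ JoinsLargeSets G m) ≤ 1 / n := by
  have hq₂ : 0 < q ^ 2 := by positivity
  have hd : 0 < d := by lia
  have hqd₀ : 0 < q * d := by positivity
  have hdm : 48 * d < m + 1 := by
    refine lt_of_mul_lt_mul_left' (a := 128 * q) ?_
    lia
  have hn : n ≤ 256 * q * m := by
    have : q * 1 ≤ q * m := by
      gcongr
      lia
    lia
  refine regProb_not_joinsLargeSets_le hd (by lia) ?_ ?_
  · exact_mod_cast Nat.lt_succ_iff.1 hdm
  · have : 32 * n * n ≤ m ^ 2 * d := by
      calc 32 * n * n ≤ 32 * (256 * q * m) * (256 * q * m) := by gcongr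
        _ = m ^ 2 * (2097152 * q ^ 2) := by ring
        _ ≤ m ^ 2 * d := by gcongr
    exact_mod_cast this

lemma regProb_not_isLocallySparse_le_of_log_le {m g : ℕ} (hn : 3 ≤ n) (hqd : 8 * q ≤ d)
    (hq : 0 < q) (hdn : 8 * d ≤ n) (hm : 128 * q * m ≤ n) (hg : d < 8 * q * (g + 1))
    (hlog : 96 * Real.log n ≤ g) :
    regProb n d (fun G => ¬ IsLocallySparse G m g) ≤ 1 / n := by
  have hg₁ : 1 ≤ g := by
    by_contra! hg₀
    obtain rfl : g = 0 := by lia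
    lia
  refine regProb_not_isLocallySparse_le (by lia) hn ?_ hdn ?_ hlog
  · exact le_trans (Nat.mul_le_mul_right m (by lia)) hm
  · have hdg : d ≤ 16 * q * g := by
      have : q * 1 ≤ q * g := by gcongr
      lia
    calc 8 * m * d ≤ 8 * m * (16 * q * g) := by gcongr
      _ = g * (128 * q * m) := by ring
      _ ≤ g * n := by gcongr

lemma regProb_not_hasISTs_le_add {m g e k t : ℕ} (hj : j₀ ≠ j₁) (hq : 28 ≤ q)
    (hqd : 16 * q ≤ d) (hdn : 512 * (q * d) ≤ n) (hm : 128 * q * m ≤ n)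
    (hm' : n < 128 * q * (m + 1)) (hg : 8 * q * g ≤ d) (hs : n ≤ 16 * q * (s * d))
    (hs' : 16 * q * (s * d) ≤ n + 16 * q * d) (hK : K ≤ k + 1)
    (ht : (t : ℝ) + 7 * (d / q) + 2 * e ≤ d) :
    regProb n d (fun G => ¬ ∀ r, HasISTs G r t) ≤
      regProb n d (fun G => ¬ IsSpread d c j₀ j₁ G) +
        (regProb n d (fun G => ¬ JoinsLargeSets G m) +
          (regProb n d (fun G => ¬ IsLocallySparse G m g) +
            (regProb n d (HasFewRelays (colourClass c j₀ ∪ colourClass c j₁) d s 1 fun _ => k) +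
              regProb n d (HasFewRelays (colourClass c j₀ ∪ colourClass c j₁) d s K
                fun m => m - 2 * e)))) := by
  refine le_trans (regProb_mono fun G _ => not_imp_comm.1 fun hgood r => ?_) <|
    regProb_or_le.trans <| add_le_add_right (regProb_or_le.trans <| add_le_add_right
      (regProb_or_le.trans <| add_le_add_right regProb_or_le _) _) _
  simp only [not_or, not_not] at hgood
  obtain ⟨hspread, hjoins, hsparse, hsingle, hmany⟩ := hgood
  exact hspread.hasISTs hq (by lia) (hspread.isLargeCoreSystem_of_joinsLargeSets hj hqd hdn hjoins
    hsparse hm hm' hg hs hs') hsingle hmany hK ht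

lemma regProb_not_hasISTs_le_of_regProb_not_isSpread_le {e k t : ℕ} (hj : j₀ ≠ j₁) (hn : 3 ≤ n)
    (hq : 100 ≤ q) (hB : K + 5 ≤ B) (hqd : 2097152 * q ^ 2 ≤ d) (hdn : 20000 * (q * d) ≤ n)
    (hspread : regProb n d (fun G => ¬ IsSpread d c j₀ j₁ G) ≤ 1 / (n : ℝ) ^ B)
    (hk : 512 * q * k ≤ d) (hK : K ≤ k) (hklog : 2 * B * Real.log n ≤ k) (he : 8 * e ≤ d)
    (hKe : 128 * q * d ≤ e * K) (helog : 2 * B * Real.log n ≤ e)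
    (ht : (t : ℝ) + 7 * (d / q) + 2 * e ≤ d) :
    regProb n d (fun G => ¬ ∀ r, HasISTs G r t) ≤ 9 / n := by
  have hq_le_sq : q ≤ q ^ 2 := Nat.le_self_pow two_ne_zero q
  have hd_le : d ≤ q * d := Nat.le_mul_of_pos_left d (by lia)
  have hs : n < 16 * q * ((n / (16 * q * d) + 1) * d) := by
    linarith [Nat.lt_mul_div_succ n (show 0 < 16 * q * d by lia)]
  have hs' : 16 * q * ((n / (16 * q * d) + 1) * d) ≤ n + 16 * q * d := by
    linarith [Nat.mul_div_le n (16 * q * d)]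
  have hm := Nat.mul_div_le n (128 * q)
  have hm' := Nat.lt_mul_div_succ n (show 0 < 128 * q by lia)
  have hg' := Nat.lt_mul_div_succ d (show 0 < 8 * q by lia)
  have hglog : 96 * Real.log n ≤ (d / (8 * q) : ℕ) := by
    have hkg : 64 * k ≤ d / (8 * q) := (Nat.le_div_iff_mul_le (by lia)).2 (by linarith)
    have hkg' : 64 * (k : ℝ) ≤ (d / (8 * q) : ℕ) := mod_cast hkg
    have hBlog : 5 * Real.log n ≤ B * Real.log n := by
      gcongr
      exact_mod_cast (show 5 ≤ B by lia)
    linarith [one_le_log_natCast hn]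
  have hpow : 1 / (n : ℝ) ^ B ≤ 1 / n := by
    gcongr
    exact le_self_pow₀ (mod_cast (by lia : 1 ≤ n)) (by lia)
  have hjoins := regProb_not_joinsLargeSets_le_of_sq_le (by lia) hqd (by lia) hm'
  have hsparse := regProb_not_isLocallySparse_le_of_log_le hn (by lia) (by lia) (by lia) hm hg'
    hglog
  have hfew₁ := regProb_hasFewRelays_one_le (by lia) (by lia) (by lia) (by lia) hspread hs.le
    (by lia : 256 * q * (k + k) ≤ d) hklog
  have hfewK := regProb_hasFewRelays_sub_le (by lia) (by lia) (by lia) (by lia) hspread hs.le he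
    hKe helog
  calc regProb n d (fun G => ¬ ∀ r, HasISTs G r t)
      ≤ _ := regProb_not_hasISTs_le_add hj (by lia) (by lia) (by lia) hm hm'
        (Nat.mul_div_le d (8 * q)) hs.le hs' (hK.trans (Nat.le_succ k)) ht
    _ ≤ 1 / (n : ℝ) + (1 / n + (1 / n + (3 / n + 3 / n))) := by
        gcongr
        exact hspread.trans hpow
    _ = 9 / n := by ring

lemma regProb_not_hasISTs_le_of_log_le {e k t : ℕ} (hn : 3 ≤ n) (hq : 100 ≤ q) (hB : K + 5 ≤ B)
    (hqd : 2097152 * q ^ 2 ≤ d) (hdn : 20000 * (q * d) ≤ n) (hk : 512 * q * k ≤ d) (hK : K ≤ k)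
    (hklog : 2 * B * Real.log n ≤ k) (he : 8 * e ≤ d) (hKe : 128 * q * d ≤ e * K)
    (helog : 2 * B * Real.log n ≤ e) (ht : (t : ℝ) + 7 * (d / q) + 2 * e ≤ d) :
    regProb n d (fun G => ¬ ∀ r, HasISTs G r t) ≤ 9 / n := by
  have hlog₁ := one_le_log_natCast hn
  have hdeg : (2 * B + 10) * Real.log n ≤ d / (32 * q) := by
    have : (0 : ℝ) < q := mod_cast (by lia : 0 < q)
    have hB' : (5 : ℝ) ≤ B := mod_cast (by lia : 5 ≤ B)
    rw [le_div_iff₀ (by positivity)]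
    calc (2 * B + 10) * Real.log n * (32 * q) ≤ (4 * B) * Real.log n * (32 * q) := by
          gcongr
          linarith
      _ = 64 * q * (2 * B * Real.log n) := by ring
      _ ≤ 512 * q * k := by gcongr; norm_num
      _ ≤ d := mod_cast hk
  obtain ⟨c, hspread⟩ := exists_regProb_not_isSpread_le (⟨0, by lia⟩ : Fin q) ⟨1, by lia⟩ hn
    (mod_cast (show 100 * q * d ≤ n by lia)) hdeg
  exact regProb_not_hasISTs_le_of_regProb_not_isSpread_le (by simp) hn hq hB hqd hdn hspread hk hK
    hklog he hKe helog ht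

lemma le_natCast_div {a d : ℕ} {x : ℝ} (ha : 0 < a) (h : a * (x + 1) ≤ d) :
    x ≤ (d / a : ℕ) := by
  have ha' : (0 : ℝ) < a := mod_cast ha
  have hdiv : (d : ℝ) < a * ((d / a : ℕ) + 1) := mod_cast Nat.lt_mul_div_succ d ha
  linarith [lt_of_mul_lt_mul_left (h.trans_lt hdiv) ha'.le]

lemma two_mul_log_le_natCast_div (hn : 3 ≤ n) (hq : 0 < q) (hB : 0 < B)
    (hlog : 2097152 * q ^ 2 * B * Real.log n ≤ d) :
    2 * B * Real.log n ≤ (d / (512 * q) : ℕ) := by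
  have hq' : (1 : ℝ) ≤ q := mod_cast hq
  have hBlog : 1 ≤ B * Real.log n :=
    one_le_mul_of_one_le_of_one_le (mod_cast hB) (one_le_log_natCast hn)
  refine le_natCast_div (by lia) (le_trans ?_ hlog)
  push_cast
  calc 512 * (q : ℝ) * (2 * B * Real.log n + 1)
      ≤ 512 * (q : ℝ) * (4096 * (B * Real.log n)) := by gcongr; linarith
    _ ≤ 512 * (q : ℝ) ^ 2 * (4096 * (B * Real.log n)) := by
        gcongr
        exact le_self_pow₀ hq' two_ne_zero
    _ = 2097152 * q ^ 2 * B * Real.log n := by ring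

lemma mul_log_le_mul_degree {ε : ℝ} (hn : 3 ≤ n) (hε : 0 < ε) (hq : 0 < q) (hεq : 100 ≤ ε * q)
    (hlog : 2097152 * q ^ 2 * B * Real.log n ≤ d) : 64 * (B * Real.log n) ≤ ε * d := by
  have hq' : (1 : ℝ) ≤ q := mod_cast hq
  have hlog₁ := one_le_log_natCast hn
  calc 64 * (B * Real.log n) ≤ 100 * (2097152 * q) * (B * Real.log n) := by
        gcongr
        linarith
    _ ≤ ε * q * (2097152 * q) * (B * Real.log n) := by gcongr
    _ = ε * (2097152 * q ^ 2 * B * Real.log n) := by ring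
    _ ≤ ε * d := by gcongr

lemma regProb_not_hasISTs_le_of_sparse {ε : ℝ} (hn : 3 ≤ n) (hε : 0 < ε) (hε₁ : ε < 1)
    (hq : 100 ≤ q) (hεq : 100 ≤ ε * q) (hεK : 2048 * q ≤ ε * K) (hB : K + 5 ≤ B)
    (hlog : 2097152 * q ^ 2 * B * Real.log n ≤ d) (hdn : 20000 * (q * d) ≤ n) :
    regProb n d (fun G => ¬ ∀ r, HasISTs G r ⌊(1 - ε) * (d : ℝ)⌋₊) ≤ 9 / n := by
  have hB' : (K : ℝ) + 5 ≤ B := mod_cast hB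
  have hK₀ : (0 : ℝ) ≤ K := K.cast_nonneg
  have hd₀ : (0 : ℝ) ≤ d := d.cast_nonneg
  have hBlog : (B : ℝ) ≤ B * Real.log n :=
    le_mul_of_one_le_right (by positivity) (one_le_log_natCast hn)
  have hqd : 2097152 * (q : ℝ) ^ 2 ≤ d := by
    refine le_trans ?_ hlog
    rw [mul_assoc _ (B : ℝ)]
    exact le_mul_of_one_le_right (by positivity) (by linarith)
  have hklog := two_mul_log_le_natCast_div hn (by lia) (by lia) hlog
  have hεd := mul_log_le_mul_degree hn hε (by lia) hεq hlog
  have he_le : (⌊ε * d / 8⌋₊ : ℝ) ≤ ε * d / 8 := Nat.floor_le (by positivity)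
  have he_ge : ε * d ≤ 16 * ⌊ε * d / 8⌋₊ := by linarith [Nat.lt_floor_add_one (ε * d / 8)]
  have hεd_le : ε * d ≤ d := mul_le_of_le_one_left hd₀ hε₁.le
  have hquot : (d : ℝ) / q ≤ ε * d / 100 := by
    rw [div_le_iff₀ (mod_cast (by lia : 0 < q))]
    linarith [mul_le_mul_of_nonneg_right hεq hd₀]
  have hKe : 128 * (q : ℝ) * d ≤ ⌊ε * d / 8⌋₊ * K := by
    linarith [mul_le_mul_of_nonneg_right hεK hd₀, mul_le_mul_of_nonneg_right he_ge hK₀]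
  refine regProb_not_hasISTs_le_of_log_le hn hq hB (mod_cast hqd) hdn (Nat.mul_div_le d (512 * q))
    ?_ hklog ?_ (mod_cast hKe) (by linarith) ?_
  · have : (K : ℝ) ≤ (d / (512 * q) : ℕ) := by linarith
    exact_mod_cast this
  · have : 8 * (⌊ε * d / 8⌋₊ : ℝ) ≤ d := by linarith
    exact_mod_cast this
  · have ht : (⌊(1 - ε) * (d : ℝ)⌋₊ : ℝ) ≤ (1 - ε) * d :=
      Nat.floor_le (mul_nonneg (by linarith) hd₀)
    linarith

lemma exists_eventually_regProb_not_hasISTs_le_of_sparse {ε : ℝ} (hε : 0 < ε) (hε₁ : ε < 1) :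
    ∃ δ > 0, ∀ᶠ C : ℝ in atTop, ∀ n d : ℕ, 3 ≤ n → C * Real.log n ≤ d → (d : ℝ) ≤ δ * n →
      regProb n d (fun G => ¬ ∀ r, HasISTs G r ⌊(1 - ε) * (d : ℝ)⌋₊) ≤ 9 / n := by
  obtain ⟨q, hq⟩ := exists_nat_ge (100 / ε)
  obtain ⟨K, hK⟩ := exists_nat_ge (2048 * q / ε)
  rw [div_le_iff₀' hε] at hq hK
  have hq₁ : (100 : ℝ) ≤ q := hq.trans (mul_le_of_le_one_left (by positivity) hε₁.le)
  refine ⟨1 / (20000 * q), by positivity, ?_⟩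
  filter_upwards [eventually_ge_atTop (2097152 * (q : ℝ) ^ 2 * (K + 5 : ℕ))]
    with C hC n d hn hlog hdn
  refine regProb_not_hasISTs_le_of_sparse hn hε hε₁ (mod_cast hq₁) hq hK le_rfl
    (le_trans (by gcongr) hlog) ?_
  rw [one_div_mul_eq_div, le_div_iff₀ (by positivity)] at hdn
  have : 20000 * ((q : ℝ) * d) ≤ n := by linarith
  exact_mod_cast this

end SparseRegime

/-! ### Existence of regular graphs -/

section Existence

lemma isRegularOfDegree_circulantGraph {Γ : Type*} [AddGroup Γ] [Fintype Γ] {s : Finset Γ}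
    (hzero : 0 ∉ s) (hneg : ∀ x ∈ s, -x ∈ s) :
    (SimpleGraph.circulantGraph (s : Set Γ)).IsRegularOfDegree #s := by
  intro u
  have hsub {x y : Γ} : x - y ∈ s ↔ y - x ∈ s :=
    ⟨fun h => neg_sub x y ▸ hneg _ h, fun h => neg_sub y x ▸ hneg _ h⟩
  have hnbr : (SimpleGraph.circulantGraph (s : Set Γ)).neighborFinset u =
      s.map (addRightEmbedding u) := by
    ext v
    simp only [SimpleGraph.mem_neighborFinset, SimpleGraph.circulantGraph_adj, mem_coe,
      hsub (x := u), or_self, Finset.mem_map, addRightEmbedding_apply, ← eq_sub_iff_add_eq,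
      exists_eq_right]
    exact ⟨And.right, fun h => ⟨by rintro rfl; exact hzero (sub_self u ▸ h), h⟩⟩
  rw [← SimpleGraph.card_neighborFinset_eq_degree, hnbr, card_map]

lemma exists_finset_nat_card_eq {n d : ℕ} (hdn : d < n) (heven : Even (n * d)) :
    ∃ S : Finset ℕ, 0 ∉ S ∧ (∀ x ∈ S, x < n ∧ n - x ∈ S) ∧ #S = d := by
  rcases Nat.even_or_odd (n + d) with hsum | hsum
  · have hn : Even n := by grind
    obtain ⟨a, ha⟩ : ∃ a, n = d + 2 * a := by
      obtain ⟨a, ha⟩ := hsum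
      exact ⟨a - d, by lia⟩
    obtain ⟨b, rfl⟩ := hn
    refine ⟨(Icc a (b + b - a)).erase b, by simp; lia, fun x hx => ?_, ?_⟩
    · simp only [mem_erase, mem_Icc] at hx ⊢
      lia
    · rw [card_erase_of_mem (mem_Icc.2 (by lia)), Nat.card_Icc]
      lia
  · obtain ⟨a, ha⟩ : ∃ a, n + 1 = d + 2 * a := by
      obtain ⟨a, ha⟩ := hsum
      exact ⟨a + 1 - d, by lia⟩
    refine ⟨Icc a (n - a), by simp; lia, fun x hx => ?_, ?_⟩
    · simp only [mem_Icc] at hx ⊢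
      lia
    · rw [Nat.card_Icc]
      lia

theorem exists_isRegularOfDegree {n d : ℕ} (hdn : d < n) (heven : Even (n * d)) :
    ∃ G : SimpleGraph (Fin n), G.IsRegularOfDegree d := by
  have : NeZero n := ⟨by lia⟩
  obtain ⟨S, hzero, hS, hcard⟩ := exists_finset_nat_card_eq hdn heven
  have hlt : ∀ x ∈ S, x < n := fun x hx => (hS x hx).1
  have hzero' : (0 : Fin n) ∉ S.attachFin hlt := by simpa [mem_attachFin] using hzero
  have hneg : ∀ x ∈ S.attachFin hlt, -x ∈ S.attachFin hlt := by
    intro x hx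
    rw [mem_attachFin] at hx ⊢
    have hx₀ : 0 < x.val := Nat.pos_of_ne_zero fun h => hzero (h ▸ hx)
    rw [Fin.val_neg', Nat.mod_eq_of_lt (Nat.sub_lt (by lia) hx₀)]
    exact (hS _ hx).2
  refine ⟨SimpleGraph.circulantGraph (S.attachFin hlt), ?_⟩
  convert isRegularOfDegree_circulantGraph hzero' hneg
  rw [card_attachFin, hcard]

end Existence

section AllDegrees

variable {ε : ℝ}

lemma hasISTs_zero {n : ℕ} (G : SimpleGraph (Fin n)) (r : Fin n) : HasISTs G r 0 :=
  ⟨Fin.elim0, fun i => i.elim0, fun _ _ i => i.elim0⟩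

lemma hasISTs_of_dense {n d : ℕ} {G : SimpleGraph (Fin n)} {r : Fin n}
    (hG : G.IsRegularOfDegree d) (hε : 0 < ε) (hε₁ : ε < 1) (hdn : (1 - ε / 4) * n ≤ d) :
    HasISTs G r ⌊(1 - ε) * (d : ℝ)⌋₊ := by
  refine hasISTs_of_add_le_two_mul_degree hG ?_
  have hfloor : (⌊(1 - ε) * (d : ℝ)⌋₊ : ℝ) ≤ (1 - ε) * d :=
    Nat.floor_le (mul_nonneg (by linarith) d.cast_nonneg)
  have hn₀ : 0 ≤ ε * n := by positivity
  have hn : ε * n ≤ n := mul_le_of_le_one_left n.cast_nonneg hε₁.le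
  have hεd : ε * (3 / 4 * n) ≤ ε * d := by
    gcongr
    linarith
  have : (n : ℝ) + ⌊(1 - ε) * (d : ℝ)⌋₊ ≤ 2 * d := by linarith
  exact_mod_cast this

theorem eventually_regProb_not_hasISTs_le (hε : 0 < ε) :
    ∀ᶠ C : ℝ in atTop, ∀ n d : ℕ, 3 ≤ n → C * Real.log n ≤ d →
      regProb n d (fun G => ¬ ∀ r, HasISTs G r ⌊(1 - ε) * (d : ℝ)⌋₊) ≤ 9 / n := by
  rcases le_or_gt 1 ε with hε₁ | hε₁
  · refine Eventually.of_forall fun C n d _ _ => ?_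
    have hfloor : ⌊(1 - ε) * (d : ℝ)⌋₊ = 0 :=
      Nat.floor_of_nonpos (mul_nonpos_of_nonpos_of_nonneg (by linarith) d.cast_nonneg)
    rw [regProb_eq_zero fun G _ => not_not.2 fun r => hfloor ▸ hasISTs_zero G r]
    positivity
  obtain ⟨δ, hδ, hsparse⟩ := exists_eventually_regProb_not_hasISTs_le_of_sparse hε hε₁
  have hlinear := eventually_regProb_not_hasISTs_le_of_linear_degree hε hε₁ hδ
    (show 0 < ε / 4 by linarith)
  filter_upwards [hsparse, hlinear] with C hsparse hlinear n d hn hlog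
  rcases le_or_gt (d : ℝ) (δ * n) with hdδ | hdδ
  · exact hsparse n d hn hlog hdδ
  rcases le_or_gt (d : ℝ) ((1 - ε / 4) * n) with hdγ | hdγ
  · refine (hlinear n d hn hlog hdδ.le hdγ).trans ?_
    gcongr
    norm_num
  · rw [regProb_eq_zero fun G hG => not_not.2 fun r => hasISTs_of_dense hG hε hε₁ hdγ.le]
    positivity

end AllDegrees

end IndepTrees

/-- For `d(n) ≤ n-1` with `d(n)/log n → ∞` and every `ε > 0`, with high probability
(along those `n` with `n·d(n)` even) the random `d(n)`-regular graph has, for every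
vertex `r`, at least `⌊(1-ε) d(n)⌋` independent spanning trees rooted at `r`. -/
theorem stmt2 (d : ℕ → ℕ)
    (hd : ∀ᶠ n : ℕ in Filter.atTop, d n ≤ n - 1)
    (hgrow : Filter.Tendsto (fun n : ℕ => (d n : ℝ) / Real.log n) Filter.atTop Filter.atTop)
    (ε : ℝ) (hε : 0 < ε) :
    Filter.Tendsto
      (fun n : ℕ => regProb n (d n)
        (fun G => ∀ r : Fin n, HasISTs G r ⌊(1 - ε) * (d n : ℝ)⌋₊))
      (Filter.atTop ⊓ Filter.principal {n : ℕ | Even (n * d n)}) (nhds 1) := by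
  obtain ⟨C, hC⟩ := (IndepTrees.eventually_regProb_not_hasISTs_le hε).exists
  have hlower : Tendsto (fun n : ℕ => (1 : ℝ) - 9 / n) atTop (nhds 1) := by
    simpa only [sub_zero] using
      (tendsto_const_nhds (x := (1 : ℝ))).sub (tendsto_const_div_atTop_nhds_zero_nat 9)
  refine tendsto_of_tendsto_of_tendsto_of_le_of_le' (hlower.mono_left inf_le_left)
    tendsto_const_nhds ?_ (Eventually.of_forall fun _ => IndepTrees.regProb_le_one)
  rw [eventually_inf_principal]
  filter_upwards [hd, hgrow.eventually_ge_atTop C, eventually_ge_atTop 3] with n hdn hCd hn heven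
  have hlog : 0 < Real.log n := one_pos.trans_le (IndepTrees.one_le_log_natCast hn)
  have hbad := hC n (d n) hn ((le_div_iff₀ hlog).1 hCd)
  rw [IndepTrees.regProb_not (IndepTrees.exists_isRegularOfDegree (by lia) heven)] at hbad
  linarith
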